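/- Let p > 0 and let (u,v) be a classical solution of the system (S₄) on ℝ⁴ such that u ≥ 0 on ℝ⁴, the finite total mass condition ∬_{ℝ⁴×ℝ⁴} u²(x)u²(y)/|x−y|² dx dy < ∞ holds, v(x)/|x|² → 0 as |x| → ∞, and there exist K > 0, C > 0, R > 0 with u(x) ≤ C|x|^K for all |x| ≥ R. Set α := (1/(8π²)) ∫_{ℝ⁴} P₄(y) dy and assume α > 4/p. Then ∫_{ℝ⁴} |x|²·u²(y)/|x−y|² dy → ∫_{ℝ⁴} u²(y) dy as |x| → ∞. -/

import Mathlib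

/-!
The limit holds as soon as `u ^ 2 = O(‖x‖⁻⁵)` (`conclusion`), so everything rests on the decay
`u = O(‖x‖^(-5/2))`. This comes from a comparison principle for the half-Laplacian together with the
decay of `exp (p v)`, which is read off from an integral representation of `v`.

*Representation of `v`.* Since `u` has polynomial growth and finite mass, `P = Δ² v = P₄` is
nonnegative, integrable and of polynomial growth (`Density`). Testing `Δ² v = P` against the
fundamental solution `2 log ‖·‖` of `Δ²`, cut off at scale `R` around `x`, expresses `16 π² v x`
as a weighted average of `v` at scale `R` minus a cut-off logarithmic potential
(`representation_scaled`). Let `R → ∞`: up to a quantity independent of `x`, the averages differ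
from `16 π² v x + 2 ∫ P y (log ‖y - x‖ - log ‖y‖) dy` by `o(1)` (`avg_limit`), while their second
differences in `x` tend to `0` because `v = o(‖x‖²)` (`avg_second_diff`). Hence the function
`defect`, which is `16 π² (v x - v 0)` plus twice the logarithmic potential, is additive
(`defect_add`).
If it were nonzero, `exp (p v)` would be exponentially large on unit balls around the multiples of
some vector. But `(-Δ)^{1/2} u = exp (p v)` with `u ≥ 0` forces `exp (p v)`, somewhere on each unit
ball, to be bounded by a multiple of `1 + u` at the centre (`rhs_bound`), which grows only
polynomially. So `defect` vanishes (`v_eq`):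
`8 π² (v x - v 0) = - ∫ P y (log ‖y - x‖ - log ‖y‖) dy`.

*Decay of `exp (p v)`.* The logarithmic potential is eventually at least `γ log ‖x‖` plus any
constant, for every `γ` below the total mass of `P` (`Density.logpot_growth`). As `α > 4 / p`, this
gives `exp (p v x) ≤ ‖x‖^(-7/2)` for large `‖x‖`.

*Decay of `u`.* A local maximum estimate (`mean_value`), combined with the integrability of
`u ^ 2 / (1 + ‖y‖) ^ 2` that follows from finite mass, shows `u → 0` at infinity (`tendsto_zero`).
The function `‖x‖^(-5/2)` has half-Laplacian at least `c ‖x‖^(-7/2)` with `c > 0`: an inversion in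
the sphere through `x` turns the principal-value integral into an integral of a nonnegative
function (`barrier_super`). Comparing `u` with a multiple of it at a maximum point of the difference
gives `u = O(‖x‖^(-5/2))` (`barrier_compare`).

No regularity theory is needed: `u` is only ever tested at points where it is touched by
paraboloids or by the barrier, so the pointwise principal value suffices.
-/

open MeasureTheory Filter Topology
open scoped NNReal

noncomputable section

abbrev E4 := EuclideanSpace ℝ (Fin 4)

/-- The normalizing constant `C₄ = (∫_{ℝ⁴} (1 − cos(2πζ₁))/|ζ|⁵ dζ)⁻¹`. -/
def C4 : ℝ := (∫ ζ : E4, (1 - Real.cos (2 * Real.pi * ζ 0)) / ‖ζ‖ ^ 5)⁻¹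

/-- The assertion `(−Δ)^{1/2} w (x) = h`, i.e. the principal-value limit exists and equals `h`. -/
def HalfLapEq4 (w : E4 → ℝ) (x : E4) (h : ℝ) : Prop :=
  Tendsto (fun ε : ℝ =>
      C4 * ∫ y in {y : E4 | ε ≤ ‖y - x‖}, (w x - w y) / ‖x - y‖ ^ 5)
    (𝓝[>] (0 : ℝ)) (𝓝 h)

/-- The Euclidean Laplacian `Δw(x) = ∑ᵢ ∂²w/∂xᵢ²`. -/
def lap4 (w : E4 → ℝ) (x : E4) : ℝ :=
  ∑ i : Fin 4,
    fderiv ℝ (fun z => fderiv ℝ w z (EuclideanSpace.single i 1)) x (EuclideanSpace.single i 1)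

/-- Local Hölder continuity of a map `g`. -/
def LocHolder4 {F : Type*} [NormedAddCommGroup F] (g : E4 → F) : Prop :=
  ∀ x : E4, ∃ (C a : ℝ≥0) (r : ℝ), 0 < r ∧ 0 < (a : ℝ) ∧ (a : ℝ) ≤ 1 ∧
    HolderOnWith C a g (Metric.ball x r)

/-- `P₄(y) = (∫ u²(z)/|y−z|² dz) · u²(y)`. -/
def P4 (u : E4 → ℝ) (y : E4) : ℝ := (∫ z : E4, u z ^ 2 / ‖y - z‖ ^ 2) * u y ^ 2

/-- `(u,v)` is a classical solution of the system (S₄) on ℝ⁴. -/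
structure IsSolution4 (p : ℝ) (u v : E4 → ℝ) : Prop where
  u_C1 : ContDiff ℝ 1 u
  u_grad_holder : LocHolder4 (fderiv ℝ u)
  u_int : Integrable (fun x : E4 => |u x| / (1 + ‖x‖ ^ 5))
  v_C4 : ContDiff ℝ 4 v
  eq_u : ∀ x : E4, HalfLapEq4 u x (Real.exp (p * v x))
  eq_v : ∀ x : E4, lap4 (fun z => lap4 v z) x = P4 u x

/-- The finite total mass condition `∬ u²(x)u²(y)/|x−y|² dx dy < ∞`. -/
def FiniteMass4 (u : E4 → ℝ) : Prop :=
  Integrable (fun q : E4 × E4 => u q.1 ^ 2 * u q.2 ^ 2 / ‖q.1 - q.2‖ ^ 2)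

/-! ### Integrals of radial functions on `ℝ⁴` -/

lemma finrank_E4 : Module.finrank ℝ E4 = 4 := by simp

lemma volume_unit_ball : (volume : Measure E4).real (Metric.ball 0 1) = Real.pi ^ 2 / 2 := by
  rw [Measure.real, EuclideanSpace.volume_ball]
  have h : Real.Gamma (((Fintype.card (Fin 4) : ℕ) : ℝ) / 2 + 1) = 2 := by
    have : ((Fintype.card (Fin 4) : ℕ) : ℝ) / 2 + 1 = ((2 : ℕ) : ℝ) + 1 := by norm_num
    rw [this, Real.Gamma_nat_eq_factorial]; norm_num [Nat.factorial]
  rw [h]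
  have h2 : Real.sqrt Real.pi ^ Fintype.card (Fin 4) = Real.pi ^ 2 := by
    have := Real.sq_sqrt Real.pi_pos.le
    simp only [Fintype.card_fin]
    calc Real.sqrt Real.pi ^ 4 = (Real.sqrt Real.pi ^ 2) ^ 2 := by ring
      _ = _ := by rw [this]
  rw [h2]
  simp [ENNReal.toReal_ofReal (show 0 ≤ Real.pi ^ 2 / 2 by positivity)]

lemma measurableSet_shell (a : E4) {s : Set ℝ} (hs : MeasurableSet s) :
    MeasurableSet {y : E4 | ‖y - a‖ ∈ s} := by
  have : Measurable (fun y : E4 => ‖y - a‖) := by fun_prop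
  exact this hs

/-- Integration of a radial function over a spherically symmetric region in polar coordinates. -/
lemma polar_integral (a : E4) {s : Set ℝ} (hs : MeasurableSet s) (g : ℝ → ℝ) :
    ∫ y in {y : E4 | ‖y - a‖ ∈ s}, g ‖y - a‖
      = 2 * Real.pi ^ 2 * ∫ r in s ∩ Set.Ioi 0, r ^ 3 * g r := by
  rw [← integral_indicator (measurableSet_shell a hs)]
  have h1 : ∀ y : E4, ({y : E4 | ‖y - a‖ ∈ s}).indicator (fun y => g ‖y - a‖) y
      = (fun z : E4 => s.indicator g ‖z‖) (y - a) := by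
    intro y
    by_cases hy : ‖y - a‖ ∈ s
    · simp [Set.indicator, hy]
    · simp [Set.indicator, hy]
  simp_rw [h1]
  rw [integral_sub_right_eq_self (fun z : E4 => s.indicator g ‖z‖) a,
    integral_fun_norm_addHaar, finrank_E4, volume_unit_ball]
  have h2 : ∫ y in Set.Ioi (0 : ℝ), y ^ (4 - 1) • s.indicator g y
      = ∫ r in s ∩ Set.Ioi 0, r ^ 3 * g r := by
    rw [Set.inter_comm, ← setIntegral_indicator hs]
    refine integral_congr_ae (.of_forall fun r => ?_)
    by_cases hr : r ∈ s <;> simp [hr]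
  rw [h2, nsmul_eq_mul, smul_eq_mul]
  push_cast
  ring

lemma polar_integrableOn (a : E4) {s : Set ℝ} (hs : MeasurableSet s) (g : ℝ → ℝ) :
    IntegrableOn (fun y => g ‖y - a‖) {y : E4 | ‖y - a‖ ∈ s}
      ↔ IntegrableOn (fun r => r ^ 3 * g r) (s ∩ Set.Ioi 0) := by
  rw [← integrable_indicator_iff (measurableSet_shell a hs)]
  have h1 : ({y : E4 | ‖y - a‖ ∈ s}).indicator (fun y => g ‖y - a‖)
      = (fun y => (fun z : E4 => s.indicator g ‖z‖) (y - a)) := by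
    ext y
    by_cases hy : ‖y - a‖ ∈ s
    · simp [Set.indicator, hy]
    · simp [Set.indicator, hy]
  have h3 : Integrable (fun y => (fun z : E4 => s.indicator g ‖z‖) (y - a))
      ↔ Integrable (fun z : E4 => s.indicator g ‖z‖) := by
    refine ⟨fun h => ?_, fun h => h.comp_sub_right a⟩
    simpa using h.comp_add_right a
  rw [h1, h3, integrable_fun_norm_addHaar volume (f := s.indicator g), finrank_E4, Set.inter_comm]
  rw [← integrable_indicator_iff measurableSet_Ioi,
    ← integrable_indicator_iff (measurableSet_Ioi.inter hs), ← Set.indicator_indicator,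
    integrable_indicator_iff measurableSet_Ioi, integrable_indicator_iff measurableSet_Ioi]
  refine integrableOn_congr_fun ?_ measurableSet_Ioi
  intro r _
  by_cases hr : r ∈ s <;> simp [hr]

lemma Iio_inter_Ioi_zero (δ : ℝ) : Set.Iio δ ∩ Set.Ioi 0 = Set.Ioo 0 δ := by
  ext; simp [and_comm]

lemma Ici_inter_Ioi_zero {δ : ℝ} (hδ : 0 < δ) : Set.Ici δ ∩ Set.Ioi 0 = Set.Ici δ := by
  ext r; simp only [Set.mem_inter_iff, Set.mem_Ici, Set.mem_Ioi]
  exact ⟨fun h => h.1, fun h => ⟨h, hδ.trans_le h⟩⟩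

lemma near3_integrableOn (a : E4) (δ : ℝ) :
    IntegrableOn (fun y : E4 => (‖y - a‖ ^ 3)⁻¹) {y : E4 | ‖y - a‖ < δ} := by
  have := (polar_integrableOn a (measurableSet_Iio (a := δ)) (fun r => (r ^ 3)⁻¹)).2 ?_
  · exact this
  · rw [Iio_inter_Ioi_zero]
    refine (integrableOn_congr_fun (f := fun _ : ℝ => (1 : ℝ)) ?_ measurableSet_Ioo).1 (by simp)
    intro r hr
    have := hr.1
    simp only
    field_simp

lemma near3_integral (a : E4) {δ : ℝ} (hδ : 0 < δ) :
    ∫ y in {y : E4 | ‖y - a‖ < δ}, (‖y - a‖ ^ 3)⁻¹ = 2 * Real.pi ^ 2 * δ := by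
  have := polar_integral a (measurableSet_Iio (a := δ)) (fun r => (r ^ 3)⁻¹)
  simp only [Set.mem_Iio] at this
  rw [this, Iio_inter_Ioi_zero]
  congr 1
  rw [setIntegral_congr_fun (g := fun _ : ℝ => (1 : ℝ)) measurableSet_Ioo]
  · simp [hδ.le]
  · intro r hr
    have := hr.1
    simp only
    field_simp

lemma near2_integrableOn (a : E4) (δ : ℝ) :
    IntegrableOn (fun y : E4 => (‖y - a‖ ^ 2)⁻¹) {y : E4 | ‖y - a‖ < δ} := by
  have := (polar_integrableOn a (measurableSet_Iio (a := δ)) (fun r => (r ^ 2)⁻¹)).2 ?_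
  · exact this
  · rw [Iio_inter_Ioi_zero]
    refine (integrableOn_congr_fun (f := fun r : ℝ => r) ?_ measurableSet_Ioo).1
      ((continuous_id.integrableOn_Icc (a := 0) (b := δ)).mono_set Set.Ioo_subset_Icc_self)
    intro r hr
    have := hr.1
    simp only
    field_simp

lemma near2_integral (a : E4) {δ : ℝ} (hδ : 0 < δ) :
    ∫ y in {y : E4 | ‖y - a‖ < δ}, (‖y - a‖ ^ 2)⁻¹ = Real.pi ^ 2 * δ ^ 2 := by
  have := polar_integral a (measurableSet_Iio (a := δ)) (fun r => (r ^ 2)⁻¹)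
  simp only [Set.mem_Iio] at this
  rw [this, Iio_inter_Ioi_zero]
  rw [setIntegral_congr_fun (g := fun r : ℝ => r) measurableSet_Ioo]
  · rw [← integral_Ioc_eq_integral_Ioo, ← intervalIntegral.integral_of_le hδ.le, integral_id]
    ring
  · intro r hr
    have := hr.1
    simp only
    field_simp

lemma far5_aux {δ : ℝ} : ∀ r ∈ Set.Ioi δ, 0 < δ → r ^ (-2 : ℝ) = r ^ 3 * (r ^ 5)⁻¹ := by
  intro r hr hδ
  have h0 : 0 < r := hδ.trans hr
  rw [Real.rpow_neg h0.le]
  norm_cast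
  field_simp

lemma far5_integrableOn (a : E4) {δ : ℝ} (hδ : 0 < δ) :
    IntegrableOn (fun y : E4 => (‖y - a‖ ^ 5)⁻¹) {y : E4 | δ ≤ ‖y - a‖} := by
  have := (polar_integrableOn a (measurableSet_Ici (a := δ)) (fun r => (r ^ 5)⁻¹)).2 ?_
  · exact this
  · rw [Ici_inter_Ioi_zero hδ, integrableOn_Ici_iff_integrableOn_Ioi]
    refine (integrableOn_congr_fun (fun r hr => far5_aux r hr hδ) measurableSet_Ioi).1 ?_
    exact integrableOn_Ioi_rpow_of_lt (by norm_num) hδ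

lemma far5_integral (a : E4) {δ : ℝ} (hδ : 0 < δ) :
    ∫ y in {y : E4 | δ ≤ ‖y - a‖}, (‖y - a‖ ^ 5)⁻¹ = 2 * Real.pi ^ 2 / δ := by
  have := polar_integral a (measurableSet_Ici (a := δ)) (fun r => (r ^ 5)⁻¹)
  simp only [Set.mem_Ici] at this
  rw [this, Ici_inter_Ioi_zero hδ, integral_Ici_eq_integral_Ioi,
    ← setIntegral_congr_fun measurableSet_Ioi (fun r hr => far5_aux r hr hδ),
    integral_Ioi_rpow_of_lt (by norm_num) hδ]
  rw [show (-2 : ℝ) + 1 = -1 by norm_num, Real.rpow_neg_one]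
  field_simp

/-- The standard bubble `(1 + |z|²)⁻⁴` has total mass `π²/6` on `ℝ⁴`. -/
lemma bubble_integral : ∫ z : E4, ((1 + ‖z‖ ^ 2) ^ 4)⁻¹ = Real.pi ^ 2 / 6 := by
  have h := integral_fun_norm_addHaar (volume : Measure E4) (fun r => ((1 + r ^ 2) ^ 4)⁻¹)
  rw [h, finrank_E4, volume_unit_ball]
  have key : ∫ r in Set.Ioi (0 : ℝ), r ^ (4 - 1) • ((1 + r ^ 2) ^ 4)⁻¹ = 1 / 12 := by
    -- a primitive of `r³ / (1 + r²)⁴`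
    let F : ℝ → ℝ := fun r => -(1 / 4) * ((1 + r ^ 2) ^ 2)⁻¹ + (1 / 6) * ((1 + r ^ 2) ^ 3)⁻¹
    have hd : ∀ r : ℝ, HasDerivAt F (r ^ (4 - 1) • ((1 + r ^ 2) ^ 4)⁻¹) r := by
      intro r
      have hp : (0 : ℝ) < 1 + r ^ 2 := by positivity
      have h1 : HasDerivAt (fun r : ℝ => 1 + r ^ 2) (2 * r) r := by
        simpa using ((hasDerivAt_id r).pow 2).const_add 1
      have h2 := ((h1.pow 2).inv (pow_pos hp 2).ne').const_mul (-(1 / 4 : ℝ))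
      have h3 := ((h1.pow 3).inv (pow_pos hp 3).ne').const_mul (1 / 6 : ℝ)
      refine (h2.add h3).congr_deriv ?_
      simp only [Pi.pow_apply, smul_eq_mul]
      field_simp
      ring
    have htop : Tendsto (fun r : ℝ => 1 + r ^ 2) atTop atTop :=
      tendsto_atTop_add_const_left _ _ (tendsto_pow_atTop (by norm_num))
    have hlim : Tendsto F atTop (𝓝 0) := by
      have a2 := ((tendsto_pow_atTop (α := ℝ) (n := 2) (by norm_num)).comp htop).inv_tendsto_atTop
      have a3 := ((tendsto_pow_atTop (α := ℝ) (n := 3) (by norm_num)).comp htop).inv_tendsto_atTop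
      simpa [F] using (a2.const_mul (-(1 / 4 : ℝ))).add (a3.const_mul (1 / 6 : ℝ))
    rw [integral_Ioi_of_hasDerivAt_of_nonneg' (fun r _ => hd r) ?_ hlim]
    · norm_num [F]
    · intro r hr
      have : (0 : ℝ) < r := hr
      simp only [smul_eq_mul]
      positivity
  rw [key, nsmul_eq_mul, smul_eq_mul]
  push_cast
  ring

lemma integrable_decay {k : ℕ} (hk : 4 < k) : Integrable (fun y : E4 => ((1 + ‖y‖) ^ k)⁻¹) := by
  have h := integrable_one_add_norm (E := E4) (μ := volume) (r := (k : ℝ))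
    (by rw [finrank_E4]; exact_mod_cast hk)
  refine h.congr (.of_forall fun y => ?_)
  simp only
  rw [Real.rpow_neg (by positivity), Real.rpow_natCast]

/-! ### Touching by paraboloids in the half-Laplacian -/

lemma measurableSet_far (x : E4) (δ : ℝ) : MeasurableSet {y : E4 | δ ≤ ‖y - x‖} :=
  measurableSet_shell x measurableSet_Ici

lemma measurableSet_near (x : E4) (δ : ℝ) : MeasurableSet {y : E4 | ‖y - x‖ < δ} :=
  measurableSet_shell x measurableSet_Iio

lemma tail_integrableOn {w : E4 → ℝ} (hw : Continuous w)
    (hint : Integrable (fun x : E4 => |w x| / (1 + ‖x‖ ^ 5))) (x : E4) {δ : ℝ} (hδ : 0 < δ) :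
    IntegrableOn (fun y => w y / ‖x - y‖ ^ 5) {y : E4 | δ ≤ ‖y - x‖} := by
  have hg := (hint.const_mul ((1 / δ) ^ 5 + (‖x‖ / δ + 1) ^ 5)).integrableOn
    (s := {y : E4 | δ ≤ ‖y - x‖})
  refine Integrable.mono' hg ?_ ?_
  · have : Measurable (fun y => w y / ‖x - y‖ ^ 5) := by
      have := hw.measurable
      fun_prop
    exact this.aestronglyMeasurable
  · filter_upwards [ae_restrict_mem (measurableSet_far x δ)] with y hy
    have hy : δ ≤ ‖y - x‖ := hy
    rw [norm_sub_rev x y, norm_div, norm_pow, norm_norm, Real.norm_eq_abs]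
    set d := ‖y - x‖ with hd
    have hd0 : 0 < d := hδ.trans_le hy
    have h1 : ‖y‖ ≤ (‖x‖ / δ + 1) * d := by
      have : ‖y‖ ≤ ‖x‖ + d := by
        have := norm_add_le x (y - x)
        simpa using this
      have h2 : ‖x‖ ≤ ‖x‖ / δ * d := by
        rw [div_mul_eq_mul_div, le_div_iff₀ hδ]
        exact mul_le_mul_of_nonneg_left hy (norm_nonneg x)
      linarith
    have h2 : 1 ≤ 1 / δ * d := by
      rw [div_mul_eq_mul_div, le_div_iff₀ hδ]; linarith
    have h3 : 1 + ‖y‖ ^ 5 ≤ ((1 / δ) ^ 5 + (‖x‖ / δ + 1) ^ 5) * d ^ 5 := by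
      have a1 : (1 : ℝ) ≤ (1 / δ * d) ^ 5 := one_le_pow₀ h2
      have a2 : ‖y‖ ^ 5 ≤ ((‖x‖ / δ + 1) * d) ^ 5 := by gcongr
      rw [mul_pow] at a1 a2
      linarith
    rw [mul_div_assoc', div_le_div_iff₀ (by positivity) (by positivity)]
    calc |w y| * (1 + ‖y‖ ^ 5) ≤ |w y| * (((1 / δ) ^ 5 + (‖x‖ / δ + 1) ^ 5) * d ^ 5) := by gcongr
      _ = _ := by ring

lemma const_far_integrableOn (x : E4) {δ : ℝ} (hδ : 0 < δ) (c : ℝ) :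
    IntegrableOn (fun y => c / ‖x - y‖ ^ 5) {y : E4 | δ ≤ ‖y - x‖} := by
  refine ((far5_integrableOn x hδ).const_mul c).congr (.of_forall fun y => ?_)
  simp only [norm_sub_rev x y, div_eq_mul_inv]

lemma halfLap_integrableOn {w : E4 → ℝ} (hw : Continuous w)
    (hint : Integrable (fun x : E4 => |w x| / (1 + ‖x‖ ^ 5))) (x : E4) {δ : ℝ} (hδ : 0 < δ) :
    IntegrableOn (fun y => (w x - w y) / ‖x - y‖ ^ 5) {y : E4 | δ ≤ ‖y - x‖} := by
  refine ((const_far_integrableOn x hδ (w x)).sub (tail_integrableOn hw hint x hδ)).congr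
    (.of_forall fun y => ?_)
  simp only [Pi.sub_apply, sub_div]

/-- By oddness, the linear part of a touching paraboloid does not contribute to the principal
value. -/
lemma linear_annulus (x : E4) (ε δ : ℝ) (l : E4 →L[ℝ] ℝ) :
    ∫ y in {y : E4 | ε ≤ ‖y - x‖ ∧ ‖y - x‖ < δ}, l (y - x) / ‖x - y‖ ^ 5 = 0 := by
  have hm : MeasurableSet {y : E4 | ε ≤ ‖y - x‖ ∧ ‖y - x‖ < δ} :=
    (measurableSet_far x ε).inter (measurableSet_near x δ)
  rw [← integral_indicator hm]
  let g : E4 → ℝ := fun z => if ε ≤ ‖z‖ ∧ ‖z‖ < δ then l z / ‖z‖ ^ 5 else 0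
  have h1 : ∀ y, ({y : E4 | ε ≤ ‖y - x‖ ∧ ‖y - x‖ < δ}).indicator
      (fun y => l (y - x) / ‖x - y‖ ^ 5) y = g (y - x) := by
    intro y
    by_cases hy : ε ≤ ‖y - x‖ ∧ ‖y - x‖ < δ
    · simp [g, Set.indicator, hy, norm_sub_rev x y]
    · simp [g, Set.indicator, hy]
  simp_rw [h1]
  rw [integral_sub_right_eq_self g x]
  have h2 : ∫ z, g z = -∫ z, g z := by
    rw [← integral_neg, ← integral_neg_eq_self]
    refine integral_congr_ae (.of_forall fun z => ?_)
    by_cases hz : ε ≤ ‖z‖ ∧ ‖z‖ < δ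
    · simp [g, hz, neg_div]
    · simp [g, hz]
  linarith

/-- If `w` is touched from above at `x` by a paraboloid on a ball of radius `δ`, the
half-Laplacian at `x` is bounded below by the far part of the integral minus a curvature term.
This replaces any regularity argument: only the existence of the principal value is used. -/
lemma pv_lower {w : E4 → ℝ} (hw : Continuous w)
    (hint : Integrable (fun x : E4 => |w x| / (1 + ‖x‖ ^ 5))) {x : E4} {h : ℝ}
    (H : HalfLapEq4 w x h) (hC : 0 ≤ C4) {δ : ℝ} (hδ : 0 < δ) (l : E4 →L[ℝ] ℝ) {B : ℝ}
    (hB : 0 ≤ B) (hb : ∀ y, ‖y - x‖ < δ → w y ≤ w x + l (y - x) + B * ‖y - x‖ ^ 2) :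
    C4 * (w x * (2 * Real.pi ^ 2 / δ) - (∫ y in {y : E4 | δ ≤ ‖y - x‖}, w y / ‖x - y‖ ^ 5)
      - B * (2 * Real.pi ^ 2 * δ)) ≤ h := by
  refine ge_of_tendsto H ?_
  filter_upwards [Ioo_mem_nhdsGT hδ] with ε hε
  obtain ⟨hε0, hεδ⟩ := hε
  refine mul_le_mul_of_nonneg_left ?_ hC
  set A : Set E4 := {y : E4 | ε ≤ ‖y - x‖ ∧ ‖y - x‖ < δ} with hA
  have hAm : MeasurableSet A := (measurableSet_far x ε).inter (measurableSet_near x δ)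
  have hU : {y : E4 | ε ≤ ‖y - x‖} = A ∪ {y : E4 | δ ≤ ‖y - x‖} := by
    ext y
    have e1 : y ∈ {y : E4 | ε ≤ ‖y - x‖} ↔ ε ≤ ‖y - x‖ := Iff.rfl
    have e2 : y ∈ A ↔ ε ≤ ‖y - x‖ ∧ ‖y - x‖ < δ := Iff.rfl
    have e3 : y ∈ {y : E4 | δ ≤ ‖y - x‖} ↔ δ ≤ ‖y - x‖ := Iff.rfl
    rw [Set.mem_union, e1, e2, e3]
    constructor
    · intro hy
      rcases lt_or_ge ‖y - x‖ δ with h | h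
      · exact Or.inl ⟨hy, h⟩
      · exact Or.inr h
    · rintro (h | h)
      · exact h.1
      · linarith
  have hdisj : Disjoint A {y : E4 | δ ≤ ‖y - x‖} := by
    rw [Set.disjoint_left]
    intro y h1 h2
    exact absurd h1.2 (not_lt.2 h2)
  have hAsub : A ⊆ {y : E4 | ε ≤ ‖y - x‖} := fun y hy => hy.1
  have hI := halfLap_integrableOn hw hint x hε0
  rw [hU, setIntegral_union hdisj (measurableSet_far x δ) (hI.mono_set hAsub)
    (halfLap_integrableOn hw hint x hδ)]
  have hfar : ∫ y in {y : E4 | δ ≤ ‖y - x‖}, (w x - w y) / ‖x - y‖ ^ 5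
      = w x * (2 * Real.pi ^ 2 / δ) - ∫ y in {y : E4 | δ ≤ ‖y - x‖}, w y / ‖x - y‖ ^ 5 := by
    simp_rw [sub_div]
    rw [integral_sub (const_far_integrableOn x hδ (w x)) (tail_integrableOn hw hint x hδ)]
    congr 1
    rw [← far5_integral x hδ, ← integral_const_mul]
    refine integral_congr_ae (.of_forall fun y => ?_)
    simp only [norm_sub_rev x y, div_eq_mul_inv]
  rw [hfar]
  have hI3 : IntegrableOn (fun y : E4 => B * (‖y - x‖ ^ 3)⁻¹) {y : E4 | ‖y - x‖ < δ} :=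
    (near3_integrableOn x δ).const_mul B
  have hAnear : A ⊆ {y : E4 | ‖y - x‖ < δ} := fun y hy => hy.2
  have hIl : IntegrableOn (fun y => l (y - x) / ‖x - y‖ ^ 5) A := by
    refine Integrable.mono' ((const_far_integrableOn x hε0 (‖l‖ * δ)).mono_set hAsub) ?_ ?_
    · have : Measurable (fun y => l (y - x) / ‖x - y‖ ^ 5) := by fun_prop
      exact this.aestronglyMeasurable
    · filter_upwards [ae_restrict_mem hAm] with y hy
      rw [norm_div, norm_pow, norm_norm]
      gcongr
      exact (l.le_opNorm _).trans (by gcongr; exact hy.2.le)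
  have hnear : -(B * (2 * Real.pi ^ 2 * δ)) ≤ ∫ y in A, (w x - w y) / ‖x - y‖ ^ 5 := by
    have e1 : ∫ y in A, (-(l (y - x) / ‖x - y‖ ^ 5) - B * (‖y - x‖ ^ 3)⁻¹)
        ≤ ∫ y in A, (w x - w y) / ‖x - y‖ ^ 5 := by
      refine setIntegral_mono_on (hIl.neg.sub (hI3.mono_set hAnear)) (hI.mono_set hAsub) hAm ?_
      intro y hy
      have hd : 0 < ‖y - x‖ := hε0.trans_le hy.1
      have := hb y hy.2
      rw [norm_sub_rev x y]
      have e : -(l (y - x) / ‖y - x‖ ^ 5) - B * (‖y - x‖ ^ 3)⁻¹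
          = (-l (y - x) - B * ‖y - x‖ ^ 2) / ‖y - x‖ ^ 5 := by
        field_simp
      rw [e]
      exact div_le_div_of_nonneg_right (by linarith) (by positivity)
    have e2 : ∫ y in A, (-(l (y - x) / ‖x - y‖ ^ 5) - B * (‖y - x‖ ^ 3)⁻¹)
        = - ∫ y in A, B * (‖y - x‖ ^ 3)⁻¹ := by
      have e0 := integral_sub hIl.neg (hI3.mono_set hAnear)
      simp only [Pi.neg_apply] at e0
      rw [e0, integral_neg, linear_annulus]
      simp
    have e3 : ∫ y in A, B * (‖y - x‖ ^ 3)⁻¹ ≤ B * (2 * Real.pi ^ 2 * δ) := by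
      rw [← near3_integral x hδ, ← integral_const_mul]
      refine setIntegral_mono_set hI3 (.of_forall fun y => ?_) (LE.le.eventuallyLE hAnear)
      simp only [Pi.zero_apply]
      positivity
    linarith
  linarith

/-! ### Local estimates for the half-Laplacian -/

lemma halfLap_neg {w : E4 → ℝ} {x : E4} {h : ℝ} (H : HalfLapEq4 w x h) :
    HalfLapEq4 (fun y => -w y) x (-h) := by
  unfold HalfLapEq4 at *
  refine H.neg.congr fun ε => ?_
  rw [← mul_neg, ← integral_neg]
  congr 1
  refine integral_congr_ae (.of_forall fun y => ?_)
  simp only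
  rw [← neg_div]
  congr 1
  ring_nf

/-- A nonnegative function controls its half-Laplacian from below: on every unit ball the
half-Laplacian is somewhere at most a constant times the central value (plus one). The point is
the minimum of `u + t |· - x₀|²`, where `-u` is touched from above by a paraboloid. -/
lemma rhs_bound {u f : E4 → ℝ} (hu : Continuous u) (hu0 : ∀ x, 0 ≤ u x)
    (hint : Integrable (fun x : E4 => |u x| / (1 + ‖x‖ ^ 5)))
    (H : ∀ x, HalfLapEq4 u x (f x)) (hC : 0 ≤ C4) (x₀ : E4) {m : ℝ}
    (hm : ∀ y, ‖y - x₀‖ < 1 → m ≤ f y) :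
    m ≤ C4 * (8 * Real.pi ^ 2 * (u x₀ + 1)) := by
  set t : ℝ := 4 * (u x₀ + 1) with ht
  have ht0 : 0 < t := by have := hu0 x₀; positivity
  obtain ⟨y₀, hy₀, hmin⟩ := (isCompact_closedBall x₀ 1).exists_isMinOn
    ⟨x₀, Metric.mem_closedBall_self zero_le_one⟩
    (f := fun y => u y + t * ‖y - x₀‖ ^ 2) (by fun_prop)
  have hmin' : ∀ y, ‖y - x₀‖ ≤ 1 → u y₀ + t * ‖y₀ - x₀‖ ^ 2 ≤ u y + t * ‖y - x₀‖ ^ 2 :=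
    fun y hy => hmin (by rwa [Metric.mem_closedBall, dist_eq_norm])
  have h0 : u y₀ + t * ‖y₀ - x₀‖ ^ 2 ≤ u x₀ := by
    have := hmin' x₀ (by simp)
    simpa using this
  have hu1 : u y₀ ≤ u x₀ := by
    have : 0 ≤ t * ‖y₀ - x₀‖ ^ 2 := by positivity
    linarith
  have hhalf : ‖y₀ - x₀‖ < 1 / 2 := by
    by_contra hcon
    push Not at hcon
    have h1 : (1 / 2 : ℝ) ^ 2 ≤ ‖y₀ - x₀‖ ^ 2 := by gcongr
    have h2 := hu0 y₀
    nlinarith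
  have hpv := pv_lower (w := fun y => -u y) (x := y₀) hu.neg (by simpa using hint)
    (halfLap_neg (H y₀)) hC (δ := 1 / 2) (by norm_num) ((2 * t) • innerSL ℝ (y₀ - x₀)) ht0.le ?_
  · have hI : 0 ≤ ∫ y in {y : E4 | 1 / 2 ≤ ‖y - y₀‖}, u y / ‖y₀ - y‖ ^ 5 :=
      integral_nonneg fun y => div_nonneg (hu0 y) (by positivity)
    have e : ∫ y in {y : E4 | 1 / 2 ≤ ‖y - y₀‖}, -u y / ‖y₀ - y‖ ^ 5
        = -∫ y in {y : E4 | 1 / 2 ≤ ‖y - y₀‖}, u y / ‖y₀ - y‖ ^ 5 := by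
      simp_rw [neg_div]
      rw [integral_neg]
    rw [e] at hpv
    have hf := hm y₀ (by linarith)
    have h3 : C4 * (4 * Real.pi ^ 2 * u y₀) ≤ C4 * (4 * Real.pi ^ 2 * u x₀) := by gcongr
    have h4 : 0 ≤ C4 * ∫ y in {y : E4 | 1 / 2 ≤ ‖y - y₀‖}, u y / ‖y₀ - y‖ ^ 5 :=
      mul_nonneg hC hI
    have h5 : 0 ≤ C4 * Real.pi ^ 2 := by positivity
    rw [ht] at hpv
    nlinarith [mul_nonneg h5 (hu0 x₀)]
  · intro y hy
    have h1 : ‖y - x₀‖ ≤ 1 := by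
      have := norm_add_le (y - y₀) (y₀ - x₀)
      rw [sub_add_sub_cancel] at this
      linarith
    have h2 := hmin' y h1
    have h3 : ‖y - x₀‖ ^ 2
        = ‖y₀ - x₀‖ ^ 2 + 2 * inner ℝ (y₀ - x₀) (y - y₀) + ‖y - y₀‖ ^ 2 := by
      rw [← norm_add_sq_real]
      congr 2
      abel
    simp only [smul_apply, innerSL_apply_apply, smul_eq_mul]
    rw [h3] at h2
    linarith

lemma one_le_quartic {a : ℝ} (ha : |a| ≤ 1 / 2) :
    1 ≤ (1 - a) ^ 4 * (1 + 4 * a + 52 * a ^ 2) := by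
  obtain ⟨h1, h2⟩ := abs_le.1 ha
  set b := a + 2 * a ^ 2 with hb
  have k1 : 1 ≤ (1 - a) * (1 + b) := by nlinarith [sq_nonneg a]
  have hb1 : b ≤ 1 := by nlinarith
  have hb2 : -1 / 2 ≤ b := by nlinarith
  have k2 : (1 + b) ^ 4 ≤ 1 + 4 * b + 11 * b ^ 2 := by
    have : b ^ 2 * (4 * b + b ^ 2) ≤ b ^ 2 * 5 :=
      mul_le_mul_of_nonneg_left (by nlinarith) (sq_nonneg b)
    nlinarith
  have k3 : b ^ 2 ≤ 4 * a ^ 2 := by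
    have e : b ^ 2 = a ^ 2 * (1 + 2 * a) ^ 2 := by rw [hb]; ring
    have : (1 + 2 * a) ^ 2 ≤ 4 := by nlinarith
    rw [e]
    nlinarith [mul_le_mul_of_nonneg_left this (sq_nonneg a)]
  have k4 : (1 + b) ^ 4 ≤ 1 + 4 * a + 52 * a ^ 2 := by rw [hb] at *; linarith
  calc (1 : ℝ) ≤ ((1 - a) * (1 + b)) ^ 4 := one_le_pow₀ k1
    _ = (1 - a) ^ 4 * (1 + b) ^ 4 := by ring
    _ ≤ _ := mul_le_mul_of_nonneg_left k4 (by positivity)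

set_option maxHeartbeats 1600000 in
/-- Local boundedness: the value of a nonnegative function at `x₀` is controlled by a weighted
average and by the supremum of its half-Laplacian on the ball of radius `‖x₀‖ / 2`. The proof
looks at the maximum point of `u · (r² - |· - x₀|²)⁴` and touches `u` there from above by
a multiple of the inverse of the weight. -/
lemma mean_value {u f : E4 → ℝ} (hu : Continuous u) (hu0 : ∀ x, 0 ≤ u x)
    (hint : Integrable (fun x : E4 => |u x| / (1 + ‖x‖ ^ 5)))
    (H : ∀ x, HalfLapEq4 u x (f x)) (hC : 0 ≤ C4) {x₀ : E4} {r F : ℝ} (hr : 0 < r)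
    (hx₀ : ‖x₀‖ = 2 * r) (hF0 : 0 ≤ F) (hF : ∀ y, ‖y - x₀‖ < r → f y ≤ F)
    (hJ : Integrable (fun y : E4 => u y / (r + ‖y‖) ^ 5)) :
    C4 * u x₀ ≤ 2 ^ 35 * (r * (F + C4 * ∫ y : E4, u y / (r + ‖y‖) ^ 5)) := by
  set J := ∫ y : E4, u y / (r + ‖y‖) ^ 5 with hJd
  have hJ0 : 0 ≤ J := integral_nonneg fun y => div_nonneg (hu0 y) (by positivity)
  rcases (hu0 x₀).eq_or_lt with h0 | hpos
  · rw [← h0, mul_zero]; positivity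
  obtain ⟨y₀, hy₀, hmax⟩ := (isCompact_closedBall x₀ r).exists_isMaxOn
    ⟨x₀, Metric.mem_closedBall_self hr.le⟩
    (f := fun y => u y * (r ^ 2 - ‖y - x₀‖ ^ 2) ^ 4) (by fun_prop)
  have hmax' : ∀ y, ‖y - x₀‖ ≤ r →
      u y * (r ^ 2 - ‖y - x₀‖ ^ 2) ^ 4 ≤ u y₀ * (r ^ 2 - ‖y₀ - x₀‖ ^ 2) ^ 4 :=
    fun y hy => hmax (by rwa [Metric.mem_closedBall, dist_eq_norm])
  rw [Metric.mem_closedBall, dist_eq_norm] at hy₀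
  set p := r ^ 2 - ‖y₀ - x₀‖ ^ 2 with hp
  have hp0 : 0 ≤ p := by
    have : ‖y₀ - x₀‖ ^ 2 ≤ r ^ 2 := by gcongr
    linarith
  have hc : u x₀ * r ^ 8 ≤ u y₀ * p ^ 4 := by
    have := hmax' x₀ (by simpa using hr.le)
    simp only [sub_self, norm_zero] at this
    calc u x₀ * r ^ 8 = u x₀ * (r ^ 2 - 0 ^ 2) ^ 4 := by ring
      _ ≤ _ := this
  have hprod : 0 < u y₀ * p ^ 4 := lt_of_lt_of_le (by positivity) hc
  have hp1 : 0 < p := by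
    rcases hp0.eq_or_lt with h | h
    · rw [← h] at hprod; simp at hprod
    · exact h
  have hU : 0 < u y₀ := pos_of_mul_pos_left hprod (by positivity)
  have hpr : p ≤ r ^ 2 := by have := sq_nonneg ‖y₀ - x₀‖; linarith
  have hyr : ‖y₀ - x₀‖ < r := by
    by_contra hcon
    push Not at hcon
    have : r ^ 2 ≤ ‖y₀ - x₀‖ ^ 2 := by gcongr
    linarith
  set U := u y₀ with hUd
  -- a small multiple of the distance from `y₀` to the sphere, so that on the `δ`-ball around `y₀`
  -- the weight changes by a bounded factor and the curvature term below absorbs less than one half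
  set δ := p / (32 * r) with hδ
  have hδ0 : 0 < δ := by positivity
  have hδr : δ ≤ r / 32 := by
    rw [hδ, div_le_div_iff₀ (by positivity) (by norm_num)]; nlinarith
  have hpδ : p = 32 * r * δ := by rw [hδ]; field_simp
  have hpv := pv_lower hu hint (H y₀) hC hδ0 ((8 * U / p) • innerSL ℝ (y₀ - x₀))
    (B := U * (472 * r ^ 2 / p ^ 2)) (by positivity) ?_
  · have hT : ∫ y in {y : E4 | δ ≤ ‖y - y₀‖}, u y / ‖y₀ - y‖ ^ 5 ≤ (8 * r / δ) ^ 5 * J := by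
      rw [hJd, ← integral_const_mul]
      refine (setIntegral_mono_on (tail_integrableOn hu hint y₀ hδ0)
        (hJ.const_mul _).integrableOn (measurableSet_far y₀ δ) ?_).trans
        (setIntegral_le_integral (hJ.const_mul _) (.of_forall fun y => ?_))
      · intro y hy
        have hy : δ ≤ ‖y - y₀‖ := hy
        rw [norm_sub_rev y₀ y]
        set d := ‖y - y₀‖ with hd
        have hd0 : 0 < d := hδ0.trans_le hy
        have hk : ‖y‖ ≤ d + 3 * r := by
          have h1 : y = (y - y₀) + ((y₀ - x₀) + x₀) := by abel
          have h2 := norm_add_le (y - y₀) ((y₀ - x₀) + x₀)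
          have h3 := norm_add_le (y₀ - x₀) x₀
          rw [← h1] at h2
          linarith
        have hk2 : r + ‖y‖ ≤ 8 * r / δ * d := by
          have a1 : r ≤ r / δ * d := by
            rw [div_mul_eq_mul_div, le_div_iff₀ hδ0]; gcongr
          have a2 : d ≤ r / δ * d := by
            have : 1 ≤ r / δ := by rw [le_div_iff₀ hδ0]; linarith
            nlinarith
          have a3 : 8 * r / δ * d = 8 * (r / δ * d) := by ring
          rw [a3]
          linarith
        have hk3 : (r + ‖y‖) ^ 5 ≤ (8 * r / δ) ^ 5 * d ^ 5 := by
          rw [← mul_pow]; gcongr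
        rw [mul_div_assoc', div_le_div_iff₀ (by positivity) (by positivity)]
        calc u y * (r + ‖y‖) ^ 5 ≤ u y * ((8 * r / δ) ^ 5 * d ^ 5) :=
              mul_le_mul_of_nonneg_left hk3 (hu0 y)
          _ = _ := by ring
      · have := hu0 y
        simp only [Pi.zero_apply]
        positivity
    have hFy := hF y₀ hyr
    set T := ∫ y in {y : E4 | δ ≤ ‖y - y₀‖}, u y / ‖y₀ - y‖ ^ 5 with hTd
    have hB : U * (472 * r ^ 2 / p ^ 2) * (2 * Real.pi ^ 2 * δ)
        = U * (2 * Real.pi ^ 2 / δ) * (472 / 1024) := by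
      rw [hpδ]
      field_simp
      norm_num
    rw [hB] at hpv
    have hpi : 1 ≤ Real.pi ^ 2 := by nlinarith [Real.pi_gt_three]
    have k1 : C4 * (U / δ) ≤ F + C4 * ((8 * r / δ) ^ 5 * J) := by
      have a1 : U / δ ≤ U * (2 * Real.pi ^ 2 / δ) - U * (2 * Real.pi ^ 2 / δ) * (472 / 1024) := by
        have : U * (2 * Real.pi ^ 2 / δ) = U / δ * (2 * Real.pi ^ 2) := by ring
        rw [this]
        have hUδ : 0 < U / δ := by positivity
        nlinarith
      have a2 := mul_le_mul_of_nonneg_left a1 hC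
      have a3 := mul_le_mul_of_nonneg_left hT hC
      linarith
    have k2 : C4 * (U * p ^ 4) ≤ 2 ^ 35 * (r * (F + C4 * J)) * r ^ 8 := by
      have a1 : C4 * (U * p ^ 4) = C4 * (U / δ) * (32 ^ 4 * r ^ 4 * δ ^ 5) := by
        rw [hpδ]
        field_simp
      have a2 : (F + C4 * ((8 * r / δ) ^ 5 * J)) * (32 ^ 4 * r ^ 4 * δ ^ 5)
          = 32 ^ 4 * r ^ 4 * δ ^ 5 * F + 2 ^ 35 * r ^ 9 * (C4 * J) := by
        field_simp
        ring
      have a3 : δ ^ 5 ≤ r ^ 5 := by gcongr; linarith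
      rw [a1]
      calc C4 * (U / δ) * (32 ^ 4 * r ^ 4 * δ ^ 5)
          ≤ (F + C4 * ((8 * r / δ) ^ 5 * J)) * (32 ^ 4 * r ^ 4 * δ ^ 5) := by gcongr
        _ = 32 ^ 4 * r ^ 4 * δ ^ 5 * F + 2 ^ 35 * r ^ 9 * (C4 * J) := a2
        _ ≤ 2 ^ 35 * r ^ 4 * r ^ 5 * F + 2 ^ 35 * r ^ 9 * (C4 * J) := by
            gcongr
            norm_num
        _ = _ := by ring
    have k3 : C4 * u x₀ * r ^ 8 ≤ 2 ^ 35 * (r * (F + C4 * J)) * r ^ 8 := by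
      calc C4 * u x₀ * r ^ 8 = C4 * (u x₀ * r ^ 8) := by ring
        _ ≤ C4 * (U * p ^ 4) := by gcongr
        _ ≤ _ := k2
    exact le_of_mul_le_mul_right k3 (by positivity)
  · intro y hy
    set z := y - y₀ with hz
    set q : ℝ := inner ℝ (y₀ - x₀) z with hq
    set a := (2 * q + ‖z‖ ^ 2) / p with ha
    have h3 : r ^ 2 - ‖y - x₀‖ ^ 2 = p * (1 - a) := by
      have : ‖y - x₀‖ ^ 2 = ‖y₀ - x₀‖ ^ 2 + 2 * q + ‖z‖ ^ 2 := by
        rw [hq, ← norm_add_sq_real]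
        congr 2
        rw [hz]
        abel
      rw [this, ha, mul_sub, mul_div_cancel₀ _ hp1.ne', hp]
      ring
    have hqb : |q| ≤ r * ‖z‖ :=
      (abs_real_inner_le_norm _ _).trans (by gcongr)
    have hzr : ‖z‖ ≤ r := by linarith
    have hab : |a| ≤ 3 * r * ‖z‖ / p := by
      rw [ha, abs_div, abs_of_pos hp1]
      gcongr
      calc |2 * q + ‖z‖ ^ 2| ≤ |2 * q| + |‖z‖ ^ 2| := abs_add_le _ _
        _ = 2 * |q| + ‖z‖ ^ 2 := by rw [abs_mul, abs_of_nonneg (sq_nonneg ‖z‖)]; norm_num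
        _ ≤ 3 * r * ‖z‖ := by nlinarith [norm_nonneg z]
    have ha2 : |a| ≤ 1 / 2 := by
      refine hab.trans ?_
      rw [div_le_iff₀ hp1, hpδ]
      nlinarith [norm_nonneg z]
    have h1a : 0 < 1 - a := by linarith [(abs_le.1 ha2).2]
    have hball : ‖y - x₀‖ ≤ r := by
      by_contra hcon
      push Not at hcon
      have : r ^ 2 < ‖y - x₀‖ ^ 2 := by gcongr
      have h9 := mul_pos hp1 h1a
      rw [← h3] at h9
      linarith only [h9, this]
    have h4 := hmax' y hball
    rw [h3, mul_pow, ← mul_assoc, mul_comm (u y), mul_assoc, mul_comm U,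
      mul_le_mul_iff_right₀ (by positivity)] at h4
    -- `(1 - a)⁻⁴ ≤ 1 + 4 a + 52 a²`: a paraboloid above the inverse of the weight
    have h5 := one_le_quartic ha2
    have h6 : u y ≤ U * (1 + 4 * a + 52 * a ^ 2) := by
      have hq0 : 0 < (1 - a) ^ 4 := by positivity
      have b2 : u y * (1 - a) ^ 4 ≤ U * (1 + 4 * a + 52 * a ^ 2) * (1 - a) ^ 4 := by
        calc u y * (1 - a) ^ 4 ≤ U * 1 := by linarith
          _ ≤ U * ((1 - a) ^ 4 * (1 + 4 * a + 52 * a ^ 2)) := by gcongr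
          _ = _ := by ring
      exact le_of_mul_le_mul_right b2 hq0
    have h7 : a ^ 2 ≤ 9 * r ^ 2 / p ^ 2 * ‖z‖ ^ 2 := by
      calc a ^ 2 = |a| ^ 2 := (sq_abs a).symm
        _ ≤ (3 * r * ‖z‖ / p) ^ 2 := by gcongr
        _ = _ := by ring
    have h8 : 4 * a ≤ 8 * q / p + 4 * r ^ 2 / p ^ 2 * ‖z‖ ^ 2 := by
      have : 4 * a = 8 * q / p + 4 * (1 / p) * ‖z‖ ^ 2 := by rw [ha]; ring
      have h9 : 1 / p ≤ r ^ 2 / p ^ 2 := by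
        rw [div_le_div_iff₀ hp1 (by positivity)]; nlinarith
      have h10 := mul_le_mul_of_nonneg_right h9 (sq_nonneg ‖z‖)
      rw [this]
      have e : 4 * r ^ 2 / p ^ 2 * ‖z‖ ^ 2 = 4 * (r ^ 2 / p ^ 2 * ‖z‖ ^ 2) := by ring
      rw [e]
      linarith
    simp only [smul_apply, innerSL_apply_apply, smul_eq_mul]
    calc u y ≤ U * (1 + 4 * a + 52 * a ^ 2) := h6
      _ ≤ U * (1 + (8 * q / p + 4 * r ^ 2 / p ^ 2 * ‖z‖ ^ 2)
          + 52 * (9 * r ^ 2 / p ^ 2 * ‖z‖ ^ 2)) := by gcongr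
      _ = _ := by ring

/-! ### The barrier `‖y‖^(-5/2)` -/

/-- The barrier `‖y‖^(-5/2)`; at the origin it takes the junk value `0`. Here `5 / 2` lies between
`0` and `3`, the decay of the fundamental solution of the half-Laplacian on `ℝ⁴`, and makes
the square of the barrier integrable at infinity. -/
def barrier (y : E4) : ℝ := (√‖y‖ ^ 5)⁻¹

lemma barrier_nonneg (y : E4) : 0 ≤ barrier y := by unfold barrier; positivity

lemma measurable_barrier : Measurable barrier := by unfold barrier; fun_prop

lemma barrier_anti {x y : E4} (hx : 0 < ‖x‖) (h : ‖x‖ ≤ ‖y‖) : barrier y ≤ barrier x := by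
  unfold barrier
  have : 0 < √‖x‖ := Real.sqrt_pos.2 hx
  gcongr

lemma barrier_le_near (y : E4) (hy : ‖y‖ < 1) : barrier y ≤ (‖y‖ ^ 3)⁻¹ := by
  rcases (norm_nonneg y).eq_or_lt with h | h
  · simp [barrier, ← h]
  · have h1 : 0 < √‖y‖ := Real.sqrt_pos.2 h
    have h2 : √‖y‖ ≤ 1 := Real.sqrt_le_one.2 hy.le
    have h3 : ‖y‖ ^ 3 = √‖y‖ ^ 6 := by
      conv_lhs => rw [← Real.sq_sqrt h.le]
      ring
    rw [h3, barrier]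
    exact inv_anti₀ (by positivity) (pow_le_pow_of_le_one h1.le h2 (by norm_num))

lemma barrier_le_one (y : E4) (hy : 1 ≤ ‖y‖) : barrier y ≤ 1 := by
  unfold barrier
  exact inv_le_one_of_one_le₀ (one_le_pow₀ (Real.one_le_sqrt.2 hy))

lemma barrier_integrableOn (x : E4) {ε : ℝ} (hε : 0 < ε) :
    IntegrableOn (fun y => (barrier x - barrier y) / ‖x - y‖ ^ 5) {y : E4 | ε ≤ ‖y - x‖} := by
  have h3 : Integrable (fun y : E4 => {y : E4 | ‖y - 0‖ < 1}.indicator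
      (fun y => (‖y - 0‖ ^ 3)⁻¹) y) :=
    (near3_integrableOn 0 1).integrable_indicator (measurableSet_near 0 1)
  have hg := ((const_far_integrableOn x hε (barrier x + 1)).add
    (h3.const_mul (ε ^ 5)⁻¹).integrableOn)
  refine Integrable.mono' hg ?_ ?_
  · have := measurable_barrier
    exact Measurable.aestronglyMeasurable (by fun_prop)
  · refine (ae_restrict_iff' (measurableSet_far x ε)).2 (.of_forall fun y hy => ?_)
    have hy : ε ≤ ‖y - x‖ := hy
    rw [norm_sub_rev] at hy
    have hd : 0 < ‖x - y‖ := hε.trans_le hy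
    have hx := barrier_nonneg x
    have hyb := barrier_nonneg y
    rw [Real.norm_eq_abs, abs_div, abs_of_pos (by positivity : 0 < ‖x - y‖ ^ 5)]
    have h1 : |barrier x - barrier y| ≤ barrier x + barrier y := by
      rw [abs_le]; constructor <;> linarith
    simp only [Pi.add_apply]
    by_cases h : ‖y‖ < 1
    · have hm : y ∈ {y : E4 | ‖y - 0‖ < 1} := by
        show ‖y - 0‖ < 1
        simpa using h
      rw [Set.indicator_of_mem hm, sub_zero]
      have h2 := barrier_le_near y h
      calc |barrier x - barrier y| / ‖x - y‖ ^ 5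
          ≤ (barrier x + barrier y) / ‖x - y‖ ^ 5 := by gcongr
        _ = barrier x / ‖x - y‖ ^ 5 + (‖x - y‖ ^ 5)⁻¹ * barrier y := by ring
        _ ≤ (barrier x + 1) / ‖x - y‖ ^ 5 + (ε ^ 5)⁻¹ * (‖y‖ ^ 3)⁻¹ := by
            gcongr
            linarith
    · have hm : y ∉ {y : E4 | ‖y - 0‖ < 1} := by
        show ¬ ‖y - 0‖ < 1
        simpa using h
      rw [Set.indicator_of_notMem hm, mul_zero, add_zero]
      have h2 := barrier_le_one y (not_lt.1 h)
      gcongr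
      linarith

/-- The inversion in the sphere of radius `ρ` centred at the origin. -/
abbrev sphInv (ρ : ℝ) : E4 → E4 := EuclideanGeometry.inversion (0 : E4) ρ

lemma norm_sphInv (ρ : ℝ) (z : E4) : ‖sphInv ρ z‖ = ρ ^ 2 / ‖z‖ := by
  have := EuclideanGeometry.dist_inversion_center (0 : E4) z ρ
  simpa using this

lemma norm_sub_sphInv {ρ : ℝ} {x z : E4} (hx : ‖x‖ = ρ) (hρ : 0 < ρ) (hz : 0 < ‖z‖) :
    ‖x - sphInv ρ z‖ = ρ / ‖z‖ * ‖x - z‖ := by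
  have h1 : sphInv ρ x = x := EuclideanGeometry.inversion_of_mem_sphere (by simpa using hx)
  have h2 := EuclideanGeometry.dist_inversion_inversion (c := (0 : E4)) (x := x) (y := z)
    (norm_pos_iff.1 (hx ▸ hρ)) (norm_pos_iff.1 hz) ρ
  have h3 : EuclideanGeometry.inversion (0 : E4) ρ x = x := h1
  rw [h3] at h2
  simp only [dist_eq_norm, sub_zero, hx] at h2
  rw [h2]
  field_simp

lemma abs_det_sphInv (ρ : ℝ) (z : E4) :
    |(((ρ / dist z 0) ^ 2 • ((ℝ ∙ (z - 0))ᗮ.reflection : E4 →L[ℝ] E4)) : E4 →L[ℝ] E4).det|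
      = (ρ / ‖z‖) ^ 8 := by
  rw [ContinuousLinearMap.det, ContinuousLinearMap.toLinearMap_smul, LinearMap.det_smul,
    finrank_E4, dist_zero_right]
  have h := Submodule.det_reflection (𝕜 := ℝ) (ℝ ∙ (z - 0))ᗮ
  have h2 : LinearMap.det (((ℝ ∙ (z - 0))ᗮ.reflection : E4 →L[ℝ] E4) : E4 →ₗ[ℝ] E4)
      = LinearMap.det (ℝ ∙ (z - 0))ᗮ.reflection.toLinearMap := rfl
  rw [h2, h, abs_mul, abs_pow (-1 : ℝ)]
  simp only [abs_neg, abs_one, one_pow, mul_one]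
  rw [← pow_mul, abs_of_nonneg (Even.pow_nonneg (by decide) _)]

/-- The algebra behind the inversion argument, with `σ² = ‖x‖`, `τ² = ‖z‖`, `d = ‖x - z‖`: the
integrands at `z` and at its image combine, with Jacobian `(‖x‖ / ‖z‖)⁸`, to a product of two
factors of the same sign. -/
lemma kelvin_algebra {σ τ d : ℝ} (hσ : 0 < σ) (hτ : 0 < τ) (hd : 0 < d) :
    ((σ ^ 5)⁻¹ - (τ ^ 5)⁻¹) / d ^ 5
      + (σ ^ 2 / τ ^ 2) ^ 8 * (((σ ^ 5)⁻¹ - ((σ ^ 2 / τ) ^ 5)⁻¹) / (σ ^ 2 / τ ^ 2 * d) ^ 5)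
    = ((τ ^ 5)⁻¹ - (σ ^ 5)⁻¹) * (σ / τ - 1) / d ^ 5 := by
  field_simp
  ring

lemma kelvin_lower {σ τ d : ℝ} (hσ : 0 < σ) (hτ : 0 < τ) (hd : 0 < d) (h : τ ^ 2 ≤ σ ^ 2 / 2)
    (hd2 : d ≤ 2 * σ ^ 2) :
    (96 * σ ^ 15)⁻¹ ≤ ((τ ^ 5)⁻¹ - (σ ^ 5)⁻¹) * (σ / τ - 1) / d ^ 5 := by
  have h1 : τ ≤ 3 / 4 * σ := by nlinarith
  have h2 : 1 / 3 ≤ σ / τ - 1 := by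
    rw [le_sub_iff_add_le, le_div_iff₀ hτ]; linarith
  have h3 : (σ ^ 5)⁻¹ ≤ (τ ^ 5)⁻¹ - (σ ^ 5)⁻¹ := by
    have h4 : τ ^ 5 ≤ σ ^ 5 / 2 := by
      calc τ ^ 5 ≤ (3 / 4 * σ) ^ 5 := by gcongr
        _ ≤ σ ^ 5 / 2 := by rw [mul_pow]; nlinarith [pow_pos hσ 5]
    have h5 : (σ ^ 5 / 2)⁻¹ ≤ (τ ^ 5)⁻¹ := by gcongr
    have h6 : (σ ^ 5 / 2)⁻¹ = 2 * (σ ^ 5)⁻¹ := by field_simp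
    linarith
  calc (96 * σ ^ 15)⁻¹ = (σ ^ 5)⁻¹ * (1 / 3) / (2 * σ ^ 2) ^ 5 := by field_simp; norm_num
    _ ≤ _ := by
        refine div_le_div₀ ?_ (mul_le_mul h3 h2 (by norm_num) (le_trans (by positivity) h3))
          (by positivity) (by gcongr)
        exact mul_nonneg (le_trans (by positivity) h3) (le_trans (by norm_num) h2)

set_option maxHeartbeats 800000 in
/-- The barrier is a strict supersolution, uniformly in the truncation radius of the principal
value. The part of the integral outside the sphere through `x` is transported inside by the
inversion in that sphere, and the two contributions combine to a nonnegative integrand. -/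
lemma barrier_super : ∃ c : ℝ, 0 < c ∧ ∀ x : E4, 0 < ‖x‖ → ∀ ε : ℝ, 0 < ε → ε ≤ ‖x‖ / 2 →
    c * (√‖x‖ ^ 7)⁻¹
      ≤ ∫ y in {y : E4 | ε ≤ ‖y - x‖}, (barrier x - barrier y) / ‖x - y‖ ^ 5 := by
  refine ⟨Real.pi ^ 2 / 3072, by positivity, fun x hx ε hε hεx => ?_⟩
  set ρ := ‖x‖ with hρ
  set σ := √ρ with hσd
  have hσ : 0 < σ := Real.sqrt_pos.2 hx
  have hσ2 : σ ^ 2 = ρ := Real.sq_sqrt hx.le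
  set F : E4 → ℝ := fun y => (barrier x - barrier y) / ‖x - y‖ ^ 5 with hF
  have hFi : IntegrableOn F {y : E4 | ε ≤ ‖y - x‖} := barrier_integrableOn x hε
  set S := {y : E4 | ε ≤ ‖y - x‖} with hS
  set Ein : Set E4 := {z | 0 < ‖z‖ ∧ ‖z‖ < ρ ∧ ε ≤ ‖z - x‖} with hE
  have hEm : MeasurableSet Ein := by
    have h1 : MeasurableSet {z : E4 | 0 < ‖z‖} := measurableSet_lt measurable_const measurable_norm
    have h2 : MeasurableSet {z : E4 | ‖z‖ < ρ} := measurableSet_lt measurable_norm measurable_const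
    exact h1.inter (h2.inter (measurableSet_far x ε))
  have hES : Ein ⊆ S := fun z hz => hz.2.2
  have hder : ∀ z ∈ Ein, HasFDerivWithinAt (sphInv ρ)
      ((ρ / dist z 0) ^ 2 • ((ℝ ∙ (z - 0))ᗮ.reflection : E4 →L[ℝ] E4)) Ein z := fun z hz =>
    (EuclideanGeometry.hasFDerivAt_inversion (norm_pos_iff.1 hz.1)).hasFDerivWithinAt
  have hinj : Set.InjOn (sphInv ρ) Ein :=
    (EuclideanGeometry.inversion_injective (0 : E4) hx.ne').injOn
  have himS : sphInv ρ '' Ein ⊆ S \ Ein := by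
    rintro _ ⟨z, ⟨hz0, hz1, hz2⟩, rfl⟩
    refine ⟨?_, fun h => ?_⟩
    · show ε ≤ ‖sphInv ρ z - x‖
      rw [norm_sub_rev, norm_sub_sphInv hρ.symm hx hz0]
      rw [norm_sub_rev] at hz2
      have : 1 ≤ ρ / ‖z‖ := by rw [le_div_iff₀ hz0]; linarith
      nlinarith
    · have h1 : ‖sphInv ρ z‖ < ρ := h.2.1
      rw [norm_sphInv, div_lt_iff₀ hz0] at h1
      nlinarith
  have hFpos : ∀ y ∈ S \ Ein, 0 ≤ F y := by
    intro y hy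
    refine div_nonneg ?_ (by positivity)
    -- `S \ Ein` may contain the origin, where `barrier` is `0`
    rcases (norm_nonneg y).eq_or_lt with h | h
    · have : barrier y = 0 := by simp [barrier, ← h]
      rw [this, sub_zero]
      exact barrier_nonneg x
    · have h1 : ρ ≤ ‖y‖ := by
        by_contra hcon
        exact hy.2 ⟨h, not_le.1 hcon, hy.1⟩
      exact sub_nonneg.2 (barrier_anti hx h1)
  have hSm : MeasurableSet S := measurableSet_far x ε
  have hFi1 : IntegrableOn F Ein := hFi.mono_set hES
  have hFi2 : IntegrableOn F (S \ Ein) := hFi.mono_set Set.sdiff_subset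
  have hFi3 : IntegrableOn F (sphInv ρ '' Ein) := hFi2.mono_set himS
  have hsplit : ∫ y in S, F y = (∫ y in Ein, F y) + ∫ y in S \ Ein, F y := by
    rw [← setIntegral_union Set.disjoint_sdiff_right (hSm.diff hEm) hFi1 hFi2,
      Set.union_sdiff_cancel hES]
  have hmono : ∫ y in sphInv ρ '' Ein, F y ≤ ∫ y in S \ Ein, F y := by
    refine setIntegral_mono_set hFi2 ?_ himS.eventuallyLE
    exact (ae_restrict_iff' (hSm.diff hEm)).2 (.of_forall hFpos)
  have hJi := (integrableOn_image_iff_integrableOn_abs_det_fderiv_smul volume hEm hder hinj F).1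
    hFi3
  rw [integral_image_eq_integral_abs_det_fderiv_smul volume hEm hder hinj F] at hmono
  simp only [abs_det_sphInv, smul_eq_mul] at hmono hJi
  have hsum : ∀ z ∈ Ein, F z + (ρ / ‖z‖) ^ 8 * F (sphInv ρ z)
      = ((√‖z‖ ^ 5)⁻¹ - (σ ^ 5)⁻¹) * (σ / √‖z‖ - 1) / ‖x - z‖ ^ 5 := by
    intro z hz
    have hτ : 0 < √‖z‖ := Real.sqrt_pos.2 hz.1
    have hτ2 : √‖z‖ ^ 2 = ‖z‖ := Real.sq_sqrt hz.1.le
    have hd : 0 < ‖x - z‖ := by rw [norm_sub_rev]; exact hε.trans_le hz.2.2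
    have hb : barrier (sphInv ρ z) = ((σ ^ 2 / √‖z‖) ^ 5)⁻¹ := by
      rw [barrier, norm_sphInv, Real.sqrt_div' _ (norm_nonneg z), Real.sqrt_sq hx.le, hσ2]
    rw [← kelvin_algebra hσ hτ hd]
    simp only [hF]
    rw [hb, norm_sub_sphInv hρ.symm hx hz.1, hσ2, hτ2]
    rfl
  have hGi : IntegrableOn (fun z => ((√‖z‖ ^ 5)⁻¹ - (σ ^ 5)⁻¹) * (σ / √‖z‖ - 1) / ‖x - z‖ ^ 5)
      Ein := (integrableOn_congr_fun hsum hEm).1 (hFi1.add hJi)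
  have htot : ∫ z in Ein, ((√‖z‖ ^ 5)⁻¹ - (σ ^ 5)⁻¹) * (σ / √‖z‖ - 1) / ‖x - z‖ ^ 5
      ≤ ∫ y in S, F y := by
    rw [← setIntegral_congr_fun hEm hsum, integral_add hFi1 hJi, hsplit]
    gcongr
  refine le_trans ?_ htot
  set Bs : Set E4 := Metric.ball 0 (ρ / 2) \ {0} with hBs
  have hBm : MeasurableSet Bs := measurableSet_ball.diff (measurableSet_singleton 0)
  have hBz : ∀ z ∈ Bs, 0 < ‖z‖ ∧ ‖z‖ < ρ / 2 := by
    intro z hz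
    exact ⟨norm_pos_iff.2 hz.2, by simpa using hz.1⟩
  have hBE : Bs ⊆ Ein := by
    intro z hz
    obtain ⟨h1, h2⟩ := hBz z hz
    refine ⟨h1, by linarith, ?_⟩
    have := norm_sub_norm_le x z
    rw [norm_sub_rev] at this
    linarith
  have hGpos : ∀ z ∈ Ein,
      0 ≤ ((√‖z‖ ^ 5)⁻¹ - (σ ^ 5)⁻¹) * (σ / √‖z‖ - 1) / ‖x - z‖ ^ 5 := by
    intro z hz
    have hτ : 0 < √‖z‖ := Real.sqrt_pos.2 hz.1
    have hτσ : √‖z‖ ≤ σ := Real.sqrt_le_sqrt hz.2.1.le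
    have h1 : (σ ^ 5)⁻¹ ≤ (√‖z‖ ^ 5)⁻¹ := by gcongr
    have h2 : 1 ≤ σ / √‖z‖ := by rwa [le_div_iff₀ hτ, one_mul]
    exact div_nonneg (mul_nonneg (sub_nonneg.2 h1) (sub_nonneg.2 h2)) (by positivity)
  have hvol : volume.real Bs = Real.pi ^ 2 * σ ^ 8 / 32 := by
    have h1 : volume.real Bs = volume.real (Metric.ball (0 : E4) (ρ / 2)) :=
      by
      rw [Measure.real, Measure.real, measure_sdiff_null (measure_singleton 0)]
    rw [h1, Measure.real, Measure.addHaar_ball volume 0 (by positivity), ENNReal.toReal_mul,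
      ENNReal.toReal_ofReal (by positivity), ← Measure.real, volume_unit_ball, finrank_E4, ← hσ2]
    ring
  calc Real.pi ^ 2 / 3072 * (σ ^ 7)⁻¹ = ∫ _z in Bs, (96 * σ ^ 15)⁻¹ := by
        rw [setIntegral_const, hvol, smul_eq_mul]
        field_simp
        norm_num
    _ ≤ ∫ z in Bs, ((√‖z‖ ^ 5)⁻¹ - (σ ^ 5)⁻¹) * (σ / √‖z‖ - 1) / ‖x - z‖ ^ 5 := by
        refine setIntegral_mono_on (integrableOn_const ?_) (hGi.mono_set hBE) hBm ?_
        · exact ((measure_mono Set.sdiff_subset).trans_lt measure_ball_lt_top).ne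
        · intro z hz
          obtain ⟨h1, h2⟩ := hBz z hz
          refine kelvin_lower hσ (Real.sqrt_pos.2 h1) ?_ ?_ ?_
          · rw [norm_sub_rev]; exact hε.trans_le (hBE hz).2.2
          · rw [Real.sq_sqrt h1.le, hσ2]; exact h2.le
          · have := norm_sub_le x z
            rw [hσ2]
            linarith
    _ ≤ _ := by
        refine setIntegral_mono_set hGi ?_ hBE.eventuallyLE
        exact (ae_restrict_iff' hEm).2 (.of_forall hGpos)

/-! ### Comparison with the barrier and the resulting limit -/

lemma eventually_cocompact_iff {q : E4 → Prop} :
    (∀ᶠ x in cocompact E4, q x) ↔ ∃ R : ℝ, 0 < R ∧ ∀ x : E4, R ≤ ‖x‖ → q x := by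
  rw [← Metric.cobounded_eq_cocompact, ← comap_norm_atTop, eventually_comap, eventually_atTop]
  constructor
  · rintro ⟨R, hR⟩
    exact ⟨max R 1, by positivity, fun x hx => hR ‖x‖ (le_trans (le_max_left _ _) hx) x rfl⟩
  · rintro ⟨R, -, hR⟩
    exact ⟨R, fun r hr x hx => hR x (hx ▸ hr)⟩

/-- Comparison with the barrier: a function vanishing at infinity whose half-Laplacian
is at most `‖x‖^(-7/2)` far away decays at least like `‖x‖^(-5/2)`. Otherwise `u - A * barrier`
has a positive global maximum outside the ball of radius `R₀`, where the half-Laplacian of `u`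
would be at least that of `A * barrier`. -/
lemma barrier_compare {u f : E4 → ℝ} (hu : Continuous u)
    (hint : Integrable (fun x : E4 => |u x| / (1 + ‖x‖ ^ 5)))
    (H : ∀ x, HalfLapEq4 u x (f x)) (hC : 0 < C4) (hlim : Tendsto u (cocompact E4) (𝓝 0))
    {R₀ : ℝ} (hR₀ : 0 < R₀) (hf : ∀ x, R₀ ≤ ‖x‖ → f x ≤ (√‖x‖ ^ 7)⁻¹) :
    ∃ A : ℝ, 0 < A ∧ ∀ x, 0 < ‖x‖ → u x ≤ A * barrier x := by
  obtain ⟨c, hc, hcb⟩ := barrier_super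
  obtain ⟨M, hM⟩ := (isCompact_closedBall (0 : E4) R₀).exists_bound_of_continuousOn hu.continuousOn
  have hσ0 : 0 < √R₀ := Real.sqrt_pos.2 hR₀
  set A := max (2 / (C4 * c)) (M * √R₀ ^ 5) with hA
  have hA1 : 2 / (C4 * c) ≤ A := le_max_left _ _
  have hA2 : M * √R₀ ^ 5 ≤ A := le_max_right _ _
  have hA0 : 0 < A := lt_of_lt_of_le (by positivity) hA1
  have hin : ∀ x, 0 < ‖x‖ → ‖x‖ ≤ R₀ → u x ≤ A * barrier x := by
    intro x h1 h2
    have h3 := (le_abs_self _).trans (hM x (by simpa using h2))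
    have h4 : 0 < √‖x‖ := Real.sqrt_pos.2 h1
    have h5 : (√R₀ ^ 5)⁻¹ ≤ barrier x := by
      unfold barrier
      gcongr
    calc u x ≤ M := h3
      _ = M * √R₀ ^ 5 * (√R₀ ^ 5)⁻¹ := by field_simp
      _ ≤ A * (√R₀ ^ 5)⁻¹ := by gcongr
      _ ≤ _ := by gcongr
  refine ⟨A, hA0, ?_⟩
  by_contra hcon
  push Not at hcon
  obtain ⟨x₁, hx₁, hlt⟩ := hcon
  have hx₁R : R₀ < ‖x₁‖ := by
    by_contra h
    exact absurd (hin x₁ hx₁ (not_lt.1 h)) (not_le.2 hlt)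
  set g : E4 → ℝ := fun x => u x - A * barrier x with hg
  have hg1 : 0 < g x₁ := sub_pos.2 hlt
  obtain ⟨R₁, hR₁, hsmall⟩ := eventually_cocompact_iff.1 (hlim.eventually (gt_mem_nhds hg1))
  have hcont : ContinuousOn g {x | R₀ ≤ ‖x‖} := by
    refine hu.continuousOn.sub (continuousOn_const.mul ?_)
    unfold barrier
    refine ContinuousOn.inv₀ (by fun_prop) fun x hx => ?_
    have : 0 < √‖x‖ := Real.sqrt_pos.2 (hR₀.trans_le hx)
    positivity
  have hcpt : IsCompact (Metric.closedBall (0 : E4) (max R₁ ‖x₁‖) ∩ {x | R₀ ≤ ‖x‖}) :=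
    (isCompact_closedBall _ _).inter_right (isClosed_le continuous_const continuous_norm)
  obtain ⟨z, ⟨hz1, hz2⟩, hzmax⟩ := hcpt.exists_isMaxOn ⟨x₁, by simp, hx₁R.le⟩
    (hcont.mono Set.inter_subset_right)
  have hz2 : R₀ ≤ ‖z‖ := hz2
  have hz0 : 0 < ‖z‖ := hR₀.trans_le hz2
  have hgz : g x₁ ≤ g z := hzmax ⟨by simp, hx₁R.le⟩
  have hglob : ∀ y, 0 < ‖y‖ → g y ≤ g z := by
    intro y hy
    by_cases h1 : R₀ ≤ ‖y‖
    · by_cases h2 : ‖y‖ ≤ max R₁ ‖x₁‖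
      · exact hzmax ⟨by simpa using h2, h1⟩
      · have h3 := hsmall y ((le_max_left _ _).trans (not_le.1 h2).le)
        have h4 := mul_nonneg hA0.le (barrier_nonneg y)
        simp only [hg] at hgz ⊢ h3
        linarith
    · have := hin y hy (not_le.1 h1).le
      have h4 : g y ≤ 0 := sub_nonpos.2 this
      linarith
  have hkey : C4 * (A * (c * (√‖z‖ ^ 7)⁻¹)) ≤ f z := by
    refine ge_of_tendsto (H z) ?_
    filter_upwards [Ioc_mem_nhdsGT (half_pos hz0)] with ε hε
    refine mul_le_mul_of_nonneg_left ?_ hC.le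
    refine (mul_le_mul_of_nonneg_left (hcb z hz0 ε hε.1 hε.2) hA0.le).trans ?_
    rw [← integral_const_mul]
    refine setIntegral_mono_ae ((barrier_integrableOn z hε.1).const_mul A)
      (halfLap_integrableOn hu hint z hε.1) ?_
    have hne : ∀ᵐ y : E4, y ≠ 0 := by
      rw [ae_iff]
      simp
    filter_upwards [hne] with y hy
    have h1 := hglob y (norm_pos_iff.2 hy)
    rw [mul_div_assoc']
    refine div_le_div_of_nonneg_right ?_ (by positivity)
    simp only [hg] at h1
    linarith
  have h1 := hkey.trans (hf z hz2)
  have h2 : 0 < (√‖z‖ ^ 7)⁻¹ := by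
    have : 0 < √‖z‖ := Real.sqrt_pos.2 hz0
    positivity
  have h3 : 2 ≤ C4 * (A * c) := by
    rw [div_le_iff₀ (by positivity)] at hA1
    linarith
  nlinarith

/-- If `u ^ 2` decays like `‖x‖^(-5)`, then `‖x‖²` times its Riesz potential converges to the
total mass. -/
lemma conclusion {u : E4 → ℝ} (hu : Continuous u) {A : ℝ} (hA : 0 < A)
    (hu0 : ∀ x, 0 ≤ u x) (hdec : ∀ x, 0 < ‖x‖ → u x ≤ A * barrier x) :
    Tendsto (fun x : E4 => ∫ y : E4, ‖x‖ ^ 2 * u y ^ 2 / ‖x - y‖ ^ 2)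
      (cocompact E4) (𝓝 (∫ y : E4, u y ^ 2)) := by
  have hsq : ∀ x, 0 < ‖x‖ → u x ^ 2 ≤ A ^ 2 * (‖x‖ ^ 5)⁻¹ := by
    intro x hx
    calc u x ^ 2 ≤ (A * barrier x) ^ 2 := by gcongr; exacts [hu0 x, hdec x hx]
      _ = A ^ 2 * ((√‖x‖ ^ 2) ^ 5)⁻¹ := by unfold barrier; ring
      _ = _ := by rw [Real.sq_sqrt hx.le]
  obtain ⟨M, hM⟩ := (isCompact_closedBall (0 : E4) 1).exists_bound_of_continuousOn hu.continuousOn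
  have hint : Integrable (fun y => u y ^ 2) := by
    refine Integrable.mono' ((integrable_decay (k := 5) (by norm_num)).const_mul
      (32 * (M ^ 2 + A ^ 2))) (hu.pow 2).aestronglyMeasurable (.of_forall fun y => ?_)
    rw [Real.norm_of_nonneg (sq_nonneg _), ← div_eq_mul_inv, le_div_iff₀ (by positivity)]
    rcases le_or_gt ‖y‖ 1 with h | h
    · have h1 : u y ^ 2 ≤ M ^ 2 := sq_le_sq' (by
        have := neg_abs_le (u y); have := hM y (by simpa using h); rw [Real.norm_eq_abs] at this
        linarith) ((le_abs_self _).trans (hM y (by simpa using h)))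
      have h2 : (1 + ‖y‖) ^ 5 ≤ (1 + 1) ^ 5 := by gcongr
      calc u y ^ 2 * (1 + ‖y‖) ^ 5 ≤ M ^ 2 * (1 + 1) ^ 5 := by gcongr
        _ ≤ _ := by nlinarith [sq_nonneg A]
    · have h0 : 0 < ‖y‖ := by linarith
      have h2 : (1 + ‖y‖) ^ 5 ≤ (2 * ‖y‖) ^ 5 := by gcongr; linarith
      calc u y ^ 2 * (1 + ‖y‖) ^ 5 ≤ A ^ 2 * (‖y‖ ^ 5)⁻¹ * (2 * ‖y‖) ^ 5 := by
            gcongr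
            exact hsq y h0
        _ = 32 * A ^ 2 := by field_simp; norm_num
        _ ≤ _ := by nlinarith [sq_nonneg M]
  set far : E4 → Set E4 := fun x => {y | ‖x‖ / 2 ≤ ‖y - x‖} with hfar
  set near : E4 → Set E4 := fun x => {y | ‖y - x‖ < ‖x‖ / 2} with hnear
  have hcompl : ∀ x, (far x)ᶜ = near x := fun x => by
    ext y
    exact not_le (a := ‖x‖ / 2) (b := ‖y - x‖)
  have hnearpt : ∀ x y, y ∈ near x → ‖x‖ ^ 2 * u y ^ 2 / ‖x - y‖ ^ 2
      ≤ 32 * A ^ 2 * (‖x‖ ^ 3)⁻¹ * (‖y - x‖ ^ 2)⁻¹ := by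
    intro x y hy
    have hy : ‖y - x‖ < ‖x‖ / 2 := hy
    have hx : 0 < ‖x‖ := by have := norm_nonneg (y - x); linarith
    have h1 : ‖x‖ / 2 ≤ ‖y‖ := by
      have := norm_sub_norm_le x y
      rw [norm_sub_rev] at this
      linarith
    have h2 : u y ^ 2 ≤ A ^ 2 * ((‖x‖ / 2) ^ 5)⁻¹ := by
      refine (hsq y (by linarith)).trans ?_
      gcongr
    rw [norm_sub_rev x y, div_eq_mul_inv]
    refine mul_le_mul_of_nonneg_right ?_ (by positivity)
    calc ‖x‖ ^ 2 * u y ^ 2 ≤ ‖x‖ ^ 2 * (A ^ 2 * ((‖x‖ / 2) ^ 5)⁻¹) := by gcongr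
      _ = _ := by field_simp; norm_num
  have hmeas : ∀ x, AEStronglyMeasurable (fun y => ‖x‖ ^ 2 * u y ^ 2 / ‖x - y‖ ^ 2) volume := by
    intro x
    have := hu.measurable
    exact Measurable.aestronglyMeasurable (by fun_prop)
  have hnear_i : ∀ x, IntegrableOn (fun y => ‖x‖ ^ 2 * u y ^ 2 / ‖x - y‖ ^ 2) (near x) := by
    intro x
    refine Integrable.mono' ((near2_integrableOn x (‖x‖ / 2)).const_mul
      (32 * A ^ 2 * (‖x‖ ^ 3)⁻¹)) (hmeas x).restrict ?_
    refine (ae_restrict_iff' (measurableSet_near x _)).2 (.of_forall fun y hy => ?_)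
    rw [Real.norm_of_nonneg (by positivity)]
    exact hnearpt x y hy
  have hfarpt : ∀ x y, 0 < ‖x‖ → y ∈ far x → ‖x‖ ^ 2 * u y ^ 2 / ‖x - y‖ ^ 2 ≤ 4 * u y ^ 2 := by
    intro x y hx hy
    have hy : ‖x‖ / 2 ≤ ‖y - x‖ := hy
    rw [norm_sub_rev] at hy
    have hd : 0 < ‖x - y‖ := (half_pos hx).trans_le hy
    rw [div_le_iff₀ (by positivity)]
    have : (‖x‖ / 2) ^ 2 ≤ ‖x - y‖ ^ 2 := by gcongr
    nlinarith [sq_nonneg (u y)]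
  have hfar_i : ∀ x, 0 < ‖x‖ →
      IntegrableOn (fun y => ‖x‖ ^ 2 * u y ^ 2 / ‖x - y‖ ^ 2) (far x) := by
    intro x hx
    refine Integrable.mono' (hint.const_mul 4).integrableOn (hmeas x).restrict ?_
    refine (ae_restrict_iff' (measurableSet_far x _)).2 (.of_forall fun y hy => ?_)
    rw [Real.norm_of_nonneg (by positivity)]
    exact hfarpt x y hx hy
  have hev : ∀ᶠ x : E4 in cocompact E4, 0 < ‖x‖ :=
    eventually_cocompact_iff.2 ⟨1, one_pos, fun x hx => by linarith⟩
  have hnorm : Tendsto (fun x : E4 => ‖x‖) (cocompact E4) atTop := tendsto_norm_cocompact_atTop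
  -- the contribution of the ball around `x` is `O(1 / ‖x‖)`
  have hT1 : Tendsto (fun x : E4 => ∫ y in near x, ‖x‖ ^ 2 * u y ^ 2 / ‖x - y‖ ^ 2)
      (cocompact E4) (𝓝 0) := by
    have hb : Tendsto (fun x : E4 => 8 * A ^ 2 * Real.pi ^ 2 * ‖x‖⁻¹) (cocompact E4) (𝓝 0) := by
      simpa using (tendsto_inv_atTop_zero.comp hnorm).const_mul (8 * A ^ 2 * Real.pi ^ 2)
    refine squeeze_zero' (.of_forall fun x => integral_nonneg fun y => by positivity) ?_ hb
    filter_upwards [hev] with x hx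
    calc ∫ y in near x, ‖x‖ ^ 2 * u y ^ 2 / ‖x - y‖ ^ 2
        ≤ ∫ y in near x, 32 * A ^ 2 * (‖x‖ ^ 3)⁻¹ * (‖y - x‖ ^ 2)⁻¹ :=
          setIntegral_mono_on (hnear_i x) ((near2_integrableOn x (‖x‖ / 2)).const_mul _)
            (measurableSet_near x _) (hnearpt x)
      _ = 32 * A ^ 2 * (‖x‖ ^ 3)⁻¹ * (Real.pi ^ 2 * (‖x‖ / 2) ^ 2) := by
          rw [integral_const_mul, near2_integral x (half_pos hx)]
      _ = _ := by field_simp; norm_num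
  have hT2 : Tendsto (fun x : E4 => ∫ y, (far x).indicator
      (fun y => ‖x‖ ^ 2 * u y ^ 2 / ‖x - y‖ ^ 2) y) (cocompact E4) (𝓝 (∫ y, u y ^ 2)) := by
    have : (cocompact E4).IsCountablyGenerated := by
      rw [← Metric.cobounded_eq_cocompact, ← comap_norm_atTop]
      infer_instance
    refine tendsto_integral_filter_of_dominated_convergence (fun y => 4 * u y ^ 2)
      (.of_forall fun x => (hmeas x).indicator (measurableSet_far x _)) ?_ (hint.const_mul 4) ?_
    · filter_upwards [hev] with x hx
      refine .of_forall fun y => ?_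
      by_cases hy : y ∈ far x
      · rw [Set.indicator_of_mem hy, Real.norm_of_nonneg (by positivity)]
        exact hfarpt x y hx hy
      · rw [Set.indicator_of_notMem hy, norm_zero]
        positivity
    · refine .of_forall fun y => ?_
      have hq : Tendsto (fun x : E4 => ‖x - y‖ / ‖x‖) (cocompact E4) (𝓝 1) := by
        have h0 : Tendsto (fun x : E4 => ‖y‖ * ‖x‖⁻¹) (cocompact E4) (𝓝 0) := by
          simpa using (tendsto_inv_atTop_zero.comp hnorm).const_mul ‖y‖
        rw [tendsto_iff_norm_sub_tendsto_zero]
        refine squeeze_zero' (.of_forall fun x => norm_nonneg _) ?_ h0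
        filter_upwards [hev] with x hx
        have h1 : ‖x - y‖ / ‖x‖ - 1 = (‖x - y‖ - ‖x‖) * ‖x‖⁻¹ := by field_simp
        rw [h1, norm_mul, norm_inv, norm_norm]
        gcongr
        have := abs_norm_sub_norm_le (x - y) x
        simpa using this
      have hq2 : Tendsto (fun x : E4 => u y ^ 2 / (‖x - y‖ / ‖x‖) ^ 2) (cocompact E4)
          (𝓝 (u y ^ 2)) := by
        have := (tendsto_const_nhds (x := u y ^ 2)).div (hq.pow 2) (by norm_num)
        rw [one_pow, div_one] at this
        exact this
      refine hq2.congr' ?_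
      filter_upwards [eventually_cocompact_iff.2 ⟨2 * ‖y‖ + 1, by positivity,
        fun x hx => hx⟩] with x hx
      have hm : y ∈ far x := by
        show ‖x‖ / 2 ≤ ‖y - x‖
        have := norm_sub_norm_le x y
        rw [norm_sub_rev] at this
        linarith
      rw [Set.indicator_of_mem hm]
      field_simp
  have hsum := hT2.add hT1
  rw [add_zero] at hsum
  refine hsum.congr' ?_
  filter_upwards [hev] with x hx
  have hfi : Integrable (fun y => ‖x‖ ^ 2 * u y ^ 2 / ‖x - y‖ ^ 2) := by
    rw [← integrableOn_univ, ← Set.union_compl_self (far x), hcompl]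
    exact (hfar_i x hx).union (hnear_i x)
  rw [integral_indicator (measurableSet_far x _), ← hcompl,
    integral_add_compl (measurableSet_far x _) hfi]

/-! ### Decay of `u` at infinity and bounds for `P₄` -/

/-- Vanishing at infinity, from the local bound `mean_value`, the weighted square integrability
and the decay of the half-Laplacian. -/
lemma tendsto_zero {u f : E4 → ℝ} (hu : Continuous u) (hu0 : ∀ x, 0 ≤ u x)
    (hint : Integrable (fun x : E4 => |u x| / (1 + ‖x‖ ^ 5)))
    (H : ∀ x, HalfLapEq4 u x (f x)) (hC : 0 < C4)
    (hw : Integrable (fun y : E4 => u y ^ 2 / (1 + ‖y‖) ^ 2))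
    {R₀ : ℝ} (hR₀ : 0 < R₀) (hf : ∀ x, R₀ ≤ ‖x‖ → f x ≤ (√‖x‖ ^ 7)⁻¹) :
    Tendsto u (cocompact E4) (𝓝 0) := by
  have hum := hu.measurable
  have hJ : ∀ r : ℝ, 1 ≤ r → Integrable (fun y : E4 => u y / (r + ‖y‖) ^ 5) := by
    intro r hr
    refine hint.mono' (Measurable.aestronglyMeasurable (by fun_prop)) (.of_forall fun y => ?_)
    have h0 := norm_nonneg y
    rw [Real.norm_of_nonneg (div_nonneg (hu0 y) (by positivity)), abs_of_nonneg (hu0 y)]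
    refine div_le_div_of_nonneg_left (hu0 y) (by positivity) ?_
    have h1 : (1 + ‖y‖) ^ 5 ≤ (r + ‖y‖) ^ 5 := by gcongr
    have h2 : 1 + ‖y‖ ^ 5 ≤ (1 + ‖y‖) ^ 5 := by
      have : 0 ≤ ‖y‖ * (5 + 10 * ‖y‖ + 10 * ‖y‖ ^ 2 + 5 * ‖y‖ ^ 3) := by positivity
      nlinarith
    linarith
  have hT : Tendsto (fun r : ℝ => ∫ y : E4, r * (u y / (r + ‖y‖) ^ 5)) atTop (𝓝 0) := by
    have h0 : (∫ _y : E4, (0 : ℝ)) = 0 := by simp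
    rw [← h0]
    refine tendsto_integral_filter_of_dominated_convergence
      (fun y => u y ^ 2 / (1 + ‖y‖) ^ 2 + ((1 + ‖y‖) ^ 6)⁻¹)
      (.of_forall fun r => Measurable.aestronglyMeasurable (by fun_prop)) ?_
      (hw.add (integrable_decay (by norm_num))) (.of_forall fun y => ?_)
    · filter_upwards [eventually_ge_atTop 1] with r hr
      refine .of_forall fun y => ?_
      have h0 := norm_nonneg y
      have hy := hu0 y
      rw [Real.norm_of_nonneg (by positivity)]
      have h1 : (1 + ‖y‖) ^ 4 ≤ (r + ‖y‖) ^ 4 := by gcongr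
      calc r * (u y / (r + ‖y‖) ^ 5) ≤ (r + ‖y‖) * (u y / (r + ‖y‖) ^ 5) := by
            gcongr; linarith
        _ = u y / (r + ‖y‖) ^ 4 := by
            have : 0 < r + ‖y‖ := by linarith
            field_simp
        _ ≤ u y / (1 + ‖y‖) ^ 4 := by gcongr
        _ = (u y / (1 + ‖y‖)) * ((1 + ‖y‖) ^ 3)⁻¹ := by field_simp
        _ ≤ (u y / (1 + ‖y‖)) ^ 2 + (((1 + ‖y‖) ^ 3)⁻¹) ^ 2 := by
            nlinarith [sq_nonneg (u y / (1 + ‖y‖) - ((1 + ‖y‖) ^ 3)⁻¹),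
              sq_nonneg (u y / (1 + ‖y‖)), sq_nonneg (((1 + ‖y‖) ^ 3)⁻¹)]
        _ = _ := by rw [div_pow, inv_pow, ← pow_mul]
    · -- pointwise convergence
      have hb : Tendsto (fun r : ℝ => u y * r⁻¹) atTop (𝓝 0) := by
        simpa using tendsto_inv_atTop_zero.const_mul (u y)
      refine squeeze_zero' ?_ ?_ hb
      · filter_upwards [eventually_ge_atTop 1] with r hr
        have := hu0 y
        positivity
      · filter_upwards [eventually_ge_atTop 1] with r hr
        have h0 := norm_nonneg y
        have hy := hu0 y
        have h1 : r * r ≤ (r + ‖y‖) ^ 5 := by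
          calc r * r = r ^ 2 := by ring
            _ ≤ r ^ 5 := pow_le_pow_right₀ hr (by norm_num)
            _ ≤ _ := by gcongr; linarith
        rw [← mul_div_assoc, ← div_eq_mul_inv, div_le_div_iff₀ (by positivity) (by positivity)]
        nlinarith
  have hF : Tendsto (fun r : ℝ => r * (√r ^ 7)⁻¹) atTop (𝓝 0) := by
    have hb : Tendsto (fun r : ℝ => (√r)⁻¹) atTop (𝓝 0) :=
      tendsto_inv_atTop_zero.comp Real.tendsto_sqrt_atTop
    refine squeeze_zero' ?_ ?_ hb
    · filter_upwards [eventually_ge_atTop 1] with r hr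
      positivity
    · filter_upwards [eventually_ge_atTop 1] with r hr
      have h1 : 1 ≤ √r := Real.one_le_sqrt.2 hr
      have h2 : r * (√r ^ 7)⁻¹ = (√r ^ 5)⁻¹ := by
        have : r = √r ^ 2 := (Real.sq_sqrt (by linarith)).symm
        have h3 : 0 < √r := by linarith
        calc r * (√r ^ 7)⁻¹ = √r ^ 2 * (√r ^ 7)⁻¹ := by rw [← this]
          _ = _ := by field_simp
      rw [h2]
      exact inv_anti₀ (by linarith) (le_self_pow₀ h1 (by norm_num))
  have hG : Tendsto (fun r : ℝ => 2 ^ 35 * (r * (√r ^ 7)⁻¹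
      + C4 * ∫ y : E4, r * (u y / (r + ‖y‖) ^ 5)) / C4) atTop (𝓝 0) := by
    have := ((hF.add (hT.const_mul C4)).const_mul (2 ^ 35)).div_const C4
    simpa using this
  have hhalf : Tendsto (fun x : E4 => ‖x‖ / 2) (cocompact E4) atTop :=
    tendsto_norm_cocompact_atTop.atTop_div_const two_pos
  refine squeeze_zero' (.of_forall hu0) ?_ (hG.comp hhalf)
  filter_upwards [eventually_cocompact_iff.2 ⟨2 * (1 + R₀), by positivity, fun x hx => hx⟩]
    with x hx
  set r := ‖x‖ / 2 with hr
  have hr1 : 1 ≤ r := by linarith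
  have hmv := mean_value hu hu0 hint H hC.le (x₀ := x) (r := r) (F := (√r ^ 7)⁻¹) (by linarith)
    (by rw [hr]; ring) (by positivity) ?_ (hJ r hr1)
  · simp only [Function.comp]
    rw [le_div_iff₀ hC, mul_comm (u x), integral_const_mul]
    refine hmv.trans (le_of_eq ?_)
    ring
  · intro y hy
    have h1 : r ≤ ‖y‖ := by
      have := norm_sub_norm_le x y
      rw [norm_sub_rev] at this
      linarith
    refine (hf y (by linarith)).trans ?_
    have : 0 < √r := Real.sqrt_pos.2 (by linarith)
    gcongr

lemma C4_nonneg : 0 ≤ C4 := by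
  unfold C4
  refine inv_nonneg.2 (integral_nonneg fun ζ => ?_)
  exact div_nonneg (sub_nonneg.2 (Real.cos_le_one _)) (by positivity)

/-- `C4` is nonzero because a half-Laplacian is; this avoids showing that the integral defining it
converges. -/
lemma C4_pos {u : E4 → ℝ} {x : E4} {h : ℝ} (H : HalfLapEq4 u x h) (hh : 0 < h) : 0 < C4 := by
  refine C4_nonneg.lt_of_ne fun h0 => ?_
  unfold HalfLapEq4 at H
  simp only [← h0, zero_mul] at H
  exact hh.ne (tendsto_nhds_unique tendsto_const_nhds H)

lemma exists_ne_zero {u : E4 → ℝ} {x : E4} {h : ℝ} (H : HalfLapEq4 u x h) (hh : 0 < h) :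
    ∃ z, u z ≠ 0 := by
  by_contra hcon
  push Not at hcon
  unfold HalfLapEq4 at H
  simp only [hcon, sub_self, zero_div, integral_zero, mul_zero] at H
  exact hh.ne (tendsto_nhds_unique tendsto_const_nhds H)

/-- Finite mass of a nontrivial density gives weighted square integrability. -/
lemma weighted_sq_integrable {u : E4 → ℝ} (hu : Continuous u) (hne : ∃ z, u z ≠ 0)
    (hmass : FiniteMass4 u) : Integrable (fun y : E4 => u y ^ 2 / (1 + ‖y‖) ^ 2) := by
  have h1 : ∀ᵐ x : E4, Integrable (fun y : E4 => u x ^ 2 * u y ^ 2 / ‖x - y‖ ^ 2) := by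
    have h : Integrable (fun q : E4 × E4 => u q.1 ^ 2 * u q.2 ^ 2 / ‖q.1 - q.2‖ ^ 2)
      (volume.prod volume) := hmass
    exact h.prod_right_ae
  obtain ⟨x, hx0, hx⟩ : ∃ x, u x ≠ 0 ∧
      Integrable (fun y : E4 => u x ^ 2 * u y ^ 2 / ‖x - y‖ ^ 2) := by
    have ho : IsOpen {x | u x ≠ 0} := isOpen_ne_fun hu continuous_const
    by_contra hcon
    push Not at hcon
    have h2 : volume {x | u x ≠ 0} = 0 :=
      measure_mono_null (fun x hx => hcon x hx) (ae_iff.1 h1)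
    exact (ho.measure_pos volume hne).ne' h2
  have hpos : 0 < u x ^ 2 := by positivity
  have hum := hu.measurable
  refine (hx.const_mul ((1 + ‖x‖) ^ 2 / u x ^ 2)).mono'
    (Measurable.aestronglyMeasurable (by fun_prop)) ?_
  have hxne : ∀ᵐ y : E4, y ≠ x := by
    rw [ae_iff]
    simp
  filter_upwards [hxne] with y hy
  have hd : 0 < ‖x - y‖ := norm_pos_iff.2 (sub_ne_zero.2 hy.symm)
  rw [Real.norm_of_nonneg (by positivity)]
  have h2 : ‖x - y‖ ≤ (1 + ‖x‖) * (1 + ‖y‖) := by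
    have := norm_sub_le x y
    nlinarith [norm_nonneg x, norm_nonneg y, mul_nonneg (norm_nonneg x) (norm_nonneg y)]
  have e : (1 + ‖x‖) ^ 2 / u x ^ 2 * (u x ^ 2 * u y ^ 2 / ‖x - y‖ ^ 2)
      = (1 + ‖x‖) ^ 2 * u y ^ 2 / ‖x - y‖ ^ 2 := by field_simp
  rw [e, div_le_div_iff₀ (by positivity) (by positivity)]
  have h3 : ‖x - y‖ ^ 2 ≤ ((1 + ‖x‖) * (1 + ‖y‖)) ^ 2 := by gcongr
  calc u y ^ 2 * ‖x - y‖ ^ 2 ≤ u y ^ 2 * ((1 + ‖x‖) * (1 + ‖y‖)) ^ 2 := by gcongr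
    _ = _ := by ring

lemma P4_nonneg (u : E4 → ℝ) (y : E4) : 0 ≤ P4 u y :=
  mul_nonneg (integral_nonneg fun z => by positivity) (sq_nonneg _)

lemma P4_integrable {u : E4 → ℝ} (hmass : FiniteMass4 u) : Integrable (P4 u) := by
  have h : Integrable (fun q : E4 × E4 => u q.1 ^ 2 * u q.2 ^ 2 / ‖q.1 - q.2‖ ^ 2)
    (volume.prod volume) := hmass
  refine h.integral_prod_left.congr (.of_forall fun x => ?_)
  simp only [P4]
  rw [mul_comm, ← integral_const_mul]
  simp only [mul_div_assoc]

lemma poly_growth {u : E4 → ℝ} (hu : Continuous u) (hg : ∃ K C R : ℝ, 0 < K ∧ 0 < C ∧ 0 < R ∧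
      ∀ x : E4, R ≤ ‖x‖ → u x ≤ C * ‖x‖ ^ K) :
    ∃ (k : ℕ) (C : ℝ), 0 < C ∧ ∀ x, u x ≤ C * (1 + ‖x‖) ^ k := by
  obtain ⟨K, C, R, hK, hC, hR, hb⟩ := hg
  obtain ⟨M, hM⟩ := (isCompact_closedBall (0 : E4) R).exists_bound_of_continuousOn hu.continuousOn
  refine ⟨⌈K⌉₊, C + |M|, by positivity, fun x => ?_⟩
  have h0 := norm_nonneg x
  have h1 : 1 ≤ (1 + ‖x‖) ^ ⌈K⌉₊ := one_le_pow₀ (by linarith)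
  rcases le_or_gt ‖x‖ R with h | h
  · have h2 := (le_abs_self _).trans (hM x (by simpa using h))
    nlinarith [le_abs_self M, abs_nonneg M]
  · have h2 : ‖x‖ ^ K ≤ (1 + ‖x‖) ^ ⌈K⌉₊ := by
      rw [← Real.rpow_natCast]
      exact (Real.rpow_le_rpow h0 (by linarith) hK.le).trans
        (Real.rpow_le_rpow_of_exponent_le (by linarith) (Nat.le_ceil K))
    calc u x ≤ C * ‖x‖ ^ K := hb x h.le
      _ ≤ C * (1 + ‖x‖) ^ ⌈K⌉₊ := by gcongr
      _ ≤ _ := by gcongr; linarith [abs_nonneg M]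

set_option maxHeartbeats 400000 in
/-- The density `P₄` grows at most polynomially. -/
lemma P4_growth {u : E4 → ℝ} (hu : Continuous u) (hu0 : ∀ x, 0 ≤ u x)
    (hg : ∃ (k : ℕ) (C : ℝ), 0 < C ∧ ∀ x, u x ≤ C * (1 + ‖x‖) ^ k)
    (hw : Integrable (fun y : E4 => u y ^ 2 / (1 + ‖y‖) ^ 2)) :
    ∃ (k : ℕ) (C : ℝ), 0 < C ∧ ∀ x, P4 u x ≤ C * (2 + ‖x‖) ^ k := by
  obtain ⟨k, C, hC, hb⟩ := hg
  set I := ∫ y : E4, u y ^ 2 / (1 + ‖y‖) ^ 2 with hI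
  have hI0 : 0 ≤ I := integral_nonneg fun y => by positivity
  refine ⟨4 * k + 2, (C ^ 2 * Real.pi ^ 2 + I) * C ^ 2, by positivity, fun x => ?_⟩
  have hum := hu.measurable
  have hx0 := norm_nonneg x
  set T := 2 + ‖x‖ with hT
  have hT1 : 1 ≤ T := by linarith
  have hbT : ∀ z : E4, 1 + ‖z‖ ≤ T → u z ^ 2 ≤ C ^ 2 * T ^ (2 * k) := by
    intro z hz
    calc u z ^ 2 ≤ (C * (1 + ‖z‖) ^ k) ^ 2 := by gcongr; exacts [hu0 z, hb z]
      _ ≤ (C * T ^ k) ^ 2 := by gcongr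
      _ = _ := by ring
  have hm : AEStronglyMeasurable (fun z => u z ^ 2 / ‖x - z‖ ^ 2) volume :=
    Measurable.aestronglyMeasurable (by fun_prop)
  have hnp : ∀ z ∈ {z : E4 | ‖z - x‖ < 1},
      u z ^ 2 / ‖x - z‖ ^ 2 ≤ C ^ 2 * T ^ (2 * k) * (‖z - x‖ ^ 2)⁻¹ := by
    intro z hz
    have hz : ‖z - x‖ < 1 := hz
    rw [norm_sub_rev x z, div_eq_mul_inv]
    refine mul_le_mul_of_nonneg_right (hbT z ?_) (by positivity)
    have := norm_sub_norm_le z x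
    linarith
  have hfp : ∀ z ∈ {z : E4 | 1 ≤ ‖z - x‖},
      u z ^ 2 / ‖x - z‖ ^ 2 ≤ T ^ 2 * (u z ^ 2 / (1 + ‖z‖) ^ 2) := by
    intro z hz
    have hz : 1 ≤ ‖z - x‖ := hz
    have h1 : 1 + ‖z‖ ≤ T * ‖x - z‖ := by
      rw [norm_sub_rev x z]
      have := norm_sub_norm_le z x
      nlinarith
    have hd : 0 < ‖x - z‖ := by rw [norm_sub_rev]; linarith
    have h2 : (1 + ‖z‖) ^ 2 ≤ (T * ‖x - z‖) ^ 2 := by gcongr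
    rw [mul_div_assoc', div_le_div_iff₀ (by positivity) (by positivity)]
    calc u z ^ 2 * (1 + ‖z‖) ^ 2 ≤ u z ^ 2 * (T * ‖x - z‖) ^ 2 := by gcongr
      _ = _ := by ring
  have hni : IntegrableOn (fun z => u z ^ 2 / ‖x - z‖ ^ 2) {z : E4 | ‖z - x‖ < 1} := by
    refine Integrable.mono' ((near2_integrableOn x 1).const_mul (C ^ 2 * T ^ (2 * k)))
      hm.restrict ((ae_restrict_iff' (measurableSet_near x 1)).2 (.of_forall fun z hz => ?_))
    rw [Real.norm_of_nonneg (by positivity)]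
    exact hnp z hz
  have hfi : IntegrableOn (fun z => u z ^ 2 / ‖x - z‖ ^ 2) {z : E4 | 1 ≤ ‖z - x‖} := by
    refine Integrable.mono' (hw.const_mul (T ^ 2)).integrableOn
      hm.restrict ((ae_restrict_iff' (measurableSet_far x 1)).2 (.of_forall fun z hz => ?_))
    rw [Real.norm_of_nonneg (by positivity)]
    exact hfp z hz
  have hcompl : {z : E4 | 1 ≤ ‖z - x‖}ᶜ = {z : E4 | ‖z - x‖ < 1} := by
    ext z
    exact not_le (a := (1 : ℝ)) (b := ‖z - x‖)
  have hi : Integrable (fun z => u z ^ 2 / ‖x - z‖ ^ 2) := by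
    rw [← integrableOn_univ, ← Set.union_compl_self {z : E4 | 1 ≤ ‖z - x‖}, hcompl]
    exact hfi.union hni
  have htot : ∫ z, u z ^ 2 / ‖x - z‖ ^ 2 ≤ (C ^ 2 * Real.pi ^ 2 + I) * T ^ (2 * k + 2) := by
    rw [← integral_add_compl (measurableSet_far x 1) hi, hcompl]
    have h1 : ∫ z in {z : E4 | ‖z - x‖ < 1}, u z ^ 2 / ‖x - z‖ ^ 2
        ≤ C ^ 2 * T ^ (2 * k) * Real.pi ^ 2 := by
      refine (setIntegral_mono_on hni ((near2_integrableOn x 1).const_mul _)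
        (measurableSet_near x 1) hnp).trans ?_
      rw [integral_const_mul, near2_integral x one_pos]
      simp
    have h2 : ∫ z in {z : E4 | 1 ≤ ‖z - x‖}, u z ^ 2 / ‖x - z‖ ^ 2 ≤ T ^ 2 * I := by
      refine (setIntegral_mono_on hfi (hw.const_mul _).integrableOn
        (measurableSet_far x 1) hfp).trans ?_
      refine (setIntegral_le_integral (hw.const_mul _) (.of_forall fun z => ?_)).trans ?_
      · simp only [Pi.zero_apply]; positivity
      · rw [integral_const_mul]
    have h3 : T ^ (2 * k) ≤ T ^ (2 * k + 2) := pow_le_pow_right₀ hT1 (by omega)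
    have h4 : T ^ 2 ≤ T ^ (2 * k + 2) := pow_le_pow_right₀ hT1 (by omega)
    refine (add_le_add h2 h1).trans ?_
    have h5 := mul_le_mul_of_nonneg_right h4 hI0
    have h6 := mul_le_mul_of_nonneg_left h3 (by positivity : 0 ≤ C ^ 2 * Real.pi ^ 2)
    linarith
  have hux := hbT x (by linarith)
  have hA : 0 ≤ ∫ z, u z ^ 2 / ‖x - z‖ ^ 2 := integral_nonneg fun z => by positivity
  have hend : P4 u x ≤ (C ^ 2 * Real.pi ^ 2 + I) * T ^ (2 * k + 2) * (C ^ 2 * T ^ (2 * k)) :=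
    mul_le_mul htot hux (sq_nonneg _) (hA.trans htot)
  have e : T ^ (4 * k + 2) = T ^ (2 * k + 2) * T ^ (2 * k) := by rw [← pow_add]; congr 1; ring
  rw [e]
  clear_value T I
  linarith

/-! ### The logarithmic potential -/

/-- The function `‖y - a‖⁻²` cut off to the unit ball around `a`; it dominates the logarithmic
singularity at `a`. -/
def nearInv (a y : E4) : ℝ := {y : E4 | ‖y - a‖ < 1}.indicator (fun y => (‖y - a‖ ^ 2)⁻¹) y

lemma nearInv_nonneg (a y : E4) : 0 ≤ nearInv a y :=
  Set.indicator_nonneg (fun _ _ => by positivity) _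

lemma nearInv_integrable (a : E4) : Integrable (nearInv a) :=
  (near2_integrableOn a 1).integrable_indicator (measurableSet_near a 1)

lemma nearInv_integral (a : E4) : ∫ y, nearInv a y = Real.pi ^ 2 := by
  unfold nearInv
  rw [integral_indicator (measurableSet_near a 1), near2_integral a one_pos]
  simp

lemma nearInv_of_lt {a y : E4} (h : ‖y - a‖ < 1) : nearInv a y = (‖y - a‖ ^ 2)⁻¹ :=
  Set.indicator_of_mem (s := {y : E4 | ‖y - a‖ < 1}) h _

/-- The kernel of the logarithmic potential, normalized to vanish at `x = 0`. -/
def logker (x y : E4) : ℝ := Real.log ‖y - x‖ - Real.log ‖y‖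

lemma measurable_logker (x : E4) : Measurable (logker x) := by
  unfold logker
  fun_prop

lemma log_le_log_of_one_le {a c : ℝ} (ha : 0 ≤ a) (hac : a ≤ c) (hc : 1 ≤ c) :
    Real.log a ≤ Real.log c := by
  rcases ha.eq_or_lt with h | h
  · rw [← h, Real.log_zero]
    exact Real.log_nonneg hc
  · exact Real.log_le_log h hac

lemma neg_log_le_inv_sq {b : ℝ} (hb : 0 ≤ b) (hb1 : b < 1) : -Real.log b ≤ (b ^ 2)⁻¹ := by
  rcases hb.eq_or_lt with h | h
  · simp [← h]
  · have h1 := Real.one_sub_inv_le_log_of_pos h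
    have h2 : b⁻¹ ≤ (b ^ 2)⁻¹ := by
      apply inv_anti₀ (by positivity)
      nlinarith
    linarith

lemma neg_log_norm_le (y a : E4) : -Real.log ‖y - a‖ ≤ nearInv a y := by
  by_cases h : ‖y - a‖ < 1
  · rw [nearInv_of_lt h]
    exact neg_log_le_inv_sq (norm_nonneg _) h
  · have := Real.log_nonneg (not_lt.1 h)
    linarith [nearInv_nonneg a y]

lemma log_sub_log_le {a b X : ℝ} (ha : 0 ≤ a) (hX : 0 ≤ X) (hab : a ≤ b + X) (hb1 : 1 ≤ b) :
    Real.log a - Real.log b ≤ Real.log (1 + X) := by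
  have h1 : Real.log a ≤ Real.log (b * (1 + X)) :=
    log_le_log_of_one_le ha (by nlinarith) (by nlinarith)
  rw [Real.log_mul (by linarith) (by linarith)] at h1
  linarith

lemma log_norm_sub_le (y a b : E4) :
    Real.log ‖y - a‖ - Real.log ‖y - b‖ ≤ Real.log (1 + ‖a - b‖) + nearInv b y := by
  have h0 : ‖y - a‖ ≤ ‖y - b‖ + ‖a - b‖ := by
    have := norm_sub_le (y - b) (a - b)
    rwa [sub_sub_sub_cancel_right] at this
  by_cases h : ‖y - b‖ < 1
  · have h1 := neg_log_norm_le y b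
    have h2 : Real.log ‖y - a‖ ≤ Real.log (1 + ‖a - b‖) :=
      log_le_log_of_one_le (norm_nonneg _) (by linarith) (by linarith [norm_nonneg (a - b)])
    linarith
  · have := log_sub_log_le (norm_nonneg (y - a)) (norm_nonneg (a - b)) h0 (not_lt.1 h)
    linarith [nearInv_nonneg b y]

lemma logker_le (x y : E4) : logker x y ≤ Real.log (1 + ‖x‖) + nearInv 0 y := by
  simpa [logker] using log_norm_sub_le y x 0

lemma neg_logker_le (x y : E4) : -logker x y ≤ Real.log (1 + ‖x‖) + nearInv x y := by
  simpa [logker] using log_norm_sub_le y 0 x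

/-- Standing assumptions on a density: nonnegative, integrable, of polynomial growth. -/
structure Density (P : E4 → ℝ) (C : ℝ) (k : ℕ) : Prop where
  C_pos : 0 < C
  nonneg : ∀ y, 0 ≤ P y
  integrable : Integrable P
  growth : ∀ y, P y ≤ C * (2 + ‖y‖) ^ k

namespace Density

variable {P : E4 → ℝ} {C : ℝ} {k : ℕ}

lemma mul_nearInv_le (D : Density P C k) (a y : E4) :
    P y * nearInv a y ≤ C * (3 + ‖a‖) ^ k * nearInv a y := by
  by_cases h : ‖y - a‖ < 1
  · refine mul_le_mul_of_nonneg_right ((D.growth y).trans ?_) (nearInv_nonneg a y)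
    have h1 := norm_sub_norm_le y a
    have h2 := D.C_pos
    gcongr C * ?_ ^ k
    linarith
  · have : nearInv a y = 0 := Set.indicator_of_notMem (s := {y : E4 | ‖y - a‖ < 1}) h _
    rw [this, mul_zero, mul_zero]

lemma mul_nearInv_integrable (D : Density P C k) (a : E4) :
    Integrable (fun y => P y * nearInv a y) := by
  refine ((nearInv_integrable a).const_mul (C * (3 + ‖a‖) ^ k)).mono'
    (D.integrable.1.mul (nearInv_integrable a).1) (.of_forall fun y => ?_)
  rw [Real.norm_of_nonneg (mul_nonneg (D.nonneg y) (nearInv_nonneg a y))]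
  exact D.mul_nearInv_le a y

lemma mul_nearInv_integral_le (D : Density P C k) (a : E4) :
    ∫ y, P y * nearInv a y ≤ C * (3 + ‖a‖) ^ k * Real.pi ^ 2 := by
  rw [← nearInv_integral a, ← integral_const_mul]
  exact integral_mono (D.mul_nearInv_integrable a) ((nearInv_integrable a).const_mul _)
    (D.mul_nearInv_le a)

lemma logker_integrable (D : Density P C k) (x : E4) :
    Integrable (fun y => P y * logker x y) := by
  refine (((D.integrable.mul_const (Real.log (1 + ‖x‖))).add (D.mul_nearInv_integrable 0)).add
    (D.mul_nearInv_integrable x)).mono'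
    (D.integrable.1.mul (measurable_logker x).aestronglyMeasurable) (.of_forall fun y => ?_)
  rw [norm_mul, Real.norm_of_nonneg (D.nonneg y), Real.norm_eq_abs]
  simp only [Pi.add_apply]
  rw [← mul_add, ← mul_add]
  refine mul_le_mul_of_nonneg_left ?_ (D.nonneg y)
  have h1 := logker_le x y
  have h2 := neg_logker_le x y
  have h3 := nearInv_nonneg 0 y
  have h4 := nearInv_nonneg x y
  rw [abs_le]
  constructor <;> linarith

lemma logpot_upper (D : Density P C k) (x : E4) :
    ∫ y, P y * logker x y ≤ (∫ y, P y) * Real.log (1 + ‖x‖) + C * 3 ^ k * Real.pi ^ 2 := by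
  have h1 := D.mul_nearInv_integral_le 0
  rw [norm_zero, add_zero] at h1
  refine le_trans ?_ (add_le_add_right h1 _)
  rw [← integral_mul_const, ← integral_add (D.integrable.mul_const _) (D.mul_nearInv_integrable 0)]
  refine integral_mono (D.logker_integrable x)
    ((D.integrable.mul_const _).add (D.mul_nearInv_integrable 0)) fun y => ?_
  dsimp only
  rw [← mul_add]
  exact mul_le_mul_of_nonneg_left (logker_le x y) (D.nonneg y)

lemma logpot_lower (D : Density P C k) (x : E4) :
    -((∫ y, P y) * Real.log (1 + ‖x‖) + C * (3 + ‖x‖) ^ k * Real.pi ^ 2)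
      ≤ ∫ y, P y * logker x y := by
  have h1 := D.mul_nearInv_integral_le x
  rw [neg_le, ← integral_neg]
  refine le_trans ?_ (add_le_add_right h1 _)
  rw [← integral_mul_const, ← integral_add (D.integrable.mul_const _) (D.mul_nearInv_integrable x)]
  refine integral_mono (D.logker_integrable x).neg
    ((D.integrable.mul_const _).add (D.mul_nearInv_integrable x)) fun y => ?_
  dsimp only
  rw [← mul_add, ← mul_neg]
  exact mul_le_mul_of_nonneg_left (neg_logker_le x y) (D.nonneg y)

/-- Pointwise lower bound for the logarithmic kernel weighted by the density. -/
lemma pointwise_lower (D : Density P C k) {T : ℝ} (hT : 1 ≤ T) {x : E4} (hx : 2 * T ≤ ‖x‖)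
    (y : E4) :
    {y : E4 | ‖y‖ ≤ T}.indicator P y * (Real.log ‖x‖ - Real.log (2 * T))
      - {y : E4 | ‖y‖ ≤ T}ᶜ.indicator P y * ((k + 1) * Real.log (3 + ‖x‖))
      - C * nearInv x y ≤ P y * logker x y := by
  have hP := D.nonneg y
  have hC := D.C_pos
  have hn := nearInv_nonneg x y
  have hx0 : 0 < ‖x‖ := by linarith
  by_cases h : y ∈ {y : E4 | ‖y‖ ≤ T}
  · rw [Set.indicator_of_mem h, Set.indicator_of_notMem (Set.notMem_compl_iff.2 h), zero_mul,
      sub_zero]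
    have h : ‖y‖ ≤ T := h
    have h1 : ‖x‖ / 2 ≤ ‖y - x‖ := by
      have := norm_sub_norm_le x y
      rw [norm_sub_rev] at this
      linarith
    have h2 : Real.log (‖x‖ / 2) ≤ Real.log ‖y - x‖ := Real.log_le_log (by linarith) h1
    have h3 : Real.log ‖y‖ ≤ Real.log T := log_le_log_of_one_le (norm_nonneg _) h hT
    have h4 : Real.log ‖x‖ - Real.log (2 * T) ≤ logker x y := by
      rw [Real.log_div hx0.ne' two_ne_zero] at h2
      rw [Real.log_mul two_ne_zero (by linarith), logker]
      linarith
    have h5 := mul_le_mul_of_nonneg_left h4 hP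
    have h6 := mul_nonneg hC.le hn
    linarith
  · rw [Set.indicator_of_notMem h, Set.indicator_of_mem (Set.mem_compl h), zero_mul]
    have hl : Real.log (1 + ‖x‖) ≤ Real.log (3 + ‖x‖) := Real.log_le_log (by linarith) (by linarith)
    have hl0 : 0 ≤ Real.log (3 + ‖x‖) := Real.log_nonneg (by linarith)
    have hk0 : (0 : ℝ) ≤ k := Nat.cast_nonneg k
    by_cases h1 : ‖y - x‖ < 1
    · have hy : ‖y‖ ≤ 1 + ‖x‖ := by have := norm_sub_norm_le y x; linarith
      have h2 : Real.log ‖y‖ ≤ Real.log (3 + ‖x‖) :=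
        log_le_log_of_one_le (norm_nonneg _) (by linarith) (by linarith)
      rcases (norm_nonneg (y - x)).eq_or_lt with h0 | h0
      · have h3 : -((k + 1) * Real.log (3 + ‖x‖)) ≤ logker x y := by
          rw [logker, ← h0, Real.log_zero]
          nlinarith
        have h5 := mul_le_mul_of_nonneg_left h3 hP
        have h6 := mul_nonneg hC.le hn
        linarith
      · -- `log (1 / s) ≤ k log (3 + ‖x‖) + (3 + ‖x‖)^(-k) / s`
        have hq : 0 < (3 + ‖x‖) ^ k := by positivity
        have h3 := Real.one_sub_inv_le_log_of_pos (mul_pos h0 hq)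
        rw [Real.log_mul h0.ne' hq.ne', Real.log_pow, mul_inv] at h3
        have h4 : -((k + 1) * Real.log (3 + ‖x‖)) - ‖y - x‖⁻¹ * ((3 + ‖x‖) ^ k)⁻¹
            ≤ logker x y := by
          rw [logker]
          linarith
        have h5 := mul_le_mul_of_nonneg_left h4 hP
        have h6 : P y ≤ C * (3 + ‖x‖) ^ k := by
          refine (D.growth y).trans ?_
          gcongr C * ?_ ^ k
          linarith
        have h7 : P y * (‖y - x‖⁻¹ * ((3 + ‖x‖) ^ k)⁻¹) ≤ C * nearInv x y := by
          rw [nearInv_of_lt h1]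
          calc P y * (‖y - x‖⁻¹ * ((3 + ‖x‖) ^ k)⁻¹)
              ≤ C * (3 + ‖x‖) ^ k * (‖y - x‖⁻¹ * ((3 + ‖x‖) ^ k)⁻¹) := by gcongr
            _ = C * ‖y - x‖⁻¹ := by field_simp
            _ ≤ C * (‖y - x‖ ^ 2)⁻¹ := by
                gcongr
                nlinarith
        linarith
    · have h0 := neg_logker_le x y
      have hz : nearInv x y = 0 := Set.indicator_of_notMem (s := {y : E4 | ‖y - x‖ < 1}) h1 _
      rw [hz, add_zero] at h0
      rw [hz]
      have h3 : -((k + 1) * Real.log (3 + ‖x‖)) ≤ logker x y := by nlinarith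
      have h5 := mul_le_mul_of_nonneg_left h3 hP
      linarith

/-- A logarithmic potential grows at least like any multiple of `log ‖x‖` smaller than the total
mass. -/
lemma logpot_growth (D : Density P C k) {γ : ℝ} (hγ : γ < ∫ y, P y) (M : ℝ) :
    ∃ R : ℝ, 1 ≤ R ∧ ∀ x : E4, R ≤ ‖x‖ →
      γ * Real.log ‖x‖ + M ≤ ∫ y, P y * logker x y := by
  set A := ∫ y, P y with hA
  have hA0 : 0 ≤ A := integral_nonneg D.nonneg
  have hk0 : (0 : ℝ) ≤ k := Nat.cast_nonneg k
  have hms : ∀ T : ℝ, MeasurableSet {y : E4 | ‖y‖ ≤ T} := fun T =>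
    measurableSet_le measurable_norm measurable_const
  -- the mass outside large balls is small
  have hlimT : Tendsto (fun T : ℝ => ∫ y, {y : E4 | ‖y‖ ≤ T}.indicator P y) atTop (𝓝 A) := by
    refine tendsto_integral_filter_of_dominated_convergence P
      (.of_forall fun T => D.integrable.1.indicator (hms T))
      (.of_forall fun T => .of_forall fun y => ?_) D.integrable (.of_forall fun y => ?_)
    · refine (norm_indicator_le_norm_self _ _).trans ?_
      rw [Real.norm_of_nonneg (D.nonneg y)]
    · refine tendsto_const_nhds.congr' ?_
      filter_upwards [eventually_ge_atTop ‖y‖] with T hT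
      exact (Set.indicator_of_mem (s := {y : E4 | ‖y‖ ≤ T}) hT P).symm
  set e := (A - γ) / (4 * (k + 2)) with he
  have he0 : 0 < e := by
    have : 0 < A - γ := by linarith
    positivity
  obtain ⟨T, hT, hT1⟩ := ((hlimT.eventually (lt_mem_nhds (sub_lt_self A he0))).and
    (eventually_ge_atTop 1)).exists
  set AT := ∫ y, {y : E4 | ‖y‖ ≤ T}.indicator P y with hAT
  set BT := ∫ y, {y : E4 | ‖y‖ ≤ T}ᶜ.indicator P y with hBT
  have hi1 : Integrable (fun y => {y : E4 | ‖y‖ ≤ T}.indicator P y) :=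
    D.integrable.indicator (hms T)
  have hi2 : Integrable (fun y => {y : E4 | ‖y‖ ≤ T}ᶜ.indicator P y) :=
    D.integrable.indicator (hms T).compl
  have hAB : AT + BT = A := by
    rw [hAT, hBT, ← integral_add hi1 hi2, hA]
    congr 1
    ext y
    exact congrFun (Set.indicator_self_add_compl {y : E4 | ‖y‖ ≤ T} P) y
  have hBT0 : 0 ≤ BT := integral_nonneg fun y => Set.indicator_nonneg (fun y _ => D.nonneg y) y
  have hAT0 : 0 ≤ AT := integral_nonneg fun y => Set.indicator_nonneg (fun y _ => D.nonneg y) y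
  set Q := |M| + A * Real.log (2 * T) + C * Real.pi ^ 2 with hQ
  have hlT : 0 ≤ Real.log (2 * T) := Real.log_nonneg (by linarith)
  have hC := D.C_pos
  have hQ0 : 0 ≤ Q := by positivity
  set R := max (max (2 * T) 3) (Real.exp (2 * Q / (A - γ))) with hR
  refine ⟨R, ?_, fun x hx => ?_⟩
  · rw [hR]
    exact le_trans (by norm_num) ((le_max_right _ _).trans (le_max_left _ _))
  have hx1 : 2 * T ≤ ‖x‖ := ((le_max_left _ _).trans (le_max_left _ _)).trans hx
  have hx2 : 3 ≤ ‖x‖ := ((le_max_right _ _).trans (le_max_left _ _)).trans hx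
  have hx3 : 2 * Q / (A - γ) ≤ Real.log ‖x‖ := by
    rw [Real.le_log_iff_exp_le (by linarith)]
    exact (le_max_right _ _).trans hx
  rw [div_le_iff₀ (by linarith)] at hx3
  have hlog : Real.log (3 + ‖x‖) ≤ 2 * Real.log ‖x‖ := by
    rw [show 2 * Real.log ‖x‖ = Real.log (‖x‖ ^ 2) by rw [Real.log_pow]; norm_num]
    exact Real.log_le_log (by linarith) (by nlinarith)
  have hl0 : 0 ≤ Real.log ‖x‖ := Real.log_nonneg (by linarith)
  have hi : ∫ y, ({y : E4 | ‖y‖ ≤ T}.indicator P y * (Real.log ‖x‖ - Real.log (2 * T))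
      - {y : E4 | ‖y‖ ≤ T}ᶜ.indicator P y * ((k + 1) * Real.log (3 + ‖x‖))
      - C * nearInv x y) ≤ ∫ y, P y * logker x y :=
    integral_mono (((hi1.mul_const _).sub (hi2.mul_const _)).sub
      ((nearInv_integrable x).const_mul C)) (D.logker_integrable x)
      (D.pointwise_lower hT1 hx1)
  have hsub : Integrable (fun y => {y : E4 | ‖y‖ ≤ T}.indicator P y *
      (Real.log ‖x‖ - Real.log (2 * T))
      - {y : E4 | ‖y‖ ≤ T}ᶜ.indicator P y * ((k + 1) * Real.log (3 + ‖x‖))) :=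
    (hi1.mul_const _).sub (hi2.mul_const _)
  rw [integral_sub hsub ((nearInv_integrable x).const_mul C),
    integral_sub (hi1.mul_const _) (hi2.mul_const _), integral_mul_const, integral_mul_const,
    integral_const_mul, nearInv_integral, ← hAT, ← hBT] at hi
  refine le_trans ?_ hi
  have hBe : BT ≤ e := by linarith
  have h1 : BT * ((k + 1) * Real.log (3 + ‖x‖)) ≤ e * ((k + 1) * (2 * Real.log ‖x‖)) := by
    have h30 : 0 ≤ Real.log (3 + ‖x‖) := Real.log_nonneg (by linarith)
    gcongr
  have h2 : (A - e) * Real.log ‖x‖ ≤ AT * Real.log ‖x‖ := by gcongr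
  have h3 : AT * Real.log (2 * T) ≤ A * Real.log (2 * T) := by gcongr; linarith
  have h4 : e * (4 * (k + 2)) = A - γ := by rw [he]; field_simp
  have h5 : (e + e * (2 * (k + 1))) * Real.log ‖x‖ ≤ (A - γ) / 2 * Real.log ‖x‖ := by
    gcongr
    nlinarith
  have h6 := le_abs_self M
  rw [mul_sub]
  nlinarith

end Density

/-! ### Integration by parts and the bilaplacian of radial functions -/

/-- The `i`-th coordinate vector of `ℝ⁴`. -/
abbrev bv (i : Fin 4) : E4 := EuclideanSpace.single i 1

lemma ibp_dir {f g : E4 → ℝ} (hf : ContDiff ℝ 1 f) (hg : ContDiff ℝ 1 g)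
    (hgs : HasCompactSupport g) (w : E4) :
    ∫ x, f x * fderiv ℝ g x w = -∫ x, fderiv ℝ f x w * g x := by
  have hf' : Continuous (fun x => fderiv ℝ f x w) :=
    (hf.continuous_fderiv one_ne_zero).clm_apply continuous_const
  have hg' : Continuous (fun x => fderiv ℝ g x w) :=
    (hg.continuous_fderiv one_ne_zero).clm_apply continuous_const
  have hgs' : HasCompactSupport (fun x => fderiv ℝ g x w) := hgs.fderiv_apply ℝ w
  refine integral_mul_fderiv_eq_neg_fderiv_mul_of_integrable ?_ ?_ ?_
    (fun x _ => hf.differentiable one_ne_zero x) (fun x _ => hg.differentiable one_ne_zero x)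
  · exact (hf'.mul hg.continuous).integrable_of_hasCompactSupport hgs.mul_left
  · exact (hf.continuous.mul hg').integrable_of_hasCompactSupport hgs'.mul_left
  · exact (hf.continuous.mul hg.continuous).integrable_of_hasCompactSupport hgs.mul_left

lemma contDiff_fderiv_bv {n m : WithTop ℕ∞} {f : E4 → ℝ} (hf : ContDiff ℝ n f) (h : m + 1 ≤ n)
    (w : E4) : ContDiff ℝ m (fun x => fderiv ℝ f x w) :=
  (hf.fderiv_right h).clm_apply contDiff_const

lemma contDiff_lap4 {n m : WithTop ℕ∞} {f : E4 → ℝ} (hf : ContDiff ℝ n f) (h : m + 1 + 1 ≤ n) :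
    ContDiff ℝ m (lap4 f) := by
  unfold lap4
  exact ContDiff.sum fun i _ => contDiff_fderiv_bv (contDiff_fderiv_bv hf h _) le_rfl _

lemma hasCompactSupport_lap4 {f : E4 → ℝ} (hf : HasCompactSupport f) :
    HasCompactSupport (lap4 f) := by
  have h : ∀ i : Fin 4, HasCompactSupport
      (fun x => fderiv ℝ (fun z => fderiv ℝ f z (bv i)) x (bv i)) :=
    fun i => (hf.fderiv_apply ℝ _).fderiv_apply ℝ _
  unfold lap4
  simp only [Fin.sum_univ_four]
  exact (((h 0).add (h 1)).add (h 2)).add (h 3)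

lemma ibp_lap4 {f g : E4 → ℝ} (hf : ContDiff ℝ 2 f) (hg : ContDiff ℝ 2 g)
    (hgs : HasCompactSupport g) : ∫ x, f x * lap4 g x = ∫ x, lap4 f x * g x := by
  have h2 : (1 : WithTop ℕ∞) + 1 ≤ 2 := by norm_num
  have hf1 : ContDiff ℝ 1 f := hf.of_le (by norm_num)
  have hg1 : ContDiff ℝ 1 g := hg.of_le (by norm_num)
  unfold lap4
  simp only [Finset.mul_sum, Finset.sum_mul]
  rw [integral_finsetSum, integral_finsetSum]
  · refine Finset.sum_congr rfl fun i _ => ?_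
    rw [ibp_dir hf1 (contDiff_fderiv_bv hg h2 _) (hgs.fderiv_apply ℝ _),
      ibp_dir (contDiff_fderiv_bv hf h2 _) hg1 hgs, neg_neg]
  · intro i _
    have h := (contDiff_fderiv_bv (contDiff_fderiv_bv hf h2 (bv i)) (m := 0) (by norm_num)
      (bv i)).continuous
    exact (h.mul hg.continuous).integrable_of_hasCompactSupport hgs.mul_left
  · intro i _
    have h := (contDiff_fderiv_bv (contDiff_fderiv_bv hg h2 (bv i)) (m := 0) (by norm_num)
      (bv i)).continuous
    exact (hf.continuous.mul h).integrable_of_hasCompactSupport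
      ((hgs.fderiv_apply ℝ _).fderiv_apply ℝ _).mul_left

lemma ibp_bilap {f g : E4 → ℝ} (hf : ContDiff ℝ 4 f) (hg : ContDiff ℝ 4 g)
    (hgs : HasCompactSupport g) :
    ∫ x, f x * lap4 (lap4 g) x = ∫ x, lap4 (lap4 f) x * g x := by
  have h4 : (2 : WithTop ℕ∞) + 1 + 1 ≤ 4 := by norm_num
  rw [ibp_lap4 (hf.of_le (by norm_num)) (contDiff_lap4 hg h4) (hasCompactSupport_lap4 hgs),
    ibp_lap4 (contDiff_lap4 hf h4) (hg.of_le (by norm_num)) hgs]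

lemma hasFDerivAt_radial {f : ℝ → ℝ} {f' e : ℝ} {z : E4}
    (hf : HasDerivAt f f' (e + ‖z‖ ^ 2)) :
    HasFDerivAt (fun z : E4 => f (e + ‖z‖ ^ 2)) ((2 * f') • innerSL ℝ z) z := by
  have h1 := (hasStrictFDerivAt_norm_sq z).hasFDerivAt.const_add e
  have h2 := hf.comp_hasFDerivAt z h1
  refine h2.congr_fderiv ?_
  ext w
  simp
  ring

/-- Laplacian of a radial function on `ℝ⁴`, in terms of the profile `f` of `e + ‖z‖²`. -/
lemma lap4_radial {f f1 f2 : ℝ → ℝ} {e : ℝ}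
    (h1 : ∀ z : E4, HasDerivAt f (f1 (e + ‖z‖ ^ 2)) (e + ‖z‖ ^ 2))
    (h2 : ∀ z : E4, HasDerivAt f1 (f2 (e + ‖z‖ ^ 2)) (e + ‖z‖ ^ 2)) (z : E4) :
    lap4 (fun z => f (e + ‖z‖ ^ 2)) z
      = 4 * ‖z‖ ^ 2 * f2 (e + ‖z‖ ^ 2) + 8 * f1 (e + ‖z‖ ^ 2) := by
  unfold lap4
  have hd : ∀ i : Fin 4, (fun z : E4 => fderiv ℝ (fun z : E4 => f (e + ‖z‖ ^ 2)) z (bv i))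
      = fun z => 2 * f1 (e + ‖z‖ ^ 2) * z i := by
    intro i
    ext z
    rw [(hasFDerivAt_radial (h1 z)).fderiv]
    simp [EuclideanSpace.inner_single_right]
  have hdd : ∀ i : Fin 4, fderiv ℝ (fun z : E4 => 2 * f1 (e + ‖z‖ ^ 2) * z i) z (bv i)
      = 4 * f2 (e + ‖z‖ ^ 2) * z i ^ 2 + 2 * f1 (e + ‖z‖ ^ 2) := by
    intro i
    have ha := (hasFDerivAt_radial (h2 z)).const_mul 2
    have hb : HasFDerivAt (fun z : E4 => z i) (EuclideanSpace.proj i : E4 →L[ℝ] ℝ) z :=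
      (EuclideanSpace.proj i : E4 →L[ℝ] ℝ).hasFDerivAt
    have hab : HasFDerivAt (fun z : E4 => 2 * f1 (e + ‖z‖ ^ 2) * z i) _ z := ha.mul hb
    rw [hab.fderiv]
    simp [EuclideanSpace.inner_single_right]
    ring
  simp only [hd, hdd]
  rw [EuclideanSpace.norm_sq_eq z]
  simp only [Fin.sum_univ_four, Real.norm_eq_abs, sq_abs]
  ring

/-- Bilaplacian of a radial function on `ℝ⁴`. -/
lemma bilap_radial {f f1 f2 f3 f4 : ℝ → ℝ} {e : ℝ}
    (h1 : ∀ z : E4, HasDerivAt f (f1 (e + ‖z‖ ^ 2)) (e + ‖z‖ ^ 2))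
    (h2 : ∀ z : E4, HasDerivAt f1 (f2 (e + ‖z‖ ^ 2)) (e + ‖z‖ ^ 2))
    (h3 : ∀ z : E4, HasDerivAt f2 (f3 (e + ‖z‖ ^ 2)) (e + ‖z‖ ^ 2))
    (h4 : ∀ z : E4, HasDerivAt f3 (f4 (e + ‖z‖ ^ 2)) (e + ‖z‖ ^ 2)) (z : E4) :
    lap4 (lap4 (fun z => f (e + ‖z‖ ^ 2))) z
      = 16 * (‖z‖ ^ 2) ^ 2 * f4 (e + ‖z‖ ^ 2) + 96 * ‖z‖ ^ 2 * f3 (e + ‖z‖ ^ 2)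
        + 96 * f2 (e + ‖z‖ ^ 2) := by
  have hl : lap4 (fun z : E4 => f (e + ‖z‖ ^ 2))
      = fun z => (fun s => 4 * (s - e) * f2 s + 8 * f1 s) (e + ‖z‖ ^ 2) := by
    ext z
    rw [lap4_radial h1 h2]
    ring
  rw [hl, lap4_radial (f := fun s => 4 * (s - e) * f2 s + 8 * f1 s) (e := e)
      (f1 := fun s => 12 * f2 s + 4 * (s - e) * f3 s)
    (f2 := fun s => 16 * f3 s + 4 * (s - e) * f4 s)]
  · ring
  · intro z
    have h := ((((hasDerivAt_id (e + ‖z‖ ^ 2)).sub_const e).const_mul 4).mul (h3 z)).add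
      ((h2 z).const_mul 8)
    refine h.congr_deriv ?_
    simp
    ring
  · intro z
    have h := ((h3 z).const_mul 12).add
      ((((hasDerivAt_id (e + ‖z‖ ^ 2)).sub_const e).const_mul 4).mul (h4 z))
    refine h.congr_deriv ?_
    simp
    ring

lemma contDiff_radial {n : WithTop ℕ∞} {f : ℝ → ℝ} {e : ℝ}
    (h : ∀ s, e ≤ s → ContDiffAt ℝ n f s) : ContDiff ℝ n (fun z : E4 => f (e + ‖z‖ ^ 2)) := by
  rw [contDiff_iff_contDiffAt]
  intro z
  have h1 : ContDiffAt ℝ n (fun z : E4 => e + ‖z‖ ^ 2) z :=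
    (contDiff_const.add (contDiff_norm_sq ℝ)).contDiffAt
  exact (h _ (by nlinarith [norm_nonneg z])).comp z h1

/-! ### A local representation formula for the biharmonic operator -/

/-- A smooth function equal to `0` on `(-∞, 1]` and to `-log` on `[2, ∞)`. -/
def mlog (t : ℝ) : ℝ := -(Real.smoothTransition (t - 1) * Real.log t)

/-- The logarithm cut off so as to vanish on `[2, ∞)`. -/
def hlog (t : ℝ) : ℝ := Real.log t + mlog t

lemma mlog_of_le {t : ℝ} (h : t ≤ 1) : mlog t = 0 := by
  rw [mlog, Real.smoothTransition.zero_of_nonpos (by linarith), zero_mul, neg_zero]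

lemma mlog_of_ge {t : ℝ} (h : 2 ≤ t) : mlog t = -Real.log t := by
  rw [mlog, Real.smoothTransition.one_of_one_le (by linarith), one_mul]

lemma hlog_of_ge {t : ℝ} (h : 2 ≤ t) : hlog t = 0 := by
  rw [hlog, mlog_of_ge h, add_neg_cancel]

lemma contDiff_mlog {n : ℕ∞} : ContDiff ℝ n mlog := by
  rw [contDiff_iff_contDiffAt]
  intro t
  rcases lt_or_ge t 1 with h | h
  · refine (contDiffAt_const (c := (0 : ℝ))).congr_of_eventuallyEq ?_
    filter_upwards [gt_mem_nhds h] with s hs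
    exact mlog_of_le hs.le
  · have h1 : ContDiffAt ℝ n (fun t : ℝ => Real.smoothTransition (t - 1)) t :=
      (Real.smoothTransition.contDiff.comp (contDiff_id.sub contDiff_const)).contDiffAt
    exact (h1.mul (Real.contDiffAt_log.2 (by linarith))).neg

lemma abs_hlog_le (t : ℝ) : |hlog t| ≤ |Real.log t| := by
  have h : hlog t = (1 - Real.smoothTransition (t - 1)) * Real.log t := by
    rw [hlog, mlog]; ring
  have h0 := Real.smoothTransition.nonneg (t - 1)
  have h1 := Real.smoothTransition.le_one (t - 1)
  rw [h, abs_mul]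
  refine mul_le_of_le_one_left (abs_nonneg _) ?_
  rw [abs_le]
  constructor <;> linarith

lemma abs_mlog_le {t : ℝ} (h : 0 ≤ t) : |mlog t| ≤ Real.log (1 + t) := by
  rcases le_or_gt t 1 with h1 | h1
  · rw [mlog_of_le h1, abs_zero]
    exact Real.log_nonneg (by linarith)
  · have h2 := Real.smoothTransition.nonneg (t - 1)
    have h3 := Real.smoothTransition.le_one (t - 1)
    have h4 : 0 ≤ Real.log t := Real.log_nonneg h1.le
    rw [mlog, abs_neg, abs_mul, abs_of_nonneg h2, abs_of_nonneg h4]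
    exact (mul_le_of_le_one_left h4 h3).trans (Real.log_le_log (by linarith) (by linarith))

lemma hasDerivAt_mlog (t : ℝ) : HasDerivAt mlog (iteratedDeriv 1 mlog t) t := by
  rw [iteratedDeriv_one]
  exact ((contDiff_mlog (n := 1)).differentiable (by norm_num) t).hasDerivAt

lemma hasDerivAt_iteratedDeriv_mlog (n : ℕ) (t : ℝ) :
    HasDerivAt (iteratedDeriv n mlog) (iteratedDeriv (n + 1) mlog t) t := by
  rw [iteratedDeriv_succ]
  refine DifferentiableAt.hasDerivAt ?_
  exact (contDiff_mlog (n := (n + 1 : ℕ))).differentiable_iteratedDeriv n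
    (by exact_mod_cast Nat.lt_succ_self n) t

lemma continuous_iteratedDeriv_mlog (n : ℕ) : Continuous (iteratedDeriv n mlog) :=
  (contDiff_mlog (n := (n : ℕ))).continuous_iteratedDeriv n (by exact_mod_cast le_rfl)

/-- The contribution of `mlog` to the bilaplacian of `z ↦ hlog (e + ‖z‖²)`, as a function of
`t = ‖z‖²`; the contribution of `log` is the bubble in `bilap_phiReg`. -/
def Psi (e t : ℝ) : ℝ :=
  16 * t ^ 2 * iteratedDeriv 4 mlog (e + t) + 96 * t * iteratedDeriv 3 mlog (e + t)
    + 96 * iteratedDeriv 2 mlog (e + t)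

/-- The test function `Δ² (mlog ‖·‖²)`. -/
def psi (z : E4) : ℝ := Psi 0 (‖z‖ ^ 2)

lemma continuous_Psi : Continuous (Function.uncurry Psi) := by
  have h2 := continuous_iteratedDeriv_mlog 2
  have h3 := continuous_iteratedDeriv_mlog 3
  have h4 := continuous_iteratedDeriv_mlog 4
  unfold Psi Function.uncurry
  fun_prop

lemma psi_eq_bilap : psi = lap4 (lap4 (fun z : E4 => mlog (0 + ‖z‖ ^ 2))) := by
  ext z
  rw [bilap_radial (f1 := iteratedDeriv 1 mlog) (f2 := iteratedDeriv 2 mlog)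
    (f3 := iteratedDeriv 3 mlog) (f4 := iteratedDeriv 4 mlog)
    (fun z => hasDerivAt_mlog _)
    (fun z => hasDerivAt_iteratedDeriv_mlog 1 _) (fun z => hasDerivAt_iteratedDeriv_mlog 2 _)
    (fun z => hasDerivAt_iteratedDeriv_mlog 3 _)]
  rfl

lemma contDiff_psi : ContDiff ℝ 2 psi := by
  rw [psi_eq_bilap]
  have h : ContDiff ℝ 6 (fun z : E4 => mlog (0 + ‖z‖ ^ 2)) :=
    contDiff_radial fun s _ => (contDiff_mlog (n := 6)).contDiffAt
  exact contDiff_lap4 (contDiff_lap4 h (m := 4) (by norm_num)) (by norm_num)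

/-- The regularized fundamental solution of the biharmonic operator, cut off at unit scale. -/
def phiReg (e : ℝ) (z : E4) : ℝ := hlog (e + ‖z‖ ^ 2)

lemma contDiff_phiReg {e : ℝ} (he : 0 < e) : ContDiff ℝ 4 (phiReg e) :=
  contDiff_radial fun s hs => (Real.contDiffAt_log.2 (by linarith)).add
    (contDiff_mlog (n := 4)).contDiffAt

lemma phiReg_support {e : ℝ} (he : 0 < e) : HasCompactSupport (phiReg e) := by
  refine HasCompactSupport.intro (isCompact_closedBall (0 : E4) 2) fun z hz => ?_
  rw [mem_closedBall_zero_iff, not_le] at hz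
  exact hlog_of_ge (by nlinarith)

lemma bilap_phiReg {e : ℝ} (he : 0 < e) (z : E4) :
    lap4 (lap4 (phiReg e)) z = -(96 * (e ^ 2 / (e + ‖z‖ ^ 2) ^ 4)) + Psi e (‖z‖ ^ 2) := by
  have hs : ∀ z : E4, e + ‖z‖ ^ 2 ≠ 0 := fun z => by positivity
  unfold phiReg
  rw [bilap_radial (f := hlog) (f1 := fun s => s⁻¹ + iteratedDeriv 1 mlog s)
    (f2 := fun s => -(s ^ 2)⁻¹ + iteratedDeriv 2 mlog s)
    (f3 := fun s => 2 * (s ^ 3)⁻¹ + iteratedDeriv 3 mlog s)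
    (f4 := fun s => -(6 * (s ^ 4)⁻¹) + iteratedDeriv 4 mlog s)]
  · rw [Psi]
    have := hs z
    field_simp
    ring
  · intro z
    exact (Real.hasDerivAt_log (hs z)).add
      (hasDerivAt_mlog _)
  · intro z
    exact (hasDerivAt_inv (hs z)).add (hasDerivAt_iteratedDeriv_mlog 1 _)
  · intro z
    refine HasDerivAt.add ?_ (hasDerivAt_iteratedDeriv_mlog 2 _)
    have h := ((hasDerivAt_pow 2 (e + ‖z‖ ^ 2)).fun_inv (pow_ne_zero 2 (hs z))).neg
    refine h.congr_deriv ?_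
    have := hs z
    field_simp
    norm_num
    ring
  · intro z
    refine HasDerivAt.add ?_ (hasDerivAt_iteratedDeriv_mlog 3 _)
    have h := ((hasDerivAt_pow 3 (e + ‖z‖ ^ 2)).fun_inv (pow_ne_zero 3 (hs z))).const_mul 2
    refine h.congr_deriv ?_
    have := hs z
    field_simp
    norm_num
    ring

lemma bilap_phiReg_zero {e : ℝ} {z : E4} (hz : 2 < ‖z‖) (he : 0 < e) :
    lap4 (lap4 (phiReg e)) z = 0 := by
  have h0 : ∀ g : E4 → ℝ, (∀ z : E4, 2 < ‖z‖ → g z = 0) → ∀ z : E4, 2 < ‖z‖ → lap4 g z = 0 := by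
    intro g hg z hz
    have h1 : ∀ w z : E4, 2 < ‖z‖ → fderiv ℝ g z w = 0 := by
      intro w z hz
      have : g =ᶠ[𝓝 z] fun _ => 0 := by
        filter_upwards [continuous_norm.continuousAt.eventually (lt_mem_nhds hz)] with y hy
        exact hg y hy
      rw [this.fderiv_eq]
      simp
    unfold lap4
    refine Finset.sum_eq_zero fun i _ => ?_
    have : (fun y => fderiv ℝ g y (bv i)) =ᶠ[𝓝 z] fun _ => 0 := by
      filter_upwards [continuous_norm.continuousAt.eventually (lt_mem_nhds hz)] with y hy
      exact h1 _ y hy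
    rw [this.fderiv_eq]
    simp
  exact h0 _ (h0 _ fun y hy => hlog_of_ge (by nlinarith)) z hz

/-- Outside the ball of radius `2` the test function `psi` vanishes: there `mlog = -log`, and
`log ‖z‖²` is biharmonic. -/
lemma psi_zero {z : E4} (hz : 2 < ‖z‖) : psi z = 0 := by
  have h1 : Tendsto (fun e : ℝ => Psi e (‖z‖ ^ 2)) (𝓝[>] 0) (𝓝 (psi z)) := by
    have : Continuous (fun e : ℝ => Psi e (‖z‖ ^ 2)) :=
      continuous_Psi.comp (continuous_id.prodMk continuous_const)
    exact (this.tendsto 0).mono_left nhdsWithin_le_nhds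
  have h2 : Tendsto (fun e : ℝ => 96 * (e ^ 2 / (e + ‖z‖ ^ 2) ^ 4)) (𝓝[>] 0) (𝓝 0) := by
    have : ContinuousAt (fun e : ℝ => 96 * (e ^ 2 / (e + ‖z‖ ^ 2) ^ 4)) 0 := by
      have : ((0 : ℝ) + ‖z‖ ^ 2) ^ 4 ≠ 0 := by
        have : 0 < ‖z‖ := by linarith
        positivity
      fun_prop (disch := exact this)
    have h := this.tendsto.mono_left (nhdsWithin_le_nhds (s := Set.Ioi (0 : ℝ)))
    simpa using h
  refine tendsto_nhds_unique h1 (h2.congr' ?_)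
  filter_upwards [self_mem_nhdsWithin] with e he
  have h := bilap_phiReg he z
  rw [bilap_phiReg_zero hz he] at h
  linarith

lemma psi_support : HasCompactSupport psi := by
  refine HasCompactSupport.intro (isCompact_closedBall (0 : E4) 2) fun z hz => ?_
  rw [mem_closedBall_zero_iff, not_le] at hz
  exact psi_zero hz

lemma abs_phiReg_le {e : ℝ} (he : 0 ≤ e) (he1 : e ≤ 1) {z : E4} (hz : z ∈ Metric.closedBall 0 2)
    (hz0 : z ≠ 0) : |phiReg e z| ≤ 5 + 2 * nearInv 0 z := by
  rw [mem_closedBall_zero_iff] at hz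
  have hz1 : 0 < ‖z‖ := norm_pos_iff.2 hz0
  have h1 : Real.log (e + ‖z‖ ^ 2) ≤ 5 := by
    have := Real.log_le_sub_one_of_pos (x := e + ‖z‖ ^ 2) (by positivity)
    nlinarith
  have h2 : -(2 * nearInv 0 z) ≤ Real.log (e + ‖z‖ ^ 2) := by
    have h3 : Real.log (‖z‖ ^ 2) ≤ Real.log (e + ‖z‖ ^ 2) :=
      Real.log_le_log (by positivity) (by linarith)
    have h4 := neg_log_norm_le z 0
    rw [Real.log_pow] at h3
    rw [sub_zero] at h4
    push_cast at h3
    linarith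
  have h5 := nearInv_nonneg 0 z
  refine (abs_hlog_le _).trans (abs_le.2 ⟨by linarith, by linarith⟩)

/-! ### The representation formula at all points and scales -/

lemma bubble_scaled {c : ℝ} (hc : 0 < c) (z : E4) :
    ((c ^ 2)⁻¹) ^ 2 / ((c ^ 2)⁻¹ + ‖z‖ ^ 2) ^ 4 = c ^ 4 * ((1 + ‖c • z‖ ^ 2) ^ 4)⁻¹ := by
  rw [norm_smul, Real.norm_of_nonneg hc.le]
  have : (c ^ 2)⁻¹ + ‖z‖ ^ 2 = (1 + (c * ‖z‖) ^ 2) / c ^ 2 := by field_simp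
  rw [this]
  have : 1 + (c * ‖z‖) ^ 2 ≠ 0 := by positivity
  field_simp

/-- The bubbles `e² / (e + ‖z‖²)⁴` form an approximate identity of mass `π² / 6`. -/
lemma bubble_limit {g : E4 → ℝ} (hg : Integrable g) (hc : ContinuousAt g 0) :
    Tendsto (fun c : ℝ => ∫ z, g z * -(96 * (((c ^ 2)⁻¹) ^ 2 / ((c ^ 2)⁻¹ + ‖z‖ ^ 2) ^ 4))) atTop
      (𝓝 (-(16 * Real.pi ^ 2) * g 0)) := by
  have hpi := Real.pi_pos
  have h := tendsto_integral_comp_smul_smul_of_integrable (μ := (volume : Measure E4))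
    (φ := fun z : E4 => 6 / Real.pi ^ 2 * ((1 + ‖z‖ ^ 2) ^ 4)⁻¹) (fun z => by positivity)
    (by rw [integral_const_mul, bubble_integral]; field_simp) ?_ hg hc
  · rw [finrank_E4] at h
    refine (h.const_mul (-(16 * Real.pi ^ 2))).congr' ?_
    filter_upwards [eventually_gt_atTop 0] with c hc
    rw [← integral_const_mul]
    congr 1
    ext z
    rw [bubble_scaled hc]
    simp only [smul_eq_mul]
    field_simp
    ring
  · rw [finrank_E4]
    have h1 : Tendsto (fun x : E4 => 6 / Real.pi ^ 2 * (‖x‖ ^ 4)⁻¹) (Bornology.cobounded E4)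
        (𝓝 0) := by
      have : Tendsto (fun x : E4 => ‖x‖ ^ 4) (Bornology.cobounded E4) atTop :=
        (tendsto_pow_atTop (by norm_num)).comp tendsto_norm_cobounded_atTop
      simpa using (tendsto_inv_atTop_zero.comp this).const_mul (6 / Real.pi ^ 2)
    refine squeeze_zero' (.of_forall fun z => by positivity) ?_ h1
    have h2 : ∀ᶠ x : E4 in Bornology.cobounded E4, 0 < ‖x‖ :=
      tendsto_norm_cobounded_atTop.eventually (eventually_gt_atTop 0)
    filter_upwards [h2] with z hz
    rw [mul_left_comm]
    refine mul_le_mul_of_nonneg_left ?_ (by positivity)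
    rw [← div_eq_mul_inv, ← one_div, div_le_div_iff₀ (by positivity) (by positivity), ← pow_add,
      one_mul]
    calc ‖z‖ ^ (4 + 4) = (‖z‖ ^ 2) ^ 4 := by ring
      _ ≤ _ := by gcongr; linarith

/-- The representation formula at the origin, at unit scale. -/
lemma representation {V : E4 → ℝ} (hV : ContDiff ℝ 4 V) :
    (∫ z, V z * psi z) - 16 * Real.pi ^ 2 * V 0 = ∫ z, lap4 (lap4 V) z * hlog (‖z‖ ^ 2) := by
  set B : Set E4 := Metric.closedBall 0 2 with hB
  have hBm : MeasurableSet B := Metric.isClosed_closedBall.measurableSet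
  have hBc : IsCompact B := isCompact_closedBall 0 2
  have hout : ∀ z : E4, z ∉ B → 2 < ‖z‖ := fun z hz => by
    rwa [hB, mem_closedBall_zero_iff, not_le] at hz
  have hLV : Continuous (lap4 (lap4 V)) := by
    refine ContDiff.continuous (n := 0) (𝕜 := ℝ) ?_
    exact contDiff_lap4 (contDiff_lap4 hV (m := 2) (by norm_num)) (by norm_num)
  have hinv : Tendsto (fun c : ℝ => (c ^ 2)⁻¹) atTop (𝓝 0) :=
    tendsto_inv_atTop_zero.comp (tendsto_pow_atTop (by norm_num))
  -- the approximate identity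
  have t1 : Tendsto (fun c : ℝ => ∫ z in B,
      V z * -(96 * (((c ^ 2)⁻¹) ^ 2 / ((c ^ 2)⁻¹ + ‖z‖ ^ 2) ^ 4))) atTop
      (𝓝 (-(16 * Real.pi ^ 2) * V 0)) := by
    have hg : Integrable (B.indicator V) :=
      (hV.continuous.continuousOn.integrableOn_compact hBc).integrable_indicator hBm
    have hev : B.indicator V =ᶠ[𝓝 0] V := by
      filter_upwards [Metric.closedBall_mem_nhds (0 : E4) two_pos] with z hz
      exact Set.indicator_of_mem hz V
    have h := bubble_limit hg (hV.continuous.continuousAt.congr hev.symm)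
    rw [hev.eq_of_nhds] at h
    refine h.congr fun c => ?_
    rw [← integral_indicator hBm]
    congr 1
    ext z
    by_cases hz : z ∈ B <;> simp [hz]
  -- the smooth remainder
  have t2 : Tendsto (fun c : ℝ => ∫ z in B, V z * Psi ((c ^ 2)⁻¹) (‖z‖ ^ 2)) atTop
      (𝓝 (∫ z in B, V z * psi z)) := by
    have hc : Continuous (fun e : ℝ => ∫ z in B, V z * Psi e (‖z‖ ^ 2)) := by
      refine continuous_parametric_integral_of_continuous ?_ hBc
      have h1 : Continuous fun q : ℝ × E4 => V q.2 := hV.continuous.comp continuous_snd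
      have h2 : Continuous fun q : ℝ × E4 => Psi q.1 (‖q.2‖ ^ 2) :=
        continuous_Psi.comp (continuous_fst.prodMk (continuous_snd.norm.pow 2))
      exact h1.mul h2
    exact (hc.tendsto 0).comp hinv
  -- the right-hand side
  have t3 : Tendsto (fun c : ℝ => ∫ z in B, lap4 (lap4 V) z * phiReg ((c ^ 2)⁻¹) z) atTop
      (𝓝 (∫ z in B, lap4 (lap4 V) z * hlog (‖z‖ ^ 2))) := by
    obtain ⟨K, hK⟩ := hBc.exists_bound_of_continuousOn hLV.continuousOn
    have hev : ∀ᶠ c : ℝ in atTop, 0 < (c ^ 2)⁻¹ ∧ (c ^ 2)⁻¹ ≤ 1 := by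
      filter_upwards [eventually_ge_atTop 1] with c hc
      have : 0 < c := by linarith
      exact ⟨by positivity, inv_le_one_of_one_le₀ (one_le_pow₀ hc)⟩
    have hne : ∀ᵐ z ∂(volume.restrict B), z ≠ (0 : E4) :=
      ae_restrict_of_ae (Measure.ae_ne volume 0)
    refine tendsto_integral_filter_of_dominated_convergence
      (fun z => K * (5 + 2 * nearInv 0 z)) ?_ ?_ ?_ ?_
    · filter_upwards [hev] with c hc
      exact (hLV.mul (contDiff_phiReg hc.1).continuous).aestronglyMeasurable
    · filter_upwards [hev] with c hc
      filter_upwards [hne, ae_restrict_mem hBm] with z hz hzB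
      rw [norm_mul]
      refine mul_le_mul (hK z hzB) (abs_phiReg_le hc.1.le hc.2 hzB hz) (norm_nonneg _) ?_
      exact (norm_nonneg _).trans (hK z hzB)
    · exact ((integrableOn_const hBc.measure_lt_top.ne).add
        ((nearInv_integrable 0).integrableOn.const_mul 2)).const_mul K
    · filter_upwards [hne] with z hz
      refine Tendsto.const_mul _ ?_
      have hz' : 0 + ‖z‖ ^ 2 ≠ 0 := by simpa using hz
      have hcont : ContinuousAt (fun e : ℝ => hlog (e + ‖z‖ ^ 2)) 0 := by
        have h1 : ContinuousAt hlog (0 + ‖z‖ ^ 2) :=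
          (Real.continuousAt_log hz').add (contDiff_mlog (n := 0)).continuous.continuousAt
        exact ContinuousAt.comp (f := fun e : ℝ => e + ‖z‖ ^ 2) h1 (by fun_prop)
      have := hcont.tendsto.comp hinv
      simpa [phiReg, Function.comp_def] using this
  have heq : ∀ᶠ c : ℝ in atTop,
      (∫ z in B, V z * -(96 * (((c ^ 2)⁻¹) ^ 2 / ((c ^ 2)⁻¹ + ‖z‖ ^ 2) ^ 4)))
        + ∫ z in B, V z * Psi ((c ^ 2)⁻¹) (‖z‖ ^ 2)
      = ∫ z in B, lap4 (lap4 V) z * phiReg ((c ^ 2)⁻¹) z := by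
    filter_upwards [eventually_gt_atTop 0] with c hc
    have he : 0 < (c ^ 2)⁻¹ := by positivity
    have h := ibp_bilap hV (contDiff_phiReg he) (phiReg_support he)
    rw [← setIntegral_eq_integral_of_forall_compl_eq_zero (s := B) fun z hz => by
        rw [bilap_phiReg_zero (hout z hz) he, mul_zero],
      ← setIntegral_eq_integral_of_forall_compl_eq_zero (s := B)
        (f := fun z => lap4 (lap4 V) z * phiReg (c ^ 2)⁻¹ z) fun z hz => by
        have := hout z hz
        have h0 : phiReg (c ^ 2)⁻¹ z = 0 := hlog_of_ge (by nlinarith)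
        rw [h0, mul_zero]] at h
    rw [← h, ← integral_add]
    · congr 1
      ext z
      rw [bilap_phiReg he]
      ring
    · refine ContinuousOn.integrableOn_compact hBc ?_
      refine Continuous.continuousOn (hV.continuous.mul (Continuous.neg ?_))
      refine continuous_const.mul (continuous_const.div (by fun_prop) fun z => ?_)
      positivity
    · refine ContinuousOn.integrableOn_compact hBc ?_
      refine Continuous.continuousOn (hV.continuous.mul ?_)
      exact continuous_Psi.comp (continuous_const.prodMk (continuous_norm.pow 2))
  have hlim := tendsto_nhds_unique (t1.add t2) (t3.congr' (heq.mono fun _ h => h.symm))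
  rw [setIntegral_eq_integral_of_forall_compl_eq_zero (s := B) fun z hz => by
      rw [psi_zero (hout z hz), mul_zero],
    setIntegral_eq_integral_of_forall_compl_eq_zero (s := B) fun z hz => by
      have := hout z hz
      rw [hlog_of_ge (by nlinarith), mul_zero]] at hlim
  linarith

lemma fderiv_affine {f : E4 → ℝ} (hf : Differentiable ℝ f) (x : E4) (R : ℝ) (z w : E4) :
    fderiv ℝ (fun z => f (x + R • z)) z w = R * fderiv ℝ f (x + R • z) w := by
  have h1 : HasFDerivAt (fun z : E4 => x + R • z) (R • ContinuousLinearMap.id ℝ E4) z :=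
    ((hasFDerivAt_id z).const_smul R).const_add x
  have h2 := (hf (x + R • z)).hasFDerivAt.comp z h1
  have h3 : fderiv ℝ (fun z => f (x + R • z)) z = _ := h2.fderiv
  rw [h3]
  simp

lemma lap4_affine {f : E4 → ℝ} (hf : ContDiff ℝ 2 f) (x : E4) (R : ℝ) :
    lap4 (fun z => f (x + R • z)) = fun z => R ^ 2 * lap4 f (x + R • z) := by
  ext z
  unfold lap4
  rw [Finset.mul_sum]
  refine Finset.sum_congr rfl fun i _ => ?_
  have h1 : (fun z => fderiv ℝ (fun z => f (x + R • z)) z (bv i))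
      = fun z => R * (fun y => fderiv ℝ f y (bv i)) (x + R • z) := by
    ext z
    exact fderiv_affine (hf.differentiable (by norm_num)) x R z _
  have h2 : Differentiable ℝ (fun y => fderiv ℝ f y (bv i)) :=
    (contDiff_fderiv_bv hf (m := 1) (by norm_num) _).differentiable one_ne_zero
  have h3 : Differentiable ℝ (fun z : E4 => x + R • z) := by fun_prop
  have h4 : fderiv ℝ (fun z => R * (fun y => fderiv ℝ f y (bv i)) (x + R • z)) z = _ :=
    fderiv_const_mul ((h2.comp h3) z) R
  rw [h1, h4, smul_apply, smul_eq_mul]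
  have h5 := fderiv_affine h2 x R z (bv i)
  erw [h5]
  ring

lemma lap4_const_mul {f : E4 → ℝ} (hf : ContDiff ℝ 2 f) (c : ℝ) :
    lap4 (fun z => c * f z) = fun z => c * lap4 f z := by
  ext z
  unfold lap4
  rw [Finset.mul_sum]
  refine Finset.sum_congr rfl fun i _ => ?_
  have h1 : (fun z => fderiv ℝ (fun z => c * f z) z (bv i)) = fun z => c * fderiv ℝ f z (bv i) := by
    ext z
    rw [fderiv_const_mul (hf.differentiable (by norm_num) z)]
    rfl
  have h2 : Differentiable ℝ fun z => fderiv ℝ f z (bv i) :=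
    (contDiff_fderiv_bv hf (m := 1) (by norm_num) _).differentiable one_ne_zero
  rw [h1, fderiv_const_mul (h2 z)]
  rfl

/-- The representation formula at the point `x` and scale `R`. -/
lemma representation_scaled {v : E4 → ℝ} (hv : ContDiff ℝ 4 v) (x : E4) {R : ℝ} (hR : 0 < R) :
    (∫ z, v (x + R • z) * psi z) - 16 * Real.pi ^ 2 * v x
      = ∫ y, lap4 (lap4 v) y * hlog (‖y - x‖ ^ 2 / R ^ 2) := by
  have hV : ContDiff ℝ 4 (fun z : E4 => v (x + R • z)) :=
    hv.comp (contDiff_const.add (contDiff_id.const_smul R))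
  have h := representation hV
  have h2 : ContDiff ℝ 2 (lap4 v) := contDiff_lap4 hv (by norm_num)
  have h2' : ContDiff ℝ 2 (fun z : E4 => lap4 v (x + R • z)) :=
    h2.comp (contDiff_const.add (contDiff_id.const_smul R))
  have hl : lap4 (lap4 fun z => v (x + R • z))
      = fun z => R ^ 4 * lap4 (lap4 v) (x + R • z) := by
    rw [lap4_affine (hv.of_le (by norm_num))]
    rw [lap4_const_mul h2']
    ext z
    rw [lap4_affine h2]
    ring
  simp only [hl, smul_zero, add_zero] at h
  rw [h]
  have hcv := Measure.integral_comp_smul_of_nonneg (volume : Measure E4)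
    (fun z => lap4 (lap4 v) (x + z) * hlog (‖z‖ ^ 2 / R ^ 2)) R (hR := hR.le)
  rw [finrank_E4] at hcv
  have htr := integral_add_left_eq_self (μ := (volume : Measure E4))
    (fun y => lap4 (lap4 v) y * hlog (‖y - x‖ ^ 2 / R ^ 2)) x
  simp only [add_sub_cancel_left] at htr
  rw [← htr]
  have hs : ∀ z : E4, R ^ 4 * lap4 (lap4 v) (x + R • z) * hlog (‖z‖ ^ 2)
      = R ^ 4 * (lap4 (lap4 v) (x + R • z) * hlog (‖R • z‖ ^ 2 / R ^ 2)) := by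
    intro z
    rw [norm_smul, Real.norm_of_nonneg hR.le, mul_pow, mul_div_cancel_left₀ _ (by positivity)]
    ring
  simp only [hs]
  rw [integral_const_mul, hcv, smul_eq_mul, mul_inv_cancel_left₀ (by positivity)]

/-! ### The large-scale limit of the representation formula -/

lemma mlog_nonpos (s : ℝ) : mlog s ≤ 0 := by
  rcases le_or_gt s 1 with h | h
  · exact (mlog_of_le h).le
  · exact neg_nonpos.2 (mul_nonneg (Real.smoothTransition.nonneg _) (Real.log_nonneg h.le))

lemma mlog_add_log {s : ℝ} (hs : 0 ≤ s) :
    0 ≤ mlog s + Real.log (1 + s) ∧ mlog s + Real.log (1 + s) ≤ 2 := by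
  refine ⟨by linarith [(abs_le.1 (abs_mlog_le hs)).1], ?_⟩
  rcases le_or_gt s 2 with h | h
  · have h1 := Real.log_le_sub_one_of_pos (x := 1 + s) (by linarith)
    linarith [mlog_nonpos s]
  · rw [mlog_of_ge h.le]
    have h1 : Real.log (1 + s) ≤ Real.log (2 * s) := Real.log_le_log (by linarith) (by linarith)
    rw [Real.log_mul two_ne_zero (by linarith)] at h1
    have h2 := Real.log_le_sub_one_of_pos (x := 2) two_pos
    linarith

lemma mlog_sub_le {a b : ℝ} (ha : 0 ≤ a) (hb : 0 ≤ b) (h : b ≤ 2 * a + 2) :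
    mlog a - mlog b ≤ 4 := by
  have h1 := mlog_add_log ha
  have h2 := mlog_add_log hb
  have h3 : Real.log (1 + b) ≤ Real.log (3 * (1 + a)) :=
    Real.log_le_log (by linarith) (by linarith)
  rw [Real.log_mul (by norm_num) (by linarith)] at h3
  have h4 := Real.log_le_sub_one_of_pos (x := 3) (by norm_num)
  linarith [h1.2, h2.1]

lemma sq_scaled_le {a b X R : ℝ} (ha : 0 ≤ a) (hX : 0 ≤ X) (hR : 0 < R) (hXR : X ≤ R)
    (h : a ≤ b + X) : a ^ 2 / R ^ 2 ≤ 2 * (b ^ 2 / R ^ 2) + 2 := by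
  have hR2 : 0 < R ^ 2 := by positivity
  have : a ^ 2 ≤ 2 * b ^ 2 + 2 * R ^ 2 := by nlinarith [sq_nonneg (b - X)]
  calc a ^ 2 / R ^ 2 ≤ (2 * b ^ 2 + 2 * R ^ 2) / R ^ 2 := by gcongr
    _ = _ := by field_simp

/-- The cut-off logarithms centred at `x` and `0` differ by `2 * logker` up to a bounded error. -/
lemma hlog_sub {x y : E4} {R : ℝ} (hR : 0 < R) (hyx : y ≠ x) (hy : y ≠ 0) :
    hlog (‖y - x‖ ^ 2 / R ^ 2) - hlog (‖y‖ ^ 2 / R ^ 2)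
      = 2 * logker x y + (mlog (‖y - x‖ ^ 2 / R ^ 2) - mlog (‖y‖ ^ 2 / R ^ 2)) := by
  have h1 : ‖y - x‖ ≠ 0 := norm_ne_zero_iff.2 (sub_ne_zero.2 hyx)
  have h2 : ‖y‖ ≠ 0 := norm_ne_zero_iff.2 hy
  rw [hlog, hlog, Real.log_div (by positivity) (by positivity),
    Real.log_div (by positivity) (by positivity), logker]
  simp only [Real.log_pow]
  push_cast
  ring

lemma abs_mlog_sub_le (x y : E4) {R : ℝ} (hR : 0 < R) (hxR : ‖x‖ ≤ R) :
    |mlog (‖y - x‖ ^ 2 / R ^ 2) - mlog (‖y‖ ^ 2 / R ^ 2)| ≤ 4 := by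
  have h1 : ‖y - x‖ ≤ ‖y‖ + ‖x‖ := norm_sub_le y x
  have h2 : ‖y‖ ≤ ‖y - x‖ + ‖x‖ := by simpa using norm_add_le (y - x) x
  have hx := norm_nonneg x
  have a1 := mlog_sub_le (a := ‖y - x‖ ^ 2 / R ^ 2) (b := ‖y‖ ^ 2 / R ^ 2) (by positivity)
    (by positivity) (sq_scaled_le (norm_nonneg _) hx hR hxR h2)
  have a2 := mlog_sub_le (a := ‖y‖ ^ 2 / R ^ 2) (b := ‖y - x‖ ^ 2 / R ^ 2) (by positivity)
    (by positivity) (sq_scaled_le (norm_nonneg _) hx hR hxR h1)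
  rw [abs_le]
  constructor <;> linarith

lemma measurable_hlog : Measurable hlog :=
  Real.measurable_log.add (contDiff_mlog (n := 0)).continuous.measurable

lemma Density.hlog_integrable {P : E4 → ℝ} {C : ℝ} {k : ℕ} (D : Density P C k) (x : E4) {R : ℝ}
    (hR : 1 ≤ R) : Integrable (fun y => P y * hlog (‖y - x‖ ^ 2 / R ^ 2)) := by
  have hl := Real.log_nonneg hR
  refine ((D.integrable.mul_const (2 + 2 * Real.log R)).add
    ((D.mul_nearInv_integrable x).const_mul 2)).mono' (D.integrable.1.mul
    (measurable_hlog.comp (by fun_prop : Measurable fun y : E4 => ‖y - x‖ ^ 2 / R ^ 2)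
      ).aestronglyMeasurable) ?_
  filter_upwards [Measure.ae_ne volume x] with y hy
  have hy1 : 0 < ‖y - x‖ := norm_pos_iff.2 (sub_ne_zero.2 hy)
  have h0 := nearInv_nonneg x y
  rw [norm_mul, Real.norm_of_nonneg (D.nonneg y), Real.norm_eq_abs]
  simp only [Pi.add_apply]
  have hb : |hlog (‖y - x‖ ^ 2 / R ^ 2)| ≤ 2 + 2 * Real.log R + 2 * nearInv x y := by
    by_cases hs : 2 ≤ ‖y - x‖ ^ 2 / R ^ 2
    · rw [hlog_of_ge hs, abs_zero]
      positivity
    · push Not at hs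
      have h1 := Real.log_le_sub_one_of_pos (x := ‖y - x‖ ^ 2 / R ^ 2) (by positivity)
      have h2 : Real.log (‖y - x‖ ^ 2 / R ^ 2) = 2 * Real.log ‖y - x‖ - 2 * Real.log R := by
        rw [Real.log_div (by positivity) (by positivity), Real.log_pow, Real.log_pow]
        push_cast
        ring
      have h3 := neg_log_norm_le y x
      refine (abs_hlog_le _).trans (abs_le.2 ⟨by linarith, by linarith⟩)
  calc P y * |hlog (‖y - x‖ ^ 2 / R ^ 2)|
      ≤ P y * (2 + 2 * Real.log R + 2 * nearInv x y) :=
        mul_le_mul_of_nonneg_left hb (D.nonneg y)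
    _ = _ := by ring

lemma Density.hlog_limit {P : E4 → ℝ} {C : ℝ} {k : ℕ} (D : Density P C k) (x : E4) :
    Tendsto (fun R : ℝ => ∫ y, P y * (hlog (‖y - x‖ ^ 2 / R ^ 2) - hlog (‖y‖ ^ 2 / R ^ 2))) atTop
      (𝓝 (2 * ∫ y, P y * logker x y)) := by
  rw [← integral_const_mul]
  have hne : ∀ᵐ y : E4, y ≠ x ∧ y ≠ 0 := (Measure.ae_ne volume x).and (Measure.ae_ne volume 0)
  refine tendsto_integral_filter_of_dominated_convergence
    (fun y => 2 * ‖P y * logker x y‖ + P y * 4) ?_ ?_ ?_ ?_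
  · refine .of_forall fun R => D.integrable.1.mul (Measurable.aestronglyMeasurable ?_)
    exact (measurable_hlog.comp (by fun_prop : Measurable fun y : E4 => ‖y - x‖ ^ 2 / R ^ 2)).sub
      (measurable_hlog.comp (by fun_prop : Measurable fun y : E4 => ‖y‖ ^ 2 / R ^ 2))
  · filter_upwards [eventually_ge_atTop ‖x‖, eventually_gt_atTop 0] with R hxR hR
    filter_upwards [hne] with y hy
    rw [hlog_sub hR hy.1 hy.2, norm_mul, norm_mul, Real.norm_of_nonneg (D.nonneg y)]
    have h1 := abs_mlog_sub_le x y hR hxR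
    calc P y * ‖2 * logker x y + (mlog (‖y - x‖ ^ 2 / R ^ 2) - mlog (‖y‖ ^ 2 / R ^ 2))‖
        ≤ P y * (2 * ‖logker x y‖ + 4) := by
          refine mul_le_mul_of_nonneg_left ((norm_add_le _ _).trans ?_) (D.nonneg y)
          rw [norm_mul, Real.norm_of_nonneg two_pos.le]
          exact add_le_add le_rfl h1
      _ = _ := by ring
  · exact ((D.logker_integrable x).norm.const_mul 2).add (D.integrable.mul_const 4)
  · filter_upwards [hne] with y hy
    refine tendsto_const_nhds.congr' ?_
    filter_upwards [eventually_ge_atTop ‖y - x‖, eventually_ge_atTop ‖y‖,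
      eventually_gt_atTop 0] with R h1 h2 hR
    have hle : ∀ a : ℝ, 0 ≤ a → a ≤ R → mlog (a ^ 2 / R ^ 2) = 0 := fun a ha haR =>
      mlog_of_le (by rw [div_le_one (by positivity)]; gcongr)
    rw [hlog_sub hR hy.1 hy.2, hle _ (norm_nonneg _) h1, hle _ (norm_nonneg _) h2]
    ring

/-- The weighted average of `v` at scale `R` around `x`, with weight `psi` of total mass `16 π²`. -/
def avg (v : E4 → ℝ) (R : ℝ) (x : E4) : ℝ := ∫ z, v (x + R • z) * psi z

/-- Up to the averages, `v` is a constant minus a multiple of the logarithmic potential. -/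
lemma avg_limit {v : E4 → ℝ} (hv : ContDiff ℝ 4 v) {C : ℝ} {k : ℕ}
    (D : Density (lap4 (lap4 v)) C k) (x : E4) :
    Tendsto (fun R => avg v R x - avg v R 0) atTop
      (𝓝 (16 * Real.pi ^ 2 * (v x - v 0) + 2 * ∫ y, lap4 (lap4 v) y * logker x y)) := by
  refine ((D.hlog_limit x).const_add _).congr' ?_
  filter_upwards [eventually_ge_atTop 1] with R hR
  have hR0 : 0 < R := by linarith
  have h1 := representation_scaled hv x hR0
  have h2 := representation_scaled hv 0 hR0
  have hi := D.hlog_integrable 0 hR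
  simp only [sub_zero] at h2 hi
  simp only [mul_sub]
  rw [integral_sub (D.hlog_integrable x hR) hi, ← h1, ← h2, avg, avg]
  ring

/-! ### Identification of `v` with the logarithmic potential -/

lemma avg_translate (v : E4 → ℝ) {R : ℝ} (hR : R ≠ 0) (x : E4) :
    avg v R x = ∫ z, v (R • z) * psi (z - R⁻¹ • x) := by
  have h := integral_add_right_eq_self (μ := (volume : Measure E4))
    (fun z => v (R • z) * psi (z - R⁻¹ • x)) (R⁻¹ • x)
  rw [← h, avg]
  congr 1
  ext z
  rw [add_sub_cancel_right, smul_add, smul_inv_smul₀ hR, add_comm]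

lemma psi_second_diff : ∃ L : ℝ, 0 ≤ L ∧ ∀ z k : E4,
    |psi (z + k) + psi (z - k) - 2 * psi z| ≤ L * ‖k‖ ^ 2 := by
  obtain ⟨L, hL⟩ := ContDiff.lipschitzWith_of_hasCompactSupport (psi_support.fderiv (𝕜 := ℝ))
    (contDiff_psi.fderiv_right (m := 1) (by norm_num)) one_ne_zero
  refine ⟨2 * L, by positivity, fun z k => ?_⟩
  have hd : Differentiable ℝ psi := contDiff_psi.differentiable (by norm_num)
  have hline : ∀ (w : E4) (s : ℝ), HasDerivAt (fun s : ℝ => psi (z + s • w))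
      (fderiv ℝ psi (z + s • w) w) s := by
    intro w s
    have h1 : HasDerivAt (fun s : ℝ => z + s • w) w s := by
      simpa using ((hasDerivAt_id s).smul_const w).const_add z
    exact (hd _).hasFDerivAt.comp_hasDerivAt s h1
  have h := norm_image_sub_le_of_norm_deriv_le_segment'
    (f := fun s : ℝ => psi (z + s • k) + psi (z + s • (-k)))
    (f' := fun s => fderiv ℝ psi (z + s • k) k + fderiv ℝ psi (z + s • (-k)) (-k))
    (a := 0) (b := 1) (C := 2 * L * ‖k‖ ^ 2)
    (fun s _ => ((hline k s).add (hline (-k) s)).hasDerivWithinAt) ?_ 1 (by simp)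
  · simp only [Real.norm_eq_abs, one_smul, zero_smul, add_zero, sub_zero, mul_one] at h
    rwa [← sub_eq_add_neg, ← two_mul] at h
  · intro s hs
    have h1 := hL.norm_sub_le (z + s • k) (z + s • (-k))
    have h2 : fderiv ℝ psi (z + s • k) k + fderiv ℝ psi (z + s • (-k)) (-k)
        = (fderiv ℝ psi (z + s • k) - fderiv ℝ psi (z + s • (-k))) k := by
      rw [map_neg]
      simp [sub_eq_add_neg]
    rw [h2]
    have h3 : ‖(z + s • k) - (z + s • (-k))‖ ≤ 2 * ‖k‖ := by
      have : (z + s • k) - (z + s • (-k)) = (2 * s) • k := by module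
      rw [this, norm_smul, Real.norm_of_nonneg (by linarith [hs.1])]
      have := hs.2
      gcongr
      linarith
    calc ‖(fderiv ℝ psi (z + s • k) - fderiv ℝ psi (z + s • (-k))) k‖
        ≤ ‖fderiv ℝ psi (z + s • k) - fderiv ℝ psi (z + s • (-k))‖ * ‖k‖ :=
          ContinuousLinearMap.le_opNorm _ _
      _ ≤ (L * (2 * ‖k‖)) * ‖k‖ := by
          gcongr
          exact h1.trans (by gcongr)
      _ = 2 * L * ‖k‖ ^ 2 := by ring

lemma subquadratic {v : E4 → ℝ} (hv : Continuous v)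
    (hdec : Tendsto (fun x : E4 => v x / ‖x‖ ^ 2) (cocompact E4) (𝓝 0)) {e : ℝ} (he : 0 < e) :
    ∃ R₀ : ℝ, 0 < R₀ ∧ ∀ R, R₀ ≤ R → ∀ z : E4, ‖z‖ ≤ 3 → |v (R • z)| ≤ e * R ^ 2 := by
  have h1 : ∀ᶠ x in cocompact E4, |v x / ‖x‖ ^ 2| < e / 9 := by
    have := hdec.abs
    rw [abs_zero] at this
    exact this.eventually (gt_mem_nhds (by positivity))
  obtain ⟨r, hr, hrv⟩ := eventually_cocompact_iff.1 h1
  obtain ⟨K, hK⟩ := (isCompact_closedBall (0 : E4) r).exists_bound_of_continuousOn hv.continuousOn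
  refine ⟨1 + |K| / e, by positivity, fun R hR z hz => ?_⟩
  have hK0 : 0 ≤ |K| / e := by positivity
  have hR1 : 1 ≤ R := by linarith
  rcases le_or_gt ‖R • z‖ r with h | h
  · have h2 := hK (R • z) (by rwa [mem_closedBall_zero_iff])
    have h3 : |K| ≤ e * R := by
      have : |K| / e ≤ R := by linarith
      rwa [div_le_iff₀ he, mul_comm] at this
    calc |v (R • z)| ≤ |K| := h2.trans (le_abs_self K)
      _ ≤ e * R := h3
      _ ≤ e * R ^ 2 := by gcongr; nlinarith
  · have h2 := hrv _ h.le
    have h3 : 0 < ‖R • z‖ := hr.trans h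
    rw [abs_div, abs_of_nonneg (sq_nonneg ‖R • z‖), div_lt_iff₀ (by positivity)] at h2
    refine h2.le.trans ?_
    rw [norm_smul, Real.norm_of_nonneg (by linarith)]
    calc e / 9 * (R * ‖z‖) ^ 2 ≤ e / 9 * (R * 3) ^ 2 := by gcongr
      _ = _ := by ring

/-- The second differences of the averages vanish in the limit of large scales, because `v` is
subquadratic and `psi` has compact support. -/
lemma avg_second_diff {v : E4 → ℝ} (hv : Continuous v)
    (hdec : Tendsto (fun x : E4 => v x / ‖x‖ ^ 2) (cocompact E4) (𝓝 0)) (x k : E4) :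
    Tendsto (fun R => avg v R (x + k) + avg v R (x - k) - 2 * avg v R x) atTop (𝓝 0) := by
  obtain ⟨L, hL0, hL⟩ := psi_second_diff
  set B : Set E4 := Metric.closedBall 0 3 with hB
  have hvol : volume.real B ≥ 0 := measureReal_nonneg
  rw [Metric.tendsto_atTop]
  intro d hd
  set e := d / (2 * (L * ‖k‖ ^ 2 * volume.real B + 1)) with he
  have he0 : 0 < e := by positivity
  obtain ⟨R₀, hR₀, hR⟩ := subquadratic hv hdec he0
  refine ⟨R₀ + ‖x‖ + ‖k‖, fun R hRR => ?_⟩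
  have hx0 := norm_nonneg x
  have hk0 := norm_nonneg k
  have hR0 : 0 < R := by linarith
  set q : E4 := R⁻¹ • x with hq
  set l : E4 := R⁻¹ • k with hl
  have hl2 : ‖l‖ ^ 2 = ‖k‖ ^ 2 / R ^ 2 := by
    rw [hl, norm_smul, Real.norm_of_nonneg (by positivity)]
    field_simp
  have hql : ‖q‖ + ‖l‖ ≤ 1 := by
    rw [hq, hl, norm_smul, norm_smul, Real.norm_of_nonneg (by positivity), ← mul_add,
      inv_mul_le_iff₀ hR0]
    linarith
  have hint : ∀ w : E4, Integrable (fun z => v (R • z) * psi (z - w)) := by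
    intro w
    have h1 : Continuous (fun z : E4 => v (R • z)) := hv.comp (continuous_const_smul R)
    have h2 : HasCompactSupport (fun z => psi (z - w)) := by
      have := psi_support.comp_homeomorph (Homeomorph.addRight (-w))
      simpa [sub_eq_add_neg, Function.comp_def] using this
    have h3 : Continuous (fun z => psi (z - w)) :=
      contDiff_psi.continuous.comp (continuous_id.sub continuous_const)
    exact (h1.mul h3).integrable_of_hasCompactSupport h2.mul_left
  have hmain : avg v R (x + k) + avg v R (x - k) - 2 * avg v R x
      = ∫ z in B, v (R • z) * (psi (z - q + l) + psi (z - q - l) - 2 * psi (z - q)) := by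
    have h1 : ∀ w, avg v R w = ∫ z, v (R • z) * psi (z - R⁻¹ • w) :=
      avg_translate v hR0.ne'
    have hs := (hint (q + l)).add (hint (q - l))
    have hs' : Integrable (fun z =>
        v (R • z) * psi (z - (q + l)) + v (R • z) * psi (z - (q - l))) :=
      hs
    rw [h1, h1, h1, smul_add, smul_sub, ← hq, ← hl, ← integral_const_mul,
      ← integral_add (hint _) (hint _), ← integral_sub hs' ((hint _).const_mul 2),
      setIntegral_eq_integral_of_forall_compl_eq_zero]
    · congr 1
      ext z
      rw [show z - (q + l) = z - q - l by abel, show z - (q - l) = z - q + l by abel]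
      ring
    · intro z hz
      rw [hB, mem_closedBall_zero_iff, not_le] at hz
      have hl0 := norm_nonneg l
      have h2 : ‖z‖ - ‖q‖ ≤ ‖z - q‖ := norm_sub_norm_le z q
      have h3 : ‖z - q‖ - ‖l‖ ≤ ‖z - q - l‖ := norm_sub_norm_le _ _
      have h4 : ‖z - q‖ - ‖l‖ ≤ ‖z - q + l‖ := by
        have := norm_sub_norm_le (z - q) (-l)
        rwa [norm_neg, sub_neg_eq_add] at this
      rw [psi_zero (z := z - q) (by linarith), psi_zero (z := z - q - l) (by linarith),
        psi_zero (z := z - q + l) (by linarith)]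
      ring
  rw [dist_zero_right, hmain]
  have hbound := norm_setIntegral_le_of_norm_le_const (μ := (volume : Measure E4)) (s := B)
    (f := fun z => v (R • z) * (psi (z - q + l) + psi (z - q - l) - 2 * psi (z - q)))
    (C := e * (L * ‖k‖ ^ 2)) (isCompact_closedBall 0 3).measure_lt_top ?_
  · refine hbound.trans_lt ?_
    have h5 : e * (2 * (L * ‖k‖ ^ 2 * volume.real B + 1)) = d := by
      rw [he]; field_simp
    nlinarith
  · intro z hz
    rw [hB, mem_closedBall_zero_iff] at hz
    rw [norm_mul]
    calc ‖v (R • z)‖ * ‖psi (z - q + l) + psi (z - q - l) - 2 * psi (z - q)‖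
        ≤ (e * R ^ 2) * (L * ‖l‖ ^ 2) :=
          mul_le_mul (hR R (by linarith) z hz) (hL _ _) (norm_nonneg _) (by positivity)
      _ = e * (L * ‖k‖ ^ 2) := by rw [hl2]; field_simp

lemma not_exp_le_poly {a s b : ℝ} (ha : 0 < a) (hs : 0 ≤ s) (N : ℕ)
    (h : ∀ n : ℕ, Real.exp (a * n) ≤ b * (2 + n * s) ^ N) : False := by
  have h1 := (tendsto_exp_mul_div_rpow_atTop N a ha).comp tendsto_natCast_atTop_atTop
  obtain ⟨n, hn1, hn⟩ := ((h1.eventually_gt_atTop (|b| * (2 + s) ^ N)).and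
    (eventually_ge_atTop 1)).exists
  have hn' : (1 : ℝ) ≤ n := by exact_mod_cast hn
  rw [Function.comp_apply, Real.rpow_natCast, lt_div_iff₀ (by positivity)] at hn1
  have h2 : b * (2 + n * s) ^ N ≤ |b| * ((2 + s) * n) ^ N := by
    refine mul_le_mul (le_abs_self b) ?_ (by positivity) (abs_nonneg b)
    gcongr
    nlinarith
  rw [mul_pow, ← mul_assoc] at h2
  linarith [h n]

/-! ### The integral representation of `v` -/

/-- `16 π² (v - v 0)` plus twice the logarithmic potential of `Δ² v`; it turns out to vanish. -/
def defect (v : E4 → ℝ) (x : E4) : ℝ :=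
  16 * Real.pi ^ 2 * (v x - v 0) + 2 * ∫ y, lap4 (lap4 v) y * logker x y

lemma defect_zero (v : E4 → ℝ) : defect v 0 = 0 := by
  simp [defect, logker]

lemma defect_add {v : E4 → ℝ} (hv : ContDiff ℝ 4 v)
    (hdec : Tendsto (fun x : E4 => v x / ‖x‖ ^ 2) (cocompact E4) (𝓝 0)) {C : ℝ} {k : ℕ}
    (D : Density (lap4 (lap4 v)) C k) (a b : E4) : defect v (a + b) = defect v a + defect v b := by
  have hmid : ∀ x l : E4, defect v (x + l) + defect v (x - l) = 2 * defect v x := by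
    intro x l
    have h := (((avg_limit hv D (x + l)).add (avg_limit hv D (x - l))).sub
      ((avg_limit hv D x).const_mul 2)).congr (fun R => show _ =
        avg v R (x + l) + avg v R (x - l) - 2 * avg v R x by ring)
    have := tendsto_nhds_unique h (avg_second_diff hv.continuous hdec x l)
    unfold defect
    linarith
  have h1 := hmid ((1 / 2 : ℝ) • (a + b)) ((1 / 2 : ℝ) • (a - b))
  have h2 := hmid ((1 / 2 : ℝ) • (a + b)) ((1 / 2 : ℝ) • (a + b))
  rw [show (1 / 2 : ℝ) • (a + b) + (1 / 2 : ℝ) • (a - b) = a by module,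
    show (1 / 2 : ℝ) • (a + b) - (1 / 2 : ℝ) • (a - b) = b by module] at h1
  rw [show (1 / 2 : ℝ) • (a + b) + (1 / 2 : ℝ) • (a + b) = a + b by module, sub_self,
    defect_zero] at h2
  linarith

/-- If the additive function `defect v` were positive at `x`, then `exp (p v)` would be
exponentially large on unit balls around `n x`, which is incompatible with the polynomial growth
of `u` and the equation for `u`. -/
lemma defect_nonpos {p : ℝ} (hp : 0 < p) {u v : E4 → ℝ} (hsol : IsSolution4 p u v)
    (hu0 : ∀ x, 0 ≤ u x)
    (hdec : Tendsto (fun x : E4 => v x / ‖x‖ ^ 2) (cocompact E4) (𝓝 0)) {C : ℝ} {k : ℕ}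
    (D : Density (lap4 (lap4 v)) C k)
    (hg : ∃ (k : ℕ) (C : ℝ), 0 < C ∧ ∀ x, u x ≤ C * (1 + ‖x‖) ^ k) (x : E4) :
    defect v x ≤ 0 := by
  by_contra! hx
  have hv := hsol.v_C4
  have hpi := Real.pi_pos
  have hpi2 : 0 < 16 * Real.pi ^ 2 := by positivity
  have hadd := defect_add hv hdec D
  obtain ⟨l, Cu, hCu, hul⟩ := hg
  set A := ∫ y, lap4 (lap4 v) y with hA
  have hA0 : 0 ≤ A := integral_nonneg D.nonneg
  have hC := D.C_pos
  -- a lower bound on the unit ball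
  obtain ⟨K, hK⟩ : ∃ K : ℝ, ∀ z : E4, ‖z‖ < 1 → -K ≤ defect v z := by
    obtain ⟨M, hM⟩ :=
      (isCompact_closedBall (0 : E4) 1).exists_bound_of_continuousOn hv.continuous.continuousOn
    refine ⟨16 * Real.pi ^ 2 * (M + v 0)
      + 2 * (A * Real.log 2 + C * 4 ^ k * Real.pi ^ 2), fun z hz => ?_⟩
    have h1 := (abs_le.1 (hM z (by rw [mem_closedBall_zero_iff]; exact hz.le))).1
    have h2 := D.logpot_lower z
    have h3 : A * Real.log (1 + ‖z‖) ≤ A * Real.log 2 := by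
      have := norm_nonneg z
      gcongr
      linarith
    have h4 : C * (3 + ‖z‖) ^ k * Real.pi ^ 2 ≤ C * 4 ^ k * Real.pi ^ 2 := by
      gcongr
      linarith
    have h5 : 16 * Real.pi ^ 2 * (-M - v 0) ≤ 16 * Real.pi ^ 2 * (v z - v 0) := by gcongr
    unfold defect
    rw [← hA] at h2
    linarith
  -- additivity makes `defect v` grow linearly along the multiples of `x`
  have hnat : ∀ (n : ℕ) (z : E4), defect v ((n : ℝ) • x + z) = n * defect v x + defect v z := by
    intro n z
    induction n with
    | zero => simp
    | succ n ih =>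
      have : ((n + 1 : ℕ) : ℝ) • x + z = x + ((n : ℝ) • x + z) := by
        push_cast
        module
      rw [this, hadd, ih]
      push_cast
      ring
  obtain ⟨j, hj⟩ := exists_nat_ge (p * A / (8 * Real.pi ^ 2))
  rw [div_le_iff₀ (by positivity)] at hj
  set c := C * 3 ^ k * Real.pi ^ 2 with hc
  set d := p * (v 0 - (K + 2 * c) / (16 * Real.pi ^ 2)) with hd
  refine not_exp_le_poly (a := p * defect v x / (16 * Real.pi ^ 2)) (s := ‖x‖)
    (b := Real.exp (-d) * (C4 * (8 * Real.pi ^ 2 * (Cu + 1)))) (by positivity) (norm_nonneg x)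
    (j + l) fun n => ?_
  set a := p * defect v x / (16 * Real.pi ^ 2) with ha
  have hX : 0 < 2 + n * ‖x‖ := by positivity
  have hnx : 0 ≤ n * ‖x‖ := by positivity
  set L := Real.log (2 + n * ‖x‖) with hL
  have hL0 : 0 ≤ L := Real.log_nonneg (by linarith)
  have hlow : ∀ y : E4, ‖y - (n : ℝ) • x‖ < 1 →
      Real.exp (a * n - j * L + d) ≤ Real.exp (p * v y) := by
    intro y hy
    have h1 := hnat n (y - (n : ℝ) • x)
    rw [add_sub_cancel] at h1
    have h2 := hK _ hy
    have h3 := D.logpot_upper y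
    rw [← hA] at h3
    have h4 : ‖y‖ ≤ 1 + n * ‖x‖ := by
      have := norm_add_le (y - (n : ℝ) • x) ((n : ℝ) • x)
      rw [sub_add_cancel, norm_smul, Real.norm_of_nonneg (Nat.cast_nonneg n)] at this
      linarith
    have h5 : A * Real.log (1 + ‖y‖) ≤ A * L := by
      have := norm_nonneg y
      exact mul_le_mul_of_nonneg_left (Real.log_le_log (by linarith) (by linarith)) hA0
    have h6 : n * defect v x - K - 2 * (A * L + c) ≤ 16 * Real.pi ^ 2 * (v y - v 0) := by
      have h7 : defect v y = 16 * Real.pi ^ 2 * (v y - v 0)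
        + 2 * ∫ w, lap4 (lap4 v) w * logker y w := rfl
      linarith
    apply Real.exp_le_exp.2
    have h8 : p * A * L ≤ j * (8 * Real.pi ^ 2) * L := by gcongr
    have e1 : a * (16 * Real.pi ^ 2) = p * defect v x := by rw [ha]; field_simp
    have e2 : d * (16 * Real.pi ^ 2) = p * (16 * Real.pi ^ 2 * v 0 - (K + 2 * c)) := by
      rw [hd]; field_simp
    refine le_of_mul_le_mul_right ?_ hpi2
    calc (a * n - j * L + d) * (16 * Real.pi ^ 2)
        = (a * (16 * Real.pi ^ 2)) * n - 2 * (j * (8 * Real.pi ^ 2) * L)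
          + d * (16 * Real.pi ^ 2) := by ring
      _ ≤ p * defect v x * n - 2 * (p * A * L) + p * (16 * Real.pi ^ 2 * v 0 - (K + 2 * c)) := by
          rw [e1, e2]; linarith
      _ = p * (n * defect v x - K - 2 * (A * L + c)) + p * (16 * Real.pi ^ 2 * v 0) := by ring
      _ ≤ p * (16 * Real.pi ^ 2 * (v y - v 0)) + p * (16 * Real.pi ^ 2 * v 0) := by gcongr
      _ = p * v y * (16 * Real.pi ^ 2) := by ring
  have hrhs := rhs_bound hsol.u_C1.continuous hu0 hsol.u_int hsol.eq_u C4_nonneg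
    ((n : ℝ) • x) hlow
  have hu := hul ((n : ℝ) • x)
  rw [norm_smul, Real.norm_of_nonneg (Nat.cast_nonneg n)] at hu
  have hpow : Cu * (1 + n * ‖x‖) ^ l + 1 ≤ (Cu + 1) * (2 + n * ‖x‖) ^ l := by
    have h1 : (1 + n * ‖x‖) ^ l ≤ (2 + n * ‖x‖) ^ l := by gcongr; norm_num
    have h2 : 1 ≤ (2 + n * ‖x‖) ^ l := one_le_pow₀ (by linarith)
    nlinarith
  have hC4 := C4_nonneg
  have hexp : Real.exp (a * n) = Real.exp (a * n - j * L + d) * (Real.exp (-d) *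
      (2 + n * ‖x‖) ^ j) := by
    have h1 : (2 + n * ‖x‖) ^ j = Real.exp (j * L) := by
      rw [hL, Real.exp_nat_mul, Real.exp_log hX]
    rw [h1, ← Real.exp_add, ← Real.exp_add]
    congr 1
    ring
  rw [hexp]
  calc Real.exp (a * n - j * L + d) * (Real.exp (-d) * (2 + n * ‖x‖) ^ j)
      ≤ C4 * (8 * Real.pi ^ 2 * ((Cu + 1) * (2 + n * ‖x‖) ^ l))
        * (Real.exp (-d) * (2 + n * ‖x‖) ^ j) := by
        refine mul_le_mul_of_nonneg_right (hrhs.trans ?_) (by positivity)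
        gcongr
        linarith
    _ = _ := by rw [pow_add]; ring

/-- The integral representation of `v` by its logarithmic potential. -/
lemma v_eq {p : ℝ} (hp : 0 < p) {u v : E4 → ℝ} (hsol : IsSolution4 p u v)
    (hu0 : ∀ x, 0 ≤ u x)
    (hdec : Tendsto (fun x : E4 => v x / ‖x‖ ^ 2) (cocompact E4) (𝓝 0)) {C : ℝ} {k : ℕ}
    (D : Density (lap4 (lap4 v)) C k)
    (hg : ∃ (k : ℕ) (C : ℝ), 0 < C ∧ ∀ x, u x ≤ C * (1 + ‖x‖) ^ k) (x : E4) :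
    8 * Real.pi ^ 2 * (v x - v 0) = -∫ y, lap4 (lap4 v) y * logker x y := by
  have h1 := defect_nonpos hp hsol hu0 hdec D hg x
  have h2 := defect_nonpos hp hsol hu0 hdec D hg (-x)
  have h3 := defect_add hsol.v_C4 hdec D x (-x)
  rw [add_neg_cancel, defect_zero] at h3
  have h4 : defect v x = 0 := by linarith
  unfold defect at h4
  linarith

/-! ### Conclusion -/

theorem stmt17 (p : ℝ) (hp : 0 < p) (u v : E4 → ℝ)
    (hsol : IsSolution4 p u v)
    (hu_nonneg : ∀ x : E4, 0 ≤ u x)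
    (hmass : FiniteMass4 u)
    (hv_decay : Tendsto (fun x : E4 => v x / ‖x‖ ^ 2) (cocompact E4) (𝓝 0))
    (hu_growth : ∃ K C R : ℝ, 0 < K ∧ 0 < C ∧ 0 < R ∧
      ∀ x : E4, R ≤ ‖x‖ → u x ≤ C * ‖x‖ ^ K)
    (α : ℝ) (hα : α = 1 / (8 * Real.pi ^ 2) * (∫ y : E4, P4 u y))
    (hαp : 4 / p < α) :
    Tendsto (fun x : E4 => ∫ y : E4, ‖x‖ ^ 2 * u y ^ 2 / ‖x - y‖ ^ 2)
      (cocompact E4) (𝓝 (∫ y : E4, u y ^ 2)) := by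
  have hu := hsol.u_C1.continuous
  have hC4 : 0 < C4 := C4_pos (hsol.eq_u 0) (Real.exp_pos _)
  have hne := exists_ne_zero (hsol.eq_u 0) (Real.exp_pos _)
  have hw := weighted_sq_integrable hu hne hmass
  have hg := poly_growth hu hu_growth
  obtain ⟨k, C, hC, hPg⟩ := P4_growth hu hu_nonneg hg hw
  have hP : lap4 (lap4 v) = P4 u := funext hsol.eq_v
  have D : Density (lap4 (lap4 v)) C k := by
    rw [hP]
    exact ⟨hC, P4_nonneg u, P4_integrable hmass, hPg⟩
  have hpi := Real.pi_pos
  -- the total mass exceeds `32 π² / p`, so `v` decays faster than `-(7 / (2 p)) log ‖x‖`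
  have hA : 28 * Real.pi ^ 2 / p < ∫ y, lap4 (lap4 v) y := by
    rw [hP]
    rw [hα, div_lt_iff₀ hp] at hαp
    rw [div_lt_iff₀ hp]
    have h1 : 1 / (8 * Real.pi ^ 2) * (∫ y, P4 u y) * p * (8 * Real.pi ^ 2)
        = (∫ y, P4 u y) * p := by field_simp
    have h2 := mul_lt_mul_of_pos_right hαp (show 0 < 8 * Real.pi ^ 2 by positivity)
    rw [h1] at h2
    nlinarith [sq_nonneg Real.pi]
  obtain ⟨R₀, hR₀, hN⟩ := D.logpot_growth hA (8 * Real.pi ^ 2 * v 0)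
  have hR₀' : 0 < R₀ := by linarith
  have hf : ∀ x : E4, R₀ ≤ ‖x‖ → Real.exp (p * v x) ≤ (√‖x‖ ^ 7)⁻¹ := by
    intro x hx
    have hx0 : 0 < ‖x‖ := by linarith
    have h1 := hN x hx
    have h2 := v_eq hp hsol hu_nonneg hv_decay D hg x
    have h3 : p * v x ≤ -(7 / 2 * Real.log ‖x‖) := by
      have h4 : 8 * Real.pi ^ 2 * v x ≤ -(28 * Real.pi ^ 2 / p * Real.log ‖x‖) := by linarith
      have h5 := mul_le_mul_of_nonneg_left h4 hp.le
      have h6 : p * -(28 * Real.pi ^ 2 / p * Real.log ‖x‖)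
          = 8 * Real.pi ^ 2 * -(7 / 2 * Real.log ‖x‖) := by
        field_simp
        ring
      rw [h6] at h5
      refine le_of_mul_le_mul_left ?_ (show 0 < 8 * Real.pi ^ 2 by positivity)
      linarith
    have h7 : Real.exp (-(7 / 2 * Real.log ‖x‖)) = (√‖x‖ ^ 7)⁻¹ := by
      rw [Real.exp_neg, ← Real.exp_log (Real.sqrt_pos.2 hx0), ← Real.exp_nat_mul,
        Real.log_sqrt hx0.le]
      congr 2
      push_cast
      ring
    rw [← h7]
    exact Real.exp_le_exp.2 h3
  have hlim := tendsto_zero hu hu_nonneg hsol.u_int hsol.eq_u hC4 hw hR₀' hf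
  obtain ⟨A, hA0, hdec⟩ := barrier_compare hu hsol.u_int hsol.eq_u hC4 hlim hR₀' hf
  exact conclusion hu hA0 hu_nonneg hdec
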